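/- Fix τ > 0. There exists a unique family of maps i = (i_n)_{n≥1}, where i_n : P_τ(2n) → ℤ, satisfying the following five axioms: (1) (homotopy invariance) if γ₀, γ₁ ∈ P_τ(2n) and there is a continuous δ : [0,1] × [0,τ] → Sp(2n,ℝ) with δ(0,·) = γ₀, δ(1,·) = γ₁, δ(s,0) = I for all s, and the rank of δ(s,τ) − I constant in s, then i_n(γ₀) = i_n(γ₁); (2) (additivity) i_{n₀+n₁}(γ₀ ⋄ γ₁) = i_{n₀}(γ₀) + i_{n₁}(γ₁) for γ₀ ∈ P_τ(2n₀), γ₁ ∈ P_τ(2n₁); (3) for any γ ∈ P_τ(2) with γ(τ) = [[1,a],[0,1]] for a ∈ {0, 1, −1}, there exists θ₀ > 0 such that i₁([γ(τ)·φ_{τ,−θ}] * γ) = i₁(γ) for all θ ∈ (0, θ₀]; (4) for any γ ∈ P_τ(2) with γ(τ) = [[1,a],[0,1]] for a ∈ {1, −1}, there exists θ₀ > 0 such that i₁([γ(τ)·φ_{τ,θ}] * γ) = i₁(γ) + 1 for all θ ∈ (0, θ₀]; (5) (normalization) for γ₀ ∈ P_τ(2) defined by γ₀(t) = diag(1 +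 t/τ, (1 + t/τ)^{-1}), one has i₁(γ₀) = 0. -/

import Mathlib

open Set Matrix

noncomputable section

/-- `2n × 2n` real matrices. -/
abbrev Mat (n : ℕ) := Matrix (Fin (2*n)) (Fin (2*n)) ℝ

/-- The standard symplectic form `ω_n` on `ℝ^{2n}`, in coordinates
`(q₁, p₁, …, q_n, p_n)`. -/
def stdSympForm (n : ℕ) (x y : Fin (2*n) → ℝ) : ℝ :=
  ∑ k : Fin n,
    (x ⟨2*(k:ℕ)+1, by have := k.isLt; omega⟩ * y ⟨2*(k:ℕ), by have := k.isLt; omega⟩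
     - x ⟨2*(k:ℕ), by have := k.isLt; omega⟩ * y ⟨2*(k:ℕ)+1, by have := k.isLt; omega⟩)

/-- The symplectic group `Sp(2n, ℝ)`: matrices preserving the standard symplectic form
(acting on row vectors). -/
def Sp (n : ℕ) : Set (Mat n) :=
  {V | ∀ x y : Fin (2*n) → ℝ, stdSympForm n (x ᵥ* V) (y ᵥ* V) = stdSympForm n x y}

/-- `P_τ(2n)`: continuous paths `[0, τ] → Sp(2n, ℝ)` starting at the identity. -/
structure SympPath (τ : ℝ) (n : ℕ) where
  toFun : ℝ → Mat n
  continuousOn : ContinuousOn toFun (Icc 0 τ)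
  init : toFun 0 = 1
  mem_Sp : ∀ t ∈ Icc (0:ℝ) τ, toFun t ∈ Sp n

/-- The block-diagonal sum of a `2n₀ × 2n₀` matrix and a `2n₁ × 2n₁` matrix. -/
def blockDiagSum (n₀ n₁ : ℕ) (A : Mat n₀) (B : Mat n₁) : Mat (n₀ + n₁) :=
  Matrix.of fun j k =>
    if hj : (j : ℕ) < 2*n₀ then
      (if hk : (k : ℕ) < 2*n₀ then A ⟨j, hj⟩ ⟨k, hk⟩ else 0)
    else
      (if hk : (k : ℕ) < 2*n₀ then 0
       else B ⟨(j:ℕ) - 2*n₀, by have := j.isLt; omega⟩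
              ⟨(k:ℕ) - 2*n₀, by have := k.isLt; omega⟩)

/-- The unipotent upper-triangular matrix `[[1, a], [0, 1]]` in `Sp(2, ℝ)`. -/
def upperTri (a : ℝ) : Mat 1 :=
  Matrix.of ![![1, a], ![0, 1]]

/-- The rotation path `φ_{τ,θ}(t) = [[cos(tθ/τ), −sin(tθ/τ)], [sin(tθ/τ), cos(tθ/τ)]]`. -/
def rotPath (τ θ t : ℝ) : Mat 1 :=
  Matrix.of ![![Real.cos (t*θ/τ), -Real.sin (t*θ/τ)], ![Real.sin (t*θ/τ), Real.cos (t*θ/τ)]]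

/-- The diagonal path `γ₀(t) = diag(1 + t/τ, (1 + t/τ)⁻¹)`. -/
def diagPath (τ t : ℝ) : Mat 1 :=
  Matrix.of ![![1 + t/τ, 0], ![0, (1 + t/τ)⁻¹]]

/-- The five axioms characterizing the (Conley–Zehnder / Long) index
`i : ⋃_{n ≥ 1} P_τ(2n) → ℤ`:
(1) homotopy invariance (rel. endpoints with constant nullity);
(2) additivity under the block-diagonal sum `⋄`;
(3)–(4) behaviour under concatenation with small rotations `[γ(τ)·φ_{τ,∓θ}] * γ`;
(5) normalization on the diagonal path. -/
def CZAxioms (τ : ℝ) (i : ∀ n : ℕ, SympPath τ n → ℤ) : Prop :=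
  -- (1) homotopy invariance
  (∀ n : ℕ, 1 ≤ n → ∀ γ₀ γ₁ : SympPath τ n,
    (∃ δ : ℝ → ℝ → Mat n,
      ContinuousOn (fun p : ℝ × ℝ => δ p.1 p.2) (Icc 0 1 ×ˢ Icc 0 τ) ∧
      (∀ s ∈ Icc (0:ℝ) 1, ∀ t ∈ Icc (0:ℝ) τ, δ s t ∈ Sp n) ∧
      (∀ t ∈ Icc (0:ℝ) τ, δ 0 t = γ₀.toFun t ∧ δ 1 t = γ₁.toFun t) ∧
      (∀ s ∈ Icc (0:ℝ) 1, δ s 0 = 1) ∧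
      (∀ s ∈ Icc (0:ℝ) 1, ∀ s' ∈ Icc (0:ℝ) 1,
        (δ s τ - 1).rank = (δ s' τ - 1).rank)) →
    i n γ₀ = i n γ₁) ∧
  -- (2) additivity under `⋄`
  (∀ n₀ n₁ : ℕ, 1 ≤ n₀ → 1 ≤ n₁ →
    ∀ γ₀ : SympPath τ n₀, ∀ γ₁ : SympPath τ n₁, ∀ γ : SympPath τ (n₀ + n₁),
    (∀ t ∈ Icc (0:ℝ) τ, γ.toFun t = blockDiagSum n₀ n₁ (γ₀.toFun t) (γ₁.toFun t)) →
    i (n₀ + n₁) γ = i n₀ γ₀ + i n₁ γ₁) ∧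
  -- (3)
  (∀ a : ℝ, (a = 0 ∨ a = 1 ∨ a = -1) → ∀ γ : SympPath τ 1, γ.toFun τ = upperTri a →
    ∃ θ₀ > (0:ℝ), ∀ θ ∈ Ioc (0:ℝ) θ₀, ∀ β : SympPath τ 1,
      (∀ t ∈ Icc (0:ℝ) (τ/2), β.toFun t = γ.toFun (2*t)) →
      (∀ t ∈ Icc (τ/2) τ, β.toFun t = γ.toFun τ * rotPath τ (-θ) (2*t - τ)) →
      i 1 β = i 1 γ) ∧
  -- (4)
  (∀ a : ℝ, (a = 1 ∨ a = -1) → ∀ γ : SympPath τ 1, γ.toFun τ = upperTri a →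
    ∃ θ₀ > (0:ℝ), ∀ θ ∈ Ioc (0:ℝ) θ₀, ∀ β : SympPath τ 1,
      (∀ t ∈ Icc (0:ℝ) (τ/2), β.toFun t = γ.toFun (2*t)) →
      (∀ t ∈ Icc (τ/2) τ, β.toFun t = γ.toFun τ * rotPath τ θ (2*t - τ)) →
      i 1 β = i 1 γ + 1) ∧
  -- (5) normalization
  (∀ γ : SympPath τ 1, (∀ t ∈ Icc (0:ℝ) τ, γ.toFun t = diagPath τ t) → i 1 γ = 0)

set_option linter.all false
set_option autoImplicit true

section

/-- partner index -/
def prt {n : ℕ} (i : Fin (2*n)) : Fin (2*n) :=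
  if h : (i:ℕ) % 2 = 1 then ⟨(i:ℕ) - 1, by have := i.isLt; omega⟩
  else ⟨(i:ℕ) + 1, by have := i.isLt; omega⟩

def sgn' {n : ℕ} (i : Fin (2*n)) : ℝ := if (i:ℕ) % 2 = 1 then 1 else -1

lemma prt_val {n : ℕ} (i : Fin (2*n)) : ((prt i : Fin (2*n)) : ℕ) = if (i:ℕ) % 2 = 1 then (i:ℕ) - 1 else i + 1 := by
  unfold prt; split_ifs <;> rfl

lemma prt_prt {n : ℕ} (i : Fin (2*n)) : prt (prt i) = i := by
  ext; rw [prt_val, prt_val]; split_ifs <;> omega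

lemma sgn_prt {n : ℕ} (i : Fin (2*n)) : sgn' (prt i) = - sgn' i := by
  unfold prt sgn'; split_ifs <;> simp_all <;> omega

lemma sgn_mul {n : ℕ} (i : Fin (2*n)) : sgn' i * sgn' i = 1 := by
  unfold sgn'; split_ifs <;> simp

def Om (n : ℕ) : Mat n := Matrix.of fun i j => if j = prt i then sgn' i else 0

lemma Om_mul_apply {n : ℕ} (A : Mat n) (i j) : (Om n * A) i j = sgn' i * A (prt i) j := by
  simp [Om, Matrix.mul_apply]

lemma Om_sq (n : ℕ) : Om n * Om n = -1 := by
  ext i j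
  rw [Om_mul_apply]
  simp only [Om, Matrix.of_apply, prt_prt, sgn_prt, Matrix.neg_apply, Matrix.one_apply]
  by_cases h : j = i
  · subst h; simp [sgn_mul]
  · simp [h, Ne.symm h]

lemma Om_tr (n : ℕ) : (Om n)ᵀ = - Om n := by
  ext i j
  simp only [Om, Matrix.of_apply, Matrix.neg_apply, Matrix.transpose_apply]
  by_cases h : i = prt j
  · subst h; simp [prt_prt, sgn_prt]
  · have : ¬ j = prt i := fun hh => h (by rw [hh, prt_prt])
    simp [h, this]

lemma Om_mulVec {n : ℕ} (y : Fin (2*n) → ℝ) (i) : (Om n *ᵥ y) i = sgn' i * y (prt i) := by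
  simp [Om, Matrix.mulVec, dotProduct]

def pairEquiv (n : ℕ) : Fin n × Fin 2 ≃ Fin (2*n) := finProdFinEquiv.trans (finCongr (mul_comm n 2))

lemma stdSympForm_eq (n : ℕ) (x y : Fin (2*n) → ℝ) : stdSympForm n x y = x ⬝ᵥ (Om n *ᵥ y) := by
  unfold stdSympForm dotProduct
  rw [← (pairEquiv n).sum_comp, Fintype.sum_prod_type]
  refine Finset.sum_congr rfl fun k _ => ?_
  rw [Fin.sum_univ_two, Om_mulVec, Om_mulVec]
  have h0 : pairEquiv n (k, 0) = ⟨2*(k:ℕ), by have := k.isLt; omega⟩ := by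
    ext; simp [pairEquiv]
  have h1 : pairEquiv n (k, 1) = ⟨2*(k:ℕ)+1, by have := k.isLt; omega⟩ := by
    ext; simp [pairEquiv]; omega
  rw [h0, h1]
  have e0 : prt (⟨2*(k:ℕ), by have := k.isLt; omega⟩ : Fin (2*n)) = ⟨2*(k:ℕ)+1, by have := k.isLt; omega⟩ := by
    unfold prt; rw [dif_neg (by simp)]
  have e1 : prt (⟨2*(k:ℕ)+1, by have := k.isLt; omega⟩ : Fin (2*n)) = ⟨2*(k:ℕ), by have := k.isLt; omega⟩ := by
    unfold prt; rw [dif_pos (by simp)]; simp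
  have s0 : sgn' (⟨2*(k:ℕ), by have := k.isLt; omega⟩ : Fin (2*n)) = -1 := by
    unfold sgn'; rw [if_neg (by simp)]
  have s1 : sgn' (⟨2*(k:ℕ)+1, by have := k.isLt; omega⟩ : Fin (2*n)) = 1 := by
    unfold sgn'; rw [if_pos (by simp)]
  rw [e0, e1, s0, s1]; ring

lemma mem_Sp_iff {n : ℕ} (V : Mat n) : V ∈ Sp n ↔ V * Om n * Vᵀ = Om n := by
  have key : ∀ x y : Fin (2*n) → ℝ, (x ᵥ* V) ⬝ᵥ (Om n *ᵥ (y ᵥ* V)) = x ⬝ᵥ ((V * Om n * Vᵀ) *ᵥ y) := by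
    intro x y
    rw [← Matrix.mulVec_mulVec, ← Matrix.mulVec_mulVec, ← Matrix.mulVec_transpose V y, ← Matrix.dotProduct_mulVec]
  constructor
  · intro h
    refine Matrix.ext_of_mulVec_single fun j => ?_
    ext i
    have := h (Pi.single i 1) (Pi.single j 1)
    rw [stdSympForm_eq, stdSympForm_eq, key] at this
    simpa using this
  · intro h x y
    rw [stdSympForm_eq, stdSympForm_eq, key, h]

lemma mem_Sp_iff' {n : ℕ} (V : Mat n) : V ∈ Sp n ↔ Vᵀ * Om n * V = Om n := by
  have aux : ∀ V : Mat n, V * Om n * Vᵀ = Om n → Vᵀ * Om n * V = Om n := by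
    intro V h
    have h1 : V * (-(Om n * Vᵀ * Om n)) = 1 := by
      have : V * (Om n * Vᵀ * Om n) = V * Om n * Vᵀ * Om n := by simp only [mul_assoc]
      rw [mul_neg, this, h, Om_sq, neg_neg]
    have h2 : (-(Om n * Vᵀ * Om n)) * V = 1 := mul_eq_one_comm.mp h1
    have h3 : Om n * ((-(Om n * Vᵀ * Om n)) * V) = Vᵀ * Om n * V := by
      have : Om n * ((-(Om n * Vᵀ * Om n)) * V) = -((Om n * Om n) * Vᵀ * Om n * V) := by
        simp only [mul_assoc, neg_mul, mul_neg]
      rw [this, Om_sq]; simp [mul_assoc]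
    rw [← h3, h2, mul_one]
  rw [mem_Sp_iff]
  refine ⟨aux V, fun h => ?_⟩
  have := aux Vᵀ (by simpa using h)
  simpa using this

/-- The symplectic group as a type. -/
def G (n : ℕ) := {M : Mat n // M ∈ Sp n}

instance (n : ℕ) : TopologicalSpace (G n) := instTopologicalSpaceSubtype
instance (n : ℕ) : CoeOut (G n) (Mat n) := ⟨Subtype.val⟩

lemma G.ext {n : ℕ} {a b : G n} (h : (a : Mat n) = b) : a = b := Subtype.ext h

lemma G.r {n : ℕ} (a : G n) : (a : Mat n) * Om n * (a : Mat n)ᵀ = Om n := (mem_Sp_iff _).1 a.2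
lemma G.l {n : ℕ} (a : G n) : (a : Mat n)ᵀ * Om n * (a : Mat n) = Om n := (mem_Sp_iff' _).1 a.2

instance (n : ℕ) : Group (G n) where
  mul a b := ⟨(a : Mat n) * b, by
    rw [mem_Sp_iff, transpose_mul]
    have : (a : Mat n) * b * Om n * ((b : Mat n)ᵀ * (a : Mat n)ᵀ) =
      (a : Mat n) * ((b : Mat n) * Om n * (b : Mat n)ᵀ) * (a : Mat n)ᵀ := by simp only [mul_assoc]
    rw [this, b.r, a.r]⟩
  one := ⟨1, by rw [mem_Sp_iff]; simp⟩
  inv a := ⟨-(Om n * (a : Mat n)ᵀ * Om n), by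
    rw [mem_Sp_iff]
    have : -(Om n * (a : Mat n)ᵀ * Om n) * Om n * (-(Om n * (a : Mat n)ᵀ * Om n))ᵀ
      = (Om n * (a : Mat n)ᵀ * (Om n * Om n) * (Om n * (a : Mat n) * Om n)) := by
      simp [transpose_mul, Om_tr, mul_assoc]
    rw [this, Om_sq]
    have : Om n * (a : Mat n)ᵀ * (-1) * (Om n * (a : Mat n) * Om n) =
      - (Om n * ((a : Mat n)ᵀ * Om n * (a : Mat n)) * Om n) := by simp [mul_assoc]
    rw [this, a.l, mul_assoc, Om_sq]; simp⟩
  mul_assoc a b c := Subtype.ext (mul_assoc (a : Mat n) b c)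
  one_mul a := Subtype.ext (one_mul (a : Mat n))
  mul_one a := Subtype.ext (mul_one (a : Mat n))
  inv_mul_cancel a := Subtype.ext (by
    change -(Om n * (a : Mat n)ᵀ * Om n) * (a : Mat n) = 1
    have : -(Om n * (a : Mat n)ᵀ * Om n) * (a : Mat n) = -(Om n * ((a : Mat n)ᵀ * Om n * (a : Mat n))) := by
      simp [mul_assoc]
    rw [this, a.l, Om_sq, neg_neg])

@[simp] lemma G.coe_mul {n : ℕ} (a b : G n) : ((a * b : G n) : Mat n) = (a : Mat n) * b := rfl
@[simp] lemma G.coe_one {n : ℕ} : ((1 : G n) : Mat n) = 1 := rfl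
lemma G.coe_inv {n : ℕ} (a : G n) : ((a⁻¹ : G n) : Mat n) = -(Om n * (a : Mat n)ᵀ * Om n) := rfl

lemma G.cont_val {n : ℕ} : Continuous (fun a : G n => (a : Mat n)) := continuous_subtype_val

@[fun_prop]
lemma G.cont_val' {n : ℕ} {X : Type*} [TopologicalSpace X] {f : X → G n} (hf : Continuous f) :
    Continuous (fun x => (f x : Mat n)) := continuous_subtype_val.comp hf

lemma G.cont_iff {n : ℕ} {X : Type*} [TopologicalSpace X] {f : X → G n} :
    Continuous f ↔ Continuous (fun x => (f x : Mat n)) := continuous_induced_rng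

instance (n : ℕ) : IsTopologicalGroup (G n) where
  continuous_mul := by
    rw [G.cont_iff]
    simp only [G.coe_mul]
    fun_prop
  continuous_inv := by
    rw [G.cont_iff]
    simp only [G.coe_inv]
    have := @G.cont_val n
    exact ((continuous_const.matrix_mul this.matrix_transpose).matrix_mul continuous_const).neg

instance (n : ℕ) : T2Space (G n) := inferInstanceAs (T2Space {M : Mat n // M ∈ Sp n})

lemma G.val_inv_mul {n : ℕ} (a : G n) : ((a⁻¹ : G n) : Mat n) * (a : Mat n) = 1 := by
  rw [← G.coe_mul, inv_mul_cancel, G.coe_one]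
lemma G.mul_val_inv {n : ℕ} (a : G n) : (a : Mat n) * ((a⁻¹ : G n) : Mat n) = 1 := by
  rw [← G.coe_mul, mul_inv_cancel, G.coe_one]

lemma G.det_isUnit {n : ℕ} (a : G n) : IsUnit (a : Mat n).det :=
  (Matrix.isUnit_iff_isUnit_det _).1 ⟨⟨a, (a⁻¹ : G n), a.mul_val_inv, a.val_inv_mul⟩, rfl⟩

/-- corank data -/
def rk {n : ℕ} (a : G n) : ℕ := ((a : Mat n) - 1).rank

lemma rk_conj {n : ℕ} (g a : G n) : rk (g * a * g⁻¹) = rk a := by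
  unfold rk
  have : ((g * a * g⁻¹ : G n) : Mat n) - 1 = (g : Mat n) * ((a : Mat n) - 1) * ((g⁻¹ : G n) : Mat n) := by
    rw [mul_sub, sub_mul, mul_one, G.mul_val_inv]; simp
  rw [this, Matrix.rank_mul_eq_left_of_isUnit_det _ _ (G.det_isUnit _),
    Matrix.rank_mul_eq_right_of_isUnit_det _ _ (G.det_isUnit _)]

def nondeg {n : ℕ} (a : G n) : Prop := ((a : Mat n) - 1).det ≠ 0

lemma rk_of_nondeg {n : ℕ} {a : G n} (h : nondeg a) : rk a = 2*n := by
  unfold rk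
  rw [Matrix.rank_of_isUnit _ ((Matrix.isUnit_iff_isUnit_det _).2 (isUnit_iff_ne_zero.2 h))]; simp

/-! block sums -/
def bEquiv (p q : ℕ) : Fin (2*p) ⊕ Fin (2*q) ≃ Fin (2*(p+q)) :=
  finSumFinEquiv.trans (finCongr (by ring))

lemma bds_eq (p q : ℕ) (A : Mat p) (B : Mat q) :
    blockDiagSum p q A B = Matrix.reindex (bEquiv p q) (bEquiv p q) (Matrix.fromBlocks A 0 0 B) := by
  rw [← Equiv.symm_apply_eq]
  ext i j
  have hl : ∀ i : Fin (2*p), ((bEquiv p q (Sum.inl i)) : ℕ) = i := fun i => by simp [bEquiv]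
  have hr : ∀ i : Fin (2*q), ((bEquiv p q (Sum.inr i)) : ℕ) = 2*p + i := fun i => by simp [bEquiv]
  rcases i with i | i <;> rcases j with j | j <;>
    simp [blockDiagSum, hl, hr, Matrix.reindex]

lemma bds_mul (p q : ℕ) (A A' : Mat p) (B B' : Mat q) :
    blockDiagSum p q (A * A') (B * B') = blockDiagSum p q A B * blockDiagSum p q A' B' := by
  simp [bds_eq, Matrix.fromBlocks_multiply, Matrix.submatrix_mul_equiv]

lemma bds_one (p q : ℕ) : blockDiagSum p q 1 1 = 1 := by
  simp [bds_eq]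

lemma bds_tr (p q : ℕ) (A : Mat p) (B : Mat q) :
    (blockDiagSum p q A B)ᵀ = blockDiagSum p q Aᵀ Bᵀ := by
  simp [bds_eq, Matrix.fromBlocks_transpose]

lemma bds_add (p q : ℕ) (A A' : Mat p) (B B' : Mat q) :
    blockDiagSum p q (A + A') (B + B') = blockDiagSum p q A B + blockDiagSum p q A' B' := by
  simp only [bds_eq]
  rw [show Matrix.fromBlocks (A + A') 0 0 (B + B') = Matrix.fromBlocks A 0 0 B + Matrix.fromBlocks A' 0 0 B' by
    simp [Matrix.fromBlocks_add]]
  rfl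

lemma bds_smul (p q : ℕ) (c : ℝ) (A : Mat p) (B : Mat q) :
    blockDiagSum p q (c • A) (c • B) = c • blockDiagSum p q A B := by
  simp only [bds_eq]
  rw [show Matrix.fromBlocks (c • A) 0 0 (c • B) = c • Matrix.fromBlocks A 0 0 B by
    simp [Matrix.fromBlocks_smul]]
  rfl

lemma bds_det (p q : ℕ) (A : Mat p) (B : Mat q) :
    (blockDiagSum p q A B).det = A.det * B.det := by
  rw [bds_eq, Matrix.det_reindex_self, Matrix.det_fromBlocks_zero₂₁]

lemma bds_Om (p q : ℕ) : blockDiagSum p q (Om p) (Om q) = Om (p+q) := by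
  ext i j
  simp only [blockDiagSum, Om, Matrix.of_apply, prt, sgn']
  have hi := i.isLt
  have hj := j.isLt
  simp only [Fin.ext_iff]
  split_ifs <;> simp_all <;> omega

lemma bds_continuous {X : Type*} [TopologicalSpace X] (p q : ℕ) {A : X → Mat p} {B : X → Mat q}
    (hA : Continuous A) (hB : Continuous B) : Continuous fun x => blockDiagSum p q (A x) (B x) := by
  simp only [bds_eq]
  exact (hA.matrix_fromBlocks continuous_const continuous_const hB).matrix_reindex _ _

/-- block sum on the group -/
def bs (p q : ℕ) (a : G p) (b : G q) : G (p+q) := ⟨blockDiagSum p q a b, by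
  rw [mem_Sp_iff, bds_tr, ← bds_Om, ← bds_mul, ← bds_mul, a.r, b.r]⟩

@[simp] lemma bs_coe (p q : ℕ) (a : G p) (b : G q) : (bs p q a b : Mat (p+q)) = blockDiagSum p q a b := rfl

lemma bs_mul (p q : ℕ) (a a' : G p) (b b' : G q) : bs p q (a * a') (b * b') = bs p q a b * bs p q a' b' :=
  G.ext (bds_mul _ _ _ _ _ _)
lemma bs_one (p q : ℕ) : bs p q 1 1 = 1 := G.ext (bds_one _ _)
lemma bs_inv (p q : ℕ) (a : G p) (b : G q) : bs p q a⁻¹ b⁻¹ = (bs p q a b)⁻¹ := by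
  rw [eq_inv_iff_mul_eq_one, ← bs_mul]; simp [bs_one]

@[fun_prop]
lemma bs_cont {X : Type*} [TopologicalSpace X] (p q : ℕ) {A : X → G p} {B : X → G q}
    (hA : Continuous A) (hB : Continuous B) : Continuous fun x => bs p q (A x) (B x) := by
  rw [G.cont_iff]; simp only [bs_coe]
  exact bds_continuous _ _ (by fun_prop) (by fun_prop)

/-- rotations -/
def rot (n : ℕ) (θ : ℝ) : G n := ⟨Real.cos θ • 1 + Real.sin θ • Om n, by
  rw [mem_Sp_iff]
  simp only [transpose_add, transpose_smul, transpose_one, Om_tr, add_mul, mul_add, smul_mul_assoc,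
    one_mul, mul_one, mul_smul_comm, mul_neg, Om_sq, neg_mul, smul_neg, smul_add, smul_smul]
  have h := Real.sin_sq_add_cos_sq θ
  rw [show (Real.cos θ * Real.cos θ) = 1 - Real.sin θ * Real.sin θ by nlinarith, sub_smul]
  module⟩

lemma rot_coe (n : ℕ) (θ : ℝ) : (rot n θ : Mat n) = Real.cos θ • 1 + Real.sin θ • Om n := rfl

lemma rot_add (n : ℕ) (a b : ℝ) : rot n (a + b) = rot n a * rot n b := by
  apply G.ext
  rw [G.coe_mul, rot_coe, rot_coe, rot_coe, Real.cos_add, Real.sin_add]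
  simp only [add_mul, mul_add, smul_mul_assoc,
    one_mul, mul_one, mul_smul_comm, Om_sq, smul_add, smul_smul]
  module

@[simp] lemma rot_zero (n : ℕ) : rot n 0 = 1 := G.ext (by simp [rot_coe])

lemma rot_neg (n : ℕ) (a : ℝ) : rot n (-a) = (rot n a)⁻¹ := by
  rw [eq_inv_iff_mul_eq_one, ← rot_add]; simp

@[fun_prop]
lemma rot_cont {X : Type*} [TopologicalSpace X] (n : ℕ) {f : X → ℝ} (hf : Continuous f) :
    Continuous fun x => rot n (f x) := by
  rw [G.cont_iff]; simp only [rot_coe]; fun_prop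

lemma rot_bs (p q : ℕ) (θ : ℝ) : rot (p+q) θ = bs p q (rot p θ) (rot q θ) :=
  G.ext (by rw [bs_coe, rot_coe, rot_coe, rot_coe, bds_add, bds_smul, bds_smul, bds_Om, bds_one])

end

section

/-! Cayley transform and unitary matrices -/
abbrev CMat (n : ℕ) := Matrix (Fin (2*n)) (Fin (2*n)) ℂ

abbrev cm {n : ℕ} : Mat n →+* CMat n := Complex.ofRealHom.mapMatrix

lemma cm_conj {n : ℕ} (A : Mat n) : (cm A)ᴴ = cm Aᵀ := by
  ext i j; simp [Matrix.conjTranspose_apply]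

lemma cm_cont {n : ℕ} {X : Type*} [TopologicalSpace X] {f : X → Mat n} (hf : Continuous f) :
    Continuous fun x => cm (f x) := by
  refine continuous_matrix fun i j => ?_
  exact Complex.continuous_ofReal.comp (hf.matrix_elem i j)

lemma cm_rank {n : ℕ} (A : Mat n) : (cm A).rank = A.rank := by
  classical
  obtain ⟨L, L', D, h⟩ := Matrix.Pivot.exists_list_transvec_mul_diagonal_mul_list_transvec A
  have hu : ∀ L : List (TransvectionStruct (Fin (2*n)) ℝ),
      IsUnit ((L.map TransvectionStruct.toMatrix).prod).det := by
    intro L; rw [TransvectionStruct.det_toMatrix_prod]; exact isUnit_one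
  have hu' : ∀ B : Mat n, IsUnit B.det → IsUnit (cm B).det := by
    intro B hB
    rw [← RingHom.map_det]; exact hB.map _
  rw [h, map_mul, map_mul, Matrix.rank_mul_eq_left_of_isUnit_det _ _ (hu' _ (hu _)),
    Matrix.rank_mul_eq_right_of_isUnit_det _ _ (hu' _ (hu _)),
    Matrix.rank_mul_eq_left_of_isUnit_det _ _ ((hu _)),
    Matrix.rank_mul_eq_right_of_isUnit_det _ _ ((hu _))]
  rw [show cm (diagonal D) = diagonal (fun i => (D i : ℂ)) by
    simp [RingHom.mapMatrix_apply, Matrix.diagonal_map]]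
  rw [Matrix.rank_diagonal, Matrix.rank_diagonal]
  simp

def Zp {n : ℕ} (M : Mat n) : CMat n := cm (M + 1) + Complex.I • cm (Om n * (M - 1))
def Zm {n : ℕ} (M : Mat n) : CMat n := cm (M + 1) - Complex.I • cm (Om n * (M - 1))
def Wm {n : ℕ} (M : Mat n) : CMat n := Zm M * (Zp M)⁻¹

lemma XY_sym {n : ℕ} (a : G n) : ((a : Mat n) + 1)ᵀ * (Om n * ((a : Mat n) - 1)) =
    (Om n * ((a : Mat n) - 1))ᵀ * ((a : Mat n) + 1) := by
  have h := a.l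
  rw [mul_assoc] at h
  simp only [transpose_add, transpose_mul, transpose_sub, transpose_one, Om_tr, add_mul, mul_add, mul_sub,
    sub_mul, mul_one, one_mul, mul_neg, neg_mul, mul_assoc, h]
  abel

lemma XY_pos {n : ℕ} (a : G n) : ((a : Mat n) + 1)ᵀ * ((a : Mat n) + 1) +
    (Om n * ((a : Mat n) - 1))ᵀ * (Om n * ((a : Mat n) - 1)) = 2 • ((a : Mat n)ᵀ * (a : Mat n) + 1) := by
  have h : ∀ B : Mat n, Om n * (Om n * B) = - B := fun B => by rw [← mul_assoc, Om_sq]; simp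
  simp only [transpose_add, transpose_mul, transpose_sub, transpose_one, Om_tr, add_mul, mul_add, mul_sub,
    sub_mul, mul_one, one_mul, mul_neg, neg_mul, mul_assoc, h, Om_sq]
  rw [two_smul]
  abel

lemma Z_aux {n : ℕ} (x y xt yt : CMat n) (h : xt * y = yt * x) :
    (xt + star Complex.I • yt) * (x + Complex.I • y) = xt * x + yt * y ∧
    (xt - star Complex.I • yt) * (x - Complex.I • y) = xt * x + yt * y := by
  have hI : star Complex.I = -Complex.I := Complex.conj_I
  rw [hI]
  constructor
  · simp only [add_mul, mul_add, smul_mul_assoc, mul_smul_comm, h]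
    simp only [smul_add, smul_smul, mul_neg, Complex.I_mul_I]
    module
  · simp only [sub_mul, mul_sub, smul_mul_assoc, mul_smul_comm, h]
    simp only [smul_sub, smul_smul, mul_neg, Complex.I_mul_I]
    module

lemma Zp_sq {n : ℕ} (a : G n) : (Zp (a : Mat n))ᴴ * Zp (a : Mat n) = cm (2 • ((a : Mat n)ᵀ * (a : Mat n) + 1)) := by
  have h1 := congrArg cm (XY_sym a)
  rw [← XY_pos]
  rw [map_mul cm _ᵀ, map_mul cm _ᵀ] at h1
  unfold Zp
  rw [conjTranspose_add, conjTranspose_smul, cm_conj, cm_conj, (Z_aux _ _ _ _ h1).1, map_add cm (_ᵀ * _), map_mul cm _ᵀ, map_mul cm _ᵀ]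

lemma Zm_sq {n : ℕ} (a : G n) : (Zm (a : Mat n))ᴴ * Zm (a : Mat n) = cm (2 • ((a : Mat n)ᵀ * (a : Mat n) + 1)) := by
  have h1 := congrArg cm (XY_sym a)
  rw [← XY_pos]
  rw [map_mul cm _ᵀ, map_mul cm _ᵀ] at h1
  unfold Zm
  rw [conjTranspose_sub, conjTranspose_smul, cm_conj, cm_conj, (Z_aux _ _ _ _ h1).2, map_add cm (_ᵀ * _), map_mul cm _ᵀ, map_mul cm _ᵀ]

lemma Zp_det {n : ℕ} (a : G n) : IsUnit (Zp (a : Mat n)).det := by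
  rw [isUnit_iff_ne_zero]
  intro h0
  have hpd : (2 • ((a : Mat n)ᵀ * (a : Mat n) + 1)).PosDef := by
    have h1 : ((a : Mat n)ᵀ * (a : Mat n) + 1).PosDef := by
      have := Matrix.posSemidef_conjTranspose_mul_self (a : Mat n)
      rw [conjTranspose_eq_transpose_of_trivial] at this
      rw [add_comm]
      exact Matrix.PosDef.one.add_posSemidef this
    rw [two_smul]; exact h1.add h1
  have h2 := congrArg Matrix.det (Zp_sq a)
  rw [Matrix.det_mul, h0, mul_zero, ← RingHom.map_det] at h2
  have := hpd.det_pos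
  exact this.ne' (Complex.ofReal_eq_zero.1 h2.symm)

lemma Wm_mul {n : ℕ} (a : G n) : Wm (a : Mat n) * Zp (a : Mat n) = Zm (a : Mat n) := by
  unfold Wm; rw [mul_assoc, Matrix.nonsing_inv_mul _ (Zp_det a), mul_one]

lemma Wm_unitary {n : ℕ} (a : G n) : (Wm (a : Mat n))ᴴ * Wm (a : Mat n) = 1 := by
  unfold Wm
  rw [conjTranspose_mul]
  have : ((Zp (a : Mat n))⁻¹)ᴴ * (Zm (a : Mat n))ᴴ * (Zm (a : Mat n) * (Zp (a : Mat n))⁻¹) =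
    ((Zp (a : Mat n))⁻¹)ᴴ * ((Zm (a : Mat n))ᴴ * Zm (a : Mat n)) * (Zp (a : Mat n))⁻¹ := by
    simp only [mul_assoc]
  rw [this, Zm_sq, ← Zp_sq]
  have : ((Zp (a : Mat n))⁻¹)ᴴ * ((Zp (a : Mat n))ᴴ * Zp (a : Mat n)) * (Zp (a : Mat n))⁻¹ =
    (Zp (a : Mat n) * (Zp (a : Mat n))⁻¹)ᴴ * (Zp (a : Mat n) * (Zp (a : Mat n))⁻¹) := by
    simp only [conjTranspose_mul, mul_assoc]
  rw [this, Matrix.mul_nonsing_inv _ (Zp_det a)]; simp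

lemma Wm_cont {n : ℕ} : Continuous fun a : G n => Wm (a : Mat n) := by
  have h1 : Continuous fun a : G n => Zp (a : Mat n) :=
    (cm_cont (f := fun a : G n => (a : Mat n) + 1) (by fun_prop)).add ((cm_cont (f := fun a : G n => Om n * ((a : Mat n) - 1)) (by fun_prop)).fun_const_smul _)
  have h2 : Continuous fun a : G n => Zm (a : Mat n) :=
    (cm_cont (f := fun a : G n => (a : Mat n) + 1) (by fun_prop)).sub ((cm_cont (f := fun a : G n => Om n * ((a : Mat n) - 1)) (by fun_prop)).fun_const_smul _)
  unfold Wm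
  refine h2.matrix_mul ?_
  simp only [Matrix.inv_def, Ring.inverse_eq_inv']
  exact (h1.matrix_det.inv₀ fun a => (Zp_det a).ne_zero).smul h1.matrix_adjugate

lemma Wm_one {n : ℕ} : Wm (1 : Mat n) = 1 := by
  have h := Wm_mul (1 : G n)
  have h2 : Zm (1 : Mat n) = Zp (1 : Mat n) := by unfold Zm Zp; simp
  unfold Wm; rw [h2]; exact Matrix.mul_nonsing_inv _ (Zp_det (1 : G n))

lemma Wm_rank {n : ℕ} (a : G n) : (Wm (a : Mat n) - 1).rank = rk a := by
  have h : (Wm (a : Mat n) - 1) * Zp (a : Mat n) = cm (Om n * ((a : Mat n) - 1)) * (scalar _ (-2 * Complex.I)) := by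
    rw [sub_mul, Wm_mul, one_mul, ← (scalar_commute _ (fun r => Commute.all _ _) _).eq]
    simp only [Zm, Zp, Matrix.scalar_apply]
    rw [← smul_eq_diagonal_mul]
    module
  rw [← Matrix.rank_mul_eq_left_of_isUnit_det _ (Wm (a : Mat n) - 1) (Zp_det a), h,
    Matrix.rank_mul_eq_left_of_isUnit_det, cm_rank, Matrix.rank_mul_eq_right_of_isUnit_det]
  · rfl
  · rw [← Matrix.isUnit_iff_isUnit_det]
    exact ⟨⟨Om n, -Om n, by rw [mul_neg, Om_sq, neg_neg], by rw [neg_mul, Om_sq, neg_neg]⟩, rfl⟩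
  · rw [isUnit_iff_ne_zero]; simp

lemma Wm_bs {p q : ℕ} (a : G p) (b : G q) : Wm (bs p q a b : Mat (p+q)) =
    Matrix.reindex (bEquiv p q) (bEquiv p q) (Matrix.fromBlocks (Wm (a : Mat p)) 0 0 (Wm (b : Mat q))) := by
  have hc : ∀ (A : Mat p) (B : Mat q), cm (blockDiagSum p q A B) =
    Matrix.reindex (bEquiv p q) (bEquiv p q) (Matrix.fromBlocks (cm A) 0 0 (cm B)) := by
    intro A B
    rw [bds_eq]
    ext i j
    simp only [RingHom.mapMatrix_apply, Matrix.map_apply, Matrix.reindex_apply, Matrix.submatrix_apply]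
    rcases (bEquiv p q).symm i with i | i <;> rcases (bEquiv p q).symm j with j | j <;> simp
  have e1 : (bs p q a b : Mat (p+q)) + 1 = blockDiagSum p q (a+1) (b+1) := by
    rw [bds_add, bds_one]; rfl
  have e2 : Om (p+q) * ((bs p q a b : Mat (p+q)) - 1) = blockDiagSum p q (Om p * ((a : Mat p)-1)) (Om q * ((b : Mat q)-1)) := by
    rw [bds_mul, bds_Om, sub_eq_add_neg, sub_eq_add_neg, sub_eq_add_neg, bds_add, bs_coe]
    have := bds_smul p q (-1) 1 1
    rw [bds_one] at this
    simp only [neg_smul, one_smul] at this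
    rw [this]
  have hp : Zp (bs p q a b : Mat (p+q)) = Matrix.reindex (bEquiv p q) (bEquiv p q) (Matrix.fromBlocks (Zp (a : Mat p)) 0 0 (Zp (b : Mat q))) := by
    unfold Zp
    rw [e1, e2, hc, hc]
    ext i j
    simp only [Matrix.reindex_apply, Matrix.submatrix_apply, Matrix.add_apply, Matrix.smul_apply]
    rcases (bEquiv p q).symm i with i | i <;> rcases (bEquiv p q).symm j with j | j <;> simp
  have hm : Zm (bs p q a b : Mat (p+q)) = Matrix.reindex (bEquiv p q) (bEquiv p q) (Matrix.fromBlocks (Zm (a : Mat p)) 0 0 (Zm (b : Mat q))) := by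
    unfold Zm
    rw [e1, e2, hc, hc]
    ext i j
    simp only [Matrix.reindex_apply, Matrix.submatrix_apply, Matrix.sub_apply, Matrix.smul_apply]
    rcases (bEquiv p q).symm i with i | i <;> rcases (bEquiv p q).symm j with j | j <;> simp
  have key : Matrix.reindex (bEquiv p q) (bEquiv p q) (Matrix.fromBlocks (Wm (a : Mat p)) 0 0 (Wm (b : Mat q))) * Zp (bs p q a b : Mat (p+q)) = Zm (bs p q a b : Mat (p+q)) := by
    rw [hp, hm]
    simp [Matrix.fromBlocks_multiply, Matrix.submatrix_mul_equiv, Wm_mul]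
  conv_lhs => unfold Wm
  rw [← key, mul_assoc, Matrix.mul_nonsing_inv _ (Zp_det _), mul_one]

end

section

/-! spectra of unitary matrices -/
section unitary
variable {m : Type*} [Fintype m] [DecidableEq m]

open ComplexOrder in
lemma unit_root {W : Matrix m m ℂ} (hW : Wᴴ * W = 1) {z : ℂ} (hz : z ∈ W.charpoly.roots) : ‖z‖ = 1 := by
  rw [Polynomial.mem_roots W.charpoly_monic.ne_zero, Polynomial.IsRoot, Matrix.eval_charpoly] at hz
  obtain ⟨v, hv, h⟩ := Matrix.exists_mulVec_eq_zero_iff.2 hz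
  have h1 : W *ᵥ v = z • v := by
    rw [Matrix.sub_mulVec] at h
    have := sub_eq_zero.1 h
    rw [← this]; simp
  have h2 : star (W *ᵥ v) ⬝ᵥ (W *ᵥ v) = star v ⬝ᵥ v := by
    rw [Matrix.star_mulVec, ← Matrix.dotProduct_mulVec, Matrix.mulVec_mulVec, hW, Matrix.one_mulVec]
  rw [h1, star_smul, smul_dotProduct, dotProduct_smul, smul_smul] at h2
  have h3 : star v ⬝ᵥ v ≠ 0 := by
    intro h0; exact hv (dotProduct_star_self_eq_zero.1 h0)
  have h4 : star z * z = 1 := by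
    have : (star z * z - 1) * (star v ⬝ᵥ v) = 0 := by
      rw [sub_mul, one_mul, sub_eq_zero]; exact h2
    rcases mul_eq_zero.1 this with h | h
    · exact sub_eq_zero.1 h
    · exact absurd h h3
  have h5 : ‖z‖ ^ 2 = 1 := by
    have := congrArg norm h4
    rw [norm_mul, norm_star, norm_one] at this
    rw [sq]; exact this
  nlinarith [norm_nonneg z, sq_nonneg (‖z‖ - 1)]

open ComplexOrder in
lemma unit_ker {W : Matrix m m ℂ} (hW : Wᴴ * W = 1) {v : m → ℂ} (h : (W - 1) *ᵥ ((W - 1) *ᵥ v) = 0) :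
    (W - 1) *ᵥ v = 0 := by
  set u := (W - 1) *ᵥ v with hu
  have h1 : W *ᵥ u = u := by
    rw [Matrix.sub_mulVec, sub_eq_zero, Matrix.one_mulVec] at h; exact h
  have h2 : Wᴴ *ᵥ u = u := by
    conv_lhs => rw [← h1]
    rw [Matrix.mulVec_mulVec, hW, Matrix.one_mulVec]
  have h3 : star u ⬝ᵥ u = 0 := by
    conv_lhs => rhs; rw [hu]
    rw [Matrix.dotProduct_mulVec]
    have : star u ᵥ* (W - 1) = 0 := by
      have := congrArg star h2
      rw [Matrix.star_mulVec, conjTranspose_conjTranspose] at this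
      rw [Matrix.vecMul_sub, this, Matrix.vecMul_one, sub_self]
    rw [this, zero_dotProduct]
  exact dotProduct_star_self_eq_zero.1 h3

lemma unit_mult {W : Matrix m m ℂ} (hW : Wᴴ * W = 1) :
    W.charpoly.rootMultiplicity 1 + (W - 1).rank = Fintype.card m := by
  have h1 : LinearMap.ker (Matrix.mulVecLin (W - 1)) = Module.End.maxGenEigenspace (Matrix.toLin' W) 1 := by
    have e : (Matrix.toLin' W - (1:ℂ) • (1 : Module.End ℂ (m → ℂ))) = Matrix.toLin' (W - 1) := by
      rw [map_sub, one_smul, Matrix.toLin'_one]; rfl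
    ext v
    rw [Module.End.mem_maxGenEigenspace, e]
    simp only [LinearMap.mem_ker, Matrix.mulVecLin_apply]
    constructor
    · intro h; exact ⟨1, by rw [pow_one]; exact h⟩
    · rintro ⟨k, hk⟩
      induction k with
      | zero => simp at hk; simp [hk]
      | succ k ih =>
        rcases k with _ | k
        · rw [zero_add, pow_one] at hk; exact hk
        · apply ih
          rw [pow_succ', pow_succ', Module.End.mul_apply, Module.End.mul_apply, Matrix.toLin'_apply, Matrix.toLin'_apply] at hk
          rw [pow_succ', Module.End.mul_apply, Matrix.toLin'_apply]
          exact unit_ker hW hk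
  have h2 := LinearMap.finrank_range_add_finrank_ker (Matrix.mulVecLin (W - 1))
  rw [h1, LinearMap.finrank_maxGenEigenspace_eq, Matrix.charpoly_toLin'] at h2
  rw [add_comm]
  simpa [Matrix.rank] using h2

open Filter Topology in
lemma root_vec {X : Type*} (U : Ultrafilter X) {W : X → Matrix m m ℂ} {W0 : Matrix m m ℂ}
    (hW : ∀ x, (W x)ᴴ * W x = 1) (hl : Tendsto W U (𝓝 W0)) :
    ∃ (z : X → m → ℂ) (ζ : m → ℂ), (∀ x, (W x).charpoly.roots = Finset.univ.val.map (z x)) ∧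
      W0.charpoly.roots = Finset.univ.val.map ζ ∧ ∀ i, Tendsto (fun x => z x i) U (𝓝 (ζ i)) := by
  have h1 : ∀ x, ∃ z : m → ℂ, (W x).charpoly.roots = Finset.univ.val.map z := by
    intro x
    have hc : Multiset.card (W x).charpoly.roots = Fintype.card m := by
      rw [← Matrix.charpoly_natDegree_eq_dim (W x)]
      exact (IsAlgClosed.splits (W x).charpoly).natDegree_eq_card_roots.symm
    have hlen : (W x).charpoly.roots.toList.length = Fintype.card m := by simpa using hc
    let e : m ≃ Fin (W x).charpoly.roots.toList.length := (Fintype.equivFin m).trans (finCongr hlen.symm)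
    refine ⟨fun i => (W x).charpoly.roots.toList.get (e i), ?_⟩
    have : Finset.univ.val.map (fun i => (W x).charpoly.roots.toList.get (e i)) =
      (Finset.univ.val.map e).map (fun i => (W x).charpoly.roots.toList.get i) := by
      rw [Multiset.map_map]; rfl
    rw [this]
    have h2 : (Finset.univ : Finset m).val.map e = (Finset.univ : Finset (Fin (W x).charpoly.roots.toList.length)).val := by
      have := congrArg Finset.val (Finset.map_univ_equiv e)
      simpa using this
    rw [h2]
    conv_lhs => rw [← Multiset.coe_toList (W x).charpoly.roots]
    rw [Fin.univ_val_map, List.ofFn_get]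
  choose z hz using h1
  have hb : ∀ x i, z x i ∈ Metric.closedBall (0:ℂ) 1 := by
    intro x i
    have : z x i ∈ (W x).charpoly.roots := by
      rw [hz x]; exact Multiset.mem_map_of_mem _ (Finset.mem_univ i)
    have := unit_root (hW x) this
    simp [this]
  have h2 : ∀ i, ∃ ζ : ℂ, Tendsto (fun x => z x i) U (𝓝 ζ) := by
    intro i
    obtain ⟨ζ, -, h⟩ := isCompact_iff_ultrafilter_le_nhds.1 (isCompact_closedBall (0:ℂ) 1) (U.map fun x => z x i)
      (by
        rw [Filter.le_principal_iff]
        exact Filter.mem_map.2 (Filter.Eventually.of_forall fun x => hb x i))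
    exact ⟨ζ, h⟩
  choose ζ hζ using h2
  refine ⟨z, ζ, hz, ?_, hζ⟩
  have hp : W0.charpoly = ∏ i, (Polynomial.X - Polynomial.C (ζ i)) := by
    refine Polynomial.funext fun c => ?_
    have e1 : Tendsto (fun x => (W x).charpoly.eval c) U (𝓝 (W0.charpoly.eval c)) := by
      simp only [Matrix.eval_charpoly]
      have : Continuous fun V : Matrix m m ℂ => (scalar m c - V).det := by fun_prop
      exact (this.tendsto W0).comp hl
    have e2 : Tendsto (fun x => (W x).charpoly.eval c) U (𝓝 ((∏ i, (Polynomial.X - Polynomial.C (ζ i))).eval c)) := by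
      have : ∀ x, (W x).charpoly.eval c = ∏ i, (c - z x i) := by
        intro x
        rw [(IsAlgClosed.splits (W x).charpoly).eq_prod_roots_of_monic (W x).charpoly_monic, hz x]
        rw [Multiset.map_map, Polynomial.eval_multiset_prod, Multiset.map_map]
        simp [Function.comp_def]
      simp only [this, Polynomial.eval_prod]
      refine tendsto_finsetProd _ fun i _ => ?_
      simpa using tendsto_const_nhds.sub (hζ i)
    exact tendsto_nhds_unique e1 e2
  rw [hp, Polynomial.roots_prod _ _ (Finset.prod_ne_zero_iff.2 fun i _ => Polynomial.X_sub_C_ne_zero _)]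
  simp only [Polynomial.roots_X_sub_C]
  exact Multiset.bind_singleton _ _
end unitary

end

section

/-! angle branches -/
def gb (z : ℂ) : ℝ := Complex.arg (-z) + Real.pi
def gt' (z : ℂ) : ℝ := Real.pi - Complex.arg (-(starRingEnd ℂ z))

lemma gb_exp {z : ℂ} (hz : ‖z‖ = 1) : Complex.exp (gb z * Complex.I) = z := by
  unfold gb
  push_cast
  rw [add_mul, Complex.exp_add, Complex.exp_pi_mul_I]
  have := Complex.norm_mul_exp_arg_mul_I (-z)
  rw [norm_neg, hz] at this
  simp at this
  rw [this]; ring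

lemma gb_one : gb 1 = 2 * Real.pi := by unfold gb; rw [Complex.arg_neg_one]; ring
lemma gt_one : gt' 1 = 0 := by unfold gt'; rw [map_one, Complex.arg_neg_one]; ring

lemma slit_of {z : ℂ} (hz : ‖z‖ = 1) (h1 : z ≠ 1) : -z ∈ Complex.slitPlane := by
  rw [Complex.mem_slitPlane_iff]
  by_contra h
  push Not at h
  simp at h
  obtain ⟨h2, h3⟩ := h
  apply h1
  have : z = (z.re : ℂ) := by apply Complex.ext <;> simp [h3]
  rw [this] at hz ⊢
  rw [Complex.norm_real, Real.norm_eq_abs, abs_of_nonneg h2] at hz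
  rw [hz]; simp

lemma gt_eq_gb {z : ℂ} (hz : ‖z‖ = 1) (h1 : z ≠ 1) : gt' z = gb z := by
  unfold gt' gb
  rw [← map_neg, Complex.arg_conj, if_neg]
  · ring
  · exact Complex.slitPlane_arg_ne_pi (slit_of hz h1)

lemma gb_cont {z : ℂ} (hz : ‖z‖ = 1) (h1 : z ≠ 1) : ContinuousAt gb z := by
  unfold gb
  have : ContinuousAt Complex.arg (-z) := Complex.continuousAt_arg (slit_of hz h1)
  exact (ContinuousAt.comp (f := fun z : ℂ => -z) (g := Complex.arg) this continuous_neg.continuousAt).add continuousAt_const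

/-- closed part of the circle avoiding a one-sided arc at `1` -/
def Sminus (ε : ℝ) : Set ℂ := {z | ‖z‖ = 1 ∧ (z.im ≤ 0 ∨ z.re ≤ 1 - ε)}

lemma Sminus_closed (ε : ℝ) : IsClosed (Sminus ε) := by
  unfold Sminus
  refine (isClosed_eq continuous_norm continuous_const).inter ?_
  exact (isClosed_le Complex.continuous_im continuous_const).union (isClosed_le Complex.continuous_re continuous_const)

lemma gb_contOn {ε : ℝ} (hε : 0 < ε) : ContinuousOn gb (Sminus ε) := by
  intro z hz
  by_cases h1 : z = 1
  · subst h1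
    unfold gb
    refine ContinuousWithinAt.add ?_ continuousWithinAt_const
    have h2 := Complex.continuousWithinAt_arg_of_re_neg_of_im_zero (z := -1) (by simp) (by simp)
    have h3 : ContinuousWithinAt (fun z : ℂ => Complex.arg (-z)) {z : ℂ | z.im ≤ 0} 1 := by
      refine ContinuousWithinAt.comp (f := fun z : ℂ => -z) (g := Complex.arg) h2 continuous_neg.continuousWithinAt ?_
      intro w hw; simpa using hw
    refine ContinuousWithinAt.mono_of_mem_nhdsWithin h3 ?_
    have : {w : ℂ | 1 - ε < w.re} ∈ nhds (1:ℂ) :=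
      (isOpen_lt continuous_const Complex.continuous_re).mem_nhds (by simp [hε])
    filter_upwards [mem_nhdsWithin_of_mem_nhds this, self_mem_nhdsWithin] with w hw hw2
    rcases hw2.2 with h | h
    · exact h
    · exact absurd hw (not_lt.2 h)
  · exact (gb_cont hz.1 h1).continuousWithinAt

def Splus (ε : ℝ) : Set ℂ := {z | ‖z‖ = 1 ∧ (0 ≤ z.im ∨ z.re ≤ 1 - ε)}

lemma Splus_closed (ε : ℝ) : IsClosed (Splus ε) := by
  unfold Splus
  refine (isClosed_eq continuous_norm continuous_const).inter ?_
  exact (isClosed_le continuous_const Complex.continuous_im).union (isClosed_le Complex.continuous_re continuous_const)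

lemma gt_contOn {ε : ℝ} (hε : 0 < ε) : ContinuousOn gt' (Splus ε) := by
  have h : ∀ z, gt' z = 2 * Real.pi - gb (starRingEnd ℂ z) := fun z => by unfold gt' gb; ring
  have : gt' = fun z => 2 * Real.pi - gb (starRingEnd ℂ z) := funext h
  rw [this]
  refine continuousOn_const.sub ?_
  refine (gb_contOn hε).comp Complex.continuous_conj.continuousOn ?_
  rintro z ⟨h1, h2⟩
  refine ⟨by simpa using h1, ?_⟩
  simpa using h2

section
variable {m : Type*} [Fintype m] [DecidableEq m]
def fs (g : ℂ → ℝ) (W : Matrix m m ℂ) : ℝ := (W.charpoly.roots.map g).sum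

open Filter Topology

lemma fs_tendsto_closed {X : Type*} {l : Filter X} {W : X → Matrix m m ℂ} {W0 : Matrix m m ℂ}
    (hW : ∀ x, (W x)ᴴ * W x = 1) (hl : Tendsto W l (𝓝 W0)) {S : Set ℂ} (hS : IsClosed S) {g : ℂ → ℝ}
    (hg : ContinuousOn g S) (hr : ∀ᶠ x in l, ∀ z ∈ (W x).charpoly.roots, z ∈ S) :
    Tendsto (fun x => fs g (W x)) l (𝓝 (fs g W0)) := by
  rw [tendsto_iff_ultrafilter]
  intro U hU
  obtain ⟨z, ζ, h1, h2, h3⟩ := root_vec U hW (hl.mono_left hU)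
  have e1 : ∀ x, fs g (W x) = ∑ i, g (z x i) := by
    intro x; unfold fs; rw [h1, Multiset.map_map]; rfl
  have e2 : fs g W0 = ∑ i, g (ζ i) := by
    unfold fs; rw [h2, Multiset.map_map]; rfl
  simp only [e1, e2]
  refine tendsto_finsetSum _ fun i _ => ?_
  have hzS : ∀ᶠ x in (U : Filter X), z x i ∈ S := by
    filter_upwards [hU hr] with x hx
    apply hx
    rw [h1]; exact Multiset.mem_map_of_mem _ (Finset.mem_univ i)
  have hζS : ζ i ∈ S := hS.mem_of_tendsto (h3 i) hzS
  exact (hg _ hζS).tendsto.comp (tendsto_nhdsWithin_iff.2 ⟨h3 i, hzS⟩)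

lemma fs_tendsto_mult {X : Type*} {l : Filter X} {W : X → Matrix m m ℂ} {W0 : Matrix m m ℂ}
    (hW : ∀ x, (W x)ᴴ * W x = 1) (hW0 : W0ᴴ * W0 = 1) (hl : Tendsto W l (𝓝 W0))
    (hr : ∀ᶠ x in l, (W x).charpoly.rootMultiplicity 1 = W0.charpoly.rootMultiplicity 1) :
    Tendsto (fun x => fs gb (W x)) l (𝓝 (fs gb W0)) := by
  classical
  rw [tendsto_iff_ultrafilter]
  intro U hU
  obtain ⟨z, ζ, h1, h2, h3⟩ := root_vec U hW (hl.mono_left hU)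
  have e1 : ∀ x, fs gb (W x) = ∑ i, gb (z x i) := by
    intro x; unfold fs; rw [h1, Multiset.map_map]; rfl
  have e2 : fs gb W0 = ∑ i, gb (ζ i) := by
    unfold fs; rw [h2, Multiset.map_map]; rfl
  simp only [e1, e2]
  have hn : ∀ i, ‖ζ i‖ = 1 := fun i => unit_root hW0 (by
    rw [h2]; exact Multiset.mem_map_of_mem _ (Finset.mem_univ i))
  have c1 : ∀ x, (W x).charpoly.rootMultiplicity 1 = (Finset.univ.filter fun i => 1 = z x i).card := by
    intro x; rw [← Polynomial.count_roots, h1, Multiset.count_map]; rfl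
  have c2 : W0.charpoly.rootMultiplicity 1 = (Finset.univ.filter fun i => 1 = ζ i).card := by
    rw [← Polynomial.count_roots, h2, Multiset.count_map]; rfl
  have hne : ∀ᶠ x in (U : Filter X), ∀ i, 1 ≠ ζ i → 1 ≠ z x i := by
    rw [Filter.eventually_all]
    intro i
    by_cases h : 1 = ζ i
    · simp [h]
    · filter_upwards [(h3 i).eventually_ne (Ne.symm h)] with x hx _
      exact hx.symm
  have hset : ∀ᶠ x in (U : Filter X), ∀ i, 1 = ζ i → 1 = z x i := by
    filter_upwards [hne, hU hr] with x hx hx2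
    rw [c1, c2] at hx2
    have := Finset.eq_of_subset_of_card_le (s := Finset.univ.filter fun i => 1 = z x i) (t := Finset.univ.filter fun i => 1 = ζ i)
      (fun i hi => by
        simp only [Finset.mem_filter, Finset.mem_univ, true_and] at hi ⊢
        by_contra h; exact hx i h hi) hx2.ge
    intro i hi
    have h5 : i ∈ Finset.univ.filter fun i => 1 = z x i := by rw [this]; simp [hi.symm]
    simpa using h5
  refine tendsto_finsetSum _ fun i _ => ?_
  by_cases h : 1 = ζ i
  · refine Tendsto.congr' (f₁ := fun _ => gb (ζ i)) ?_ tendsto_const_nhds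
    filter_upwards [hset] with x hx
    rw [← hx i h, ← h]
  · exact (gb_cont (hn i) (Ne.symm h)).tendsto.comp (h3 i)

lemma fs_exp {W : Matrix m m ℂ} (hW : Wᴴ * W = 1) : Complex.exp (fs gb W * Complex.I) = W.det := by
  rw [Matrix.det_eq_prod_roots_charpoly]
  have hr : ∀ z ∈ W.charpoly.roots, ‖z‖ = 1 := fun z hz => unit_root hW hz
  unfold fs
  generalize W.charpoly.roots = s at *
  induction s using Multiset.induction_on with
  | empty => simp
  | cons a s ih =>
    rw [Multiset.map_cons, Multiset.sum_cons, Multiset.prod_cons]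
    push_cast
    rw [add_mul, Complex.exp_add, gb_exp (hr a (by simp)), ih fun z hz => hr z (by simp [hz])]

lemma fs_gt {W : Matrix m m ℂ} (hW : Wᴴ * W = 1) :
    fs gt' W = fs gb W - 2 * Real.pi * W.charpoly.rootMultiplicity 1 := by
  classical
  have hr : ∀ z ∈ W.charpoly.roots, ‖z‖ = 1 := fun z hz => unit_root hW hz
  rw [← Polynomial.count_roots]
  unfold fs
  generalize W.charpoly.roots = s at *
  induction s using Multiset.induction_on with
  | empty => simp
  | cons a s ih =>
    rw [Multiset.map_cons, Multiset.sum_cons, Multiset.map_cons, Multiset.sum_cons, ih fun z hz => hr z (by simp [hz]), Multiset.count_cons]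
    by_cases h : 1 = a
    · subst h; rw [gt_one, gb_one, if_pos rfl]; push_cast; ring
    · rw [gt_eq_gb (hr a (by simp)) (Ne.symm h), if_neg h]; push_cast; ring
end

/-- the branch function on the symplectic group -/
def Fb {n : ℕ} (a : G n) : ℝ := fs gb (Wm (a : Mat n))

lemma Wm_mult {n : ℕ} (a : G n) : (Wm (a : Mat n)).charpoly.rootMultiplicity 1 + rk a = 2 * n := by
  have := unit_mult (Wm_unitary a)
  rw [Wm_rank] at this; simpa using this

lemma Fb_exp {n : ℕ} (a : G n) : Complex.exp (Fb a * Complex.I) = (Wm (a : Mat n)).det := fs_exp (Wm_unitary a)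

lemma Fb_bs {p q : ℕ} (a : G p) (b : G q) : Fb (bs p q a b) = Fb a + Fb b := by
  unfold Fb fs
  rw [Wm_bs, Matrix.charpoly_reindex, Matrix.charpoly_fromBlocks_zero₁₂, Polynomial.roots_mul, Multiset.map_add, Multiset.sum_add]
  exact mul_ne_zero (Matrix.charpoly_monic _).ne_zero (Matrix.charpoly_monic _).ne_zero

lemma Wdet_bs {p q : ℕ} (a : G p) (b : G q) : (Wm (bs p q a b : Mat (p+q))).det = (Wm (a : Mat p)).det * (Wm (b : Mat q)).det := by
  rw [Wm_bs, Matrix.det_reindex_self, Matrix.det_fromBlocks_zero₂₁]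

open Filter Topology in
lemma Fb_cont {X : Type*} [TopologicalSpace X] {n : ℕ} {f : X → G n} (hf : Continuous f) (hr : ∀ x y, rk (f x) = rk (f y)) :
    Continuous fun x => Fb (f x) := by
  rw [continuous_iff_continuousAt]
  intro x0
  refine fs_tendsto_mult (fun x => Wm_unitary (f x)) (Wm_unitary (f x0)) ?_ ?_
  · exact ((Wm_cont.comp hf).tendsto x0)
  · refine Eventually.of_forall fun x => ?_
    have h1 := Wm_mult (f x)
    have h2 := Wm_mult (f x0)
    rw [hr x x0] at h1
    omega

end

section

/-! lifts and the index -/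
lemma circle_lift {h : ℝ × ℝ → ℂ} (hc : Continuous h) (hn : ∀ x, ‖h x‖ = 1) :
    ∃ φ : ℝ × ℝ → ℝ, Continuous φ ∧ ∀ x, Complex.exp (φ x * Complex.I) = h x := by
  have hU : IsSimplyConnected (univ : Set (ℝ × ℝ)) := by
    have : SimplyConnectedSpace (univ : Set (ℝ × ℝ)) := by
      have : ContractibleSpace (univ : Set (ℝ × ℝ)) := (convex_univ).contractibleSpace ⟨0, trivial⟩
      infer_instance
    exact this
  obtain ⟨f, hf, he⟩ := Complex.exists_continuousOn_eqOn_exp_comp hU isOpen_univ hc.continuousOn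
    (by rintro ⟨x, -, hx⟩; have := hn x; rw [hx] at this; simp at this)
  refine ⟨fun x => (f x).im, ?_, fun x => ?_⟩
  · exact Complex.continuous_im.comp (continuousOn_univ.1 hf)
  · have h1 : Complex.exp (f x) = h x := he (mem_univ x)
    have h2 := hn x
    rw [← h1, Complex.norm_exp, Real.exp_eq_one_iff] at h2
    rw [← h1]; congr 1
    apply Complex.ext <;> simp [h2]

abbrev I := unitInterval

def IsLift {n : ℕ} (γ : I → G n) (φ : I → ℝ) : Prop :=
  Continuous φ ∧ φ 0 = 0 ∧ ∀ t, Complex.exp (φ t * Complex.I) = (Wm (γ t : Mat n)).det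

lemma Wdet_norm {n : ℕ} (a : G n) : ‖(Wm (a : Mat n)).det‖ = 1 := by
  rw [← Fb_exp, Complex.norm_exp_ofReal_mul_I]

lemma family_lift {n : ℕ} {F : ℝ → I → G n} (hF : Continuous (Function.uncurry F)) (h0 : ∀ s, F s 0 = 1) :
    ∃ Φ : ℝ → I → ℝ, Continuous (Function.uncurry Φ) ∧ ∀ s, IsLift (F s) (Φ s) := by
  obtain ⟨φ, h1, h2⟩ := circle_lift (h := fun x : ℝ × ℝ => (Wm (F x.1 (projIcc 0 1 zero_le_one x.2) : Mat n)).det)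
    (by
      have : Continuous fun x : ℝ × ℝ => F x.1 (projIcc 0 1 zero_le_one x.2) :=
        hF.comp (continuous_fst.prodMk ((continuous_projIcc (h := zero_le_one (α := ℝ))).comp continuous_snd))
      exact (Wm_cont.comp this).matrix_det) (fun x => Wdet_norm _)
  refine ⟨fun s t => φ (s, t) - φ (s, 0), ?_, fun s => ⟨?_, ?_, fun t => ?_⟩⟩
  · simp only [Function.uncurry_def]; fun_prop
  · fun_prop
  · simp
  · have e0 : Complex.exp (φ (s, 0) * Complex.I) = 1 := by
      rw [h2]; simp only [projIcc_left]
      have : F s ⟨0, by simp⟩ = 1 := h0 s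
      rw [this, G.coe_one, Wm_one, Matrix.det_one]
    push_cast
    rw [sub_mul, Complex.exp_sub, e0, h2, div_one]
    simp

lemma lift_unique {n : ℕ} {γ : I → G n} {φ ψ : I → ℝ} (h : IsLift γ φ) (h' : IsLift γ ψ) : φ = ψ := by
  have hint : ∀ t, ∃ k : ℤ, φ t - ψ t = k * (2 * Real.pi) := by
    intro t
    have : Complex.exp (φ t * Complex.I) = Complex.exp (ψ t * Complex.I) := by rw [h.2.2, h'.2.2]
    rw [Complex.exp_eq_exp_iff_exists_int] at this
    obtain ⟨k, hk⟩ := this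
    refine ⟨k, ?_⟩
    have h3 := congrArg Complex.im hk
    simp at h3
    linarith
  choose k hk using hint
  have hkc : Continuous k := by
    rw [Int.isClosedEmbedding_coe_real.isEmbedding.continuous_iff]
    have : ((fun n : ℤ => (n:ℝ)) ∘ k) = fun t => (φ t - ψ t) / (2 * Real.pi) := by
      funext t; rw [hk]; have := Real.pi_pos; simp
    rw [this]; exact (h.1.sub h'.1).div_const _
  have hc : ∀ t, k t = k 0 := fun t => PreconnectedSpace.constant inferInstance hkc
  have hk0 : k 0 = 0 := by
    have := hk 0; rw [h.2.1, h'.2.1] at this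
    have hp := Real.pi_pos
    have : (k 0 : ℝ) = 0 := by
      by_contra hne
      have := mul_ne_zero hne (by positivity : (2 * Real.pi) ≠ 0)
      simp_all
    exact_mod_cast this
  funext t
  have := hk t; rw [hc, hk0] at this; simp at this; linarith

open Classical in
def idx {n : ℕ} (γ : I → G n) : ℤ :=
  if h : ∃ φ, IsLift γ φ then round ((h.choose 1 - Fb (γ 1)) / (2 * Real.pi)) + n else 0

lemma idx_eq {n : ℕ} {γ : I → G n} {φ : I → ℝ} (h : IsLift γ φ) :
    (idx γ : ℝ) = (φ 1 - Fb (γ 1)) / (2 * Real.pi) + n := by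
  have hex : ∃ φ, IsLift γ φ := ⟨φ, h⟩
  unfold idx
  rw [dif_pos hex, lift_unique hex.choose_spec h]
  have : Complex.exp (φ 1 * Complex.I) = Complex.exp (Fb (γ 1) * Complex.I) := by rw [h.2.2, Fb_exp]
  rw [Complex.exp_eq_exp_iff_exists_int] at this
  obtain ⟨k, hk⟩ := this
  have h3 := congrArg Complex.im hk
  simp at h3
  have : (φ 1 - Fb (γ 1)) / (2 * Real.pi) = k := by
    have := Real.pi_pos
    rw [h3]; field_simp; ring
  rw [this]; simp

lemma exists_lift {n : ℕ} {γ : I → G n} (hc : Continuous γ) (h0 : γ 0 = 1) : ∃ φ, IsLift γ φ := by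
  obtain ⟨Φ, -, h⟩ := family_lift (F := fun _ => γ) (by simp only [Function.uncurry_def]; fun_prop) (fun _ => h0)
  exact ⟨_, h 0⟩

lemma idx_homotopy {n : ℕ} {F : ℝ → I → G n} (hF : Continuous (Function.uncurry F)) (h0 : ∀ s, F s 0 = 1)
    (hr : ∀ s s', rk (F s 1) = rk (F s' 1)) (s s' : ℝ) : idx (F s) = idx (F s') := by
  obtain ⟨Φ, h1, h2⟩ := family_lift hF h0
  have hc : Continuous fun s => idx (F s) := by
    rw [Int.isClosedEmbedding_coe_real.isEmbedding.continuous_iff]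
    have : ((fun n : ℤ => (n:ℝ)) ∘ fun s => idx (F s)) = fun s => (Φ s 1 - Fb (F s 1)) / (2 * Real.pi) + n := by
      funext t; exact idx_eq (h2 t)
    rw [this]
    have e1 : Continuous fun s => Φ s 1 := h1.comp (continuous_id.prodMk continuous_const)
    have e2 : Continuous fun s => Fb (F s 1) := Fb_cont (hF.comp (continuous_id.prodMk continuous_const)) hr
    fun_prop
  exact PreconnectedSpace.constant inferInstance hc

open Filter Topology in
lemma idx_jump {n : ℕ} {F : ℝ → I → G n} (hF : Continuous (Function.uncurry F)) (h0 : ∀ s, F s 0 = 1) (k : ℤ)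
    (hr : Tendsto (fun s => Fb (F s 1)) (𝓝[>] 0) (𝓝 (Fb (F 0 1) + k * (2 * Real.pi)))) :
    ∀ᶠ s in 𝓝[>] (0:ℝ), idx (F s) = idx (F 0) - k := by
  obtain ⟨Φ, h1, h2⟩ := family_lift hF h0
  have e1 : Continuous fun s => Φ s 1 := h1.comp (continuous_id.prodMk continuous_const)
  have hp := Real.pi_pos
  have ht : Tendsto (fun s => (idx (F s) : ℝ)) (𝓝[>] 0) (𝓝 ((idx (F 0) - k : ℤ) : ℝ)) := by
    have : ((idx (F 0) - k : ℤ) : ℝ) = (Φ 0 1 - (Fb (F 0 1) + k * (2 * Real.pi))) / (2 * Real.pi) + n := by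
      push_cast; rw [idx_eq (h2 0)]; field_simp; ring
    rw [this]
    simp only [fun s => idx_eq (h2 s)]
    exact ((((e1.tendsto 0).mono_left nhdsWithin_le_nhds).sub hr).div_const _).add_const _
  filter_upwards [ht.eventually (Metric.ball_mem_nhds _ one_pos)] with s hs
  rw [Real.dist_eq, ← Int.cast_sub, ← Int.cast_abs] at hs
  have : |idx (F s) - (idx (F 0) - k)| < 1 := by exact_mod_cast hs
  have := abs_lt.1 this
  omega

lemma idx_bs {p q : ℕ} {a : I → G p} {b : I → G q} (ha : Continuous a) (hb : Continuous b) (ha0 : a 0 = 1) (hb0 : b 0 = 1) :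
    idx (fun t => bs p q (a t) (b t)) = idx a + idx b := by
  obtain ⟨φ, h1⟩ := exists_lift ha ha0
  obtain ⟨ψ, h2⟩ := exists_lift hb hb0
  have h3 : IsLift (fun t => bs p q (a t) (b t)) (fun t => φ t + ψ t) := by
    refine ⟨h1.1.add h2.1, by simp [h1.2.1, h2.2.1], fun t => ?_⟩
    rw [Wdet_bs, ← h1.2.2, ← h2.2.2, ← Complex.exp_add]; push_cast; ring_nf
  have : (idx (fun t => bs p q (a t) (b t)) : ℝ) = idx a + idx b := by
    rw [idx_eq h3, idx_eq h1, idx_eq h2, Fb_bs]; push_cast; ring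
  exact_mod_cast this

end

section

/-! two by two analysis -/
lemma Om_one : Om 1 = !![0, -1; 1, 0] := by
  ext i j; fin_cases i <;> fin_cases j <;> simp [Om, prt, sgn', Fin.ext_iff]

lemma det2 (M : Mat 1) : M.det = M 0 0 * M 1 1 - M 0 1 * M 1 0 := Matrix.det_fin_two M

lemma mem_Sp_one (M : Mat 1) : M ∈ Sp 1 ↔ M.det = 1 := by
  rw [mem_Sp_iff]
  have e : M * Om 1 * Mᵀ = M.det • Om 1 := by
    rw [det2, Om_one]
    ext i j; fin_cases i <;> fin_cases j <;> simp [Matrix.mul_apply, Fin.sum_univ_two] <;> ring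
  rw [e]
  constructor
  · intro h
    have := congrFun (congrFun h 1) 0
    simpa [Om_one] using this
  · intro h; rw [h, one_smul]

lemma G1_det (a : G 1) : (a : Mat 1).det = 1 := (mem_Sp_one _).1 a.2

def trr (a : G 1) : ℝ := (a : Mat 1) 0 0 + (a : Mat 1) 1 1
def skw (a : G 1) : ℝ := (a : Mat 1) 0 1 - (a : Mat 1) 1 0

lemma det_sub_one (a : G 1) : ((a : Mat 1) - 1).det = 2 - trr a := by
  have := G1_det a
  rw [det2] at this
  rw [det2]; simp [trr]; linarith

lemma half_angle {z : ℂ} (hz : ‖z‖ = 1) : ∃ p q : ℝ, p ^ 2 + q ^ 2 = 1 ∧ z = (q + p * Complex.I) ^ 2 := by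
  refine ⟨Real.sin (z.arg / 2), Real.cos (z.arg / 2), Real.sin_sq_add_cos_sq _, ?_⟩
  push_cast
  rw [← Complex.exp_mul_I, ← Complex.exp_nat_mul]
  have := Complex.norm_mul_exp_arg_mul_I z
  rw [hz] at this
  conv_lhs => rw [← this]
  simp; congr 1; ring

lemma root_quad (a : G 1) {z : ℂ} (hz : z ∈ (Wm (a : Mat 1)).charpoly.roots) :
    ∃ p q : ℝ, p ^ 2 + q ^ 2 = 1 ∧ z = (q + p * Complex.I) ^ 2 ∧
      (2 + trr a) * p ^ 2 + 2 * skw a * p * q + (2 - trr a) * q ^ 2 = 0 := by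
  have hn := unit_root (Wm_unitary a) hz
  obtain ⟨p, q, h1, h2⟩ := half_angle hn
  refine ⟨p, q, h1, h2, ?_⟩
  rw [Polynomial.mem_roots (Matrix.charpoly_monic _).ne_zero, Polynomial.IsRoot, Matrix.eval_charpoly] at hz
  have h3 : (z • Zp (a : Mat 1) - Zm (a : Mat 1)).det = 0 := by
    have : z • Zp (a : Mat 1) - Zm (a : Mat 1) = (scalar _ z - Wm (a : Mat 1)) * Zp (a : Mat 1) := by
      rw [sub_mul, Wm_mul]; simp [Matrix.scalar_apply, ← smul_eq_diagonal_mul]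
    rw [this, Matrix.det_mul, hz, zero_mul]
  have hd := G1_det a
  rw [det2] at hd
  have h1' : (p:ℂ) ^ 2 + (q:ℂ) ^ 2 = 1 := by exact_mod_cast h1
  have hd' : ((a : Mat 1) 0 0 : ℂ) * ((a : Mat 1) 1 1 : ℂ) - ((a : Mat 1) 0 1 : ℂ) * ((a : Mat 1) 1 0 : ℂ) = 1 := by exact_mod_cast hd
  set w : ℂ := q + p * Complex.I with hw
  have hI := Complex.I_sq
  have hzp : z - 1 = 2 * Complex.I * p * w := by rw [h2, hw]; linear_combination h1' - (p:ℂ)^2 * hI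
  have hzq : z + 1 = 2 * q * w := by rw [h2, hw]; linear_combination (p:ℂ)^2 * hI - h1' 
  have hw0 : w ≠ 0 := by
    intro h0; rw [h2, h0] at hn; simp at hn
  have h4 : z • Zp (a : Mat 1) - Zm (a : Mat 1) = (2 * Complex.I * w) • cm (p • ((a : Mat 1) + 1) + q • (Om 1 * ((a : Mat 1) - 1))) := by
    have : z • Zp (a : Mat 1) - Zm (a : Mat 1) = (z - 1) • cm ((a : Mat 1) + 1) + ((z + 1) * Complex.I) • cm (Om 1 * ((a : Mat 1) - 1)) := by
      unfold Zp Zm; module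
    rw [this, hzp, hzq]
    have hs : ∀ (c : ℝ) (A : Mat 1), cm (c • A) = (c:ℂ) • cm A := by
      intro c A; ext i j; simp
    rw [map_add cm (_ • _), hs, hs]
    module
  rw [h4, Matrix.det_smul, ← RingHom.map_det] at h3
  have h5 : (p • ((a : Mat 1) + 1) + q • (Om 1 * ((a : Mat 1) - 1))).det = 0 := by
    rcases mul_eq_zero.1 h3 with h | h
    · have := pow_ne_zero (Fintype.card (Fin (2*1))) (mul_ne_zero (mul_ne_zero two_ne_zero Complex.I_ne_zero) hw0)
      exact absurd h this
    · exact Complex.ofReal_eq_zero.1 h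
  rw [det2, Om_one] at h5
  simp [Matrix.mul_apply, Fin.sum_univ_two, Matrix.vecMul, vecHead, vecTail] at h5
  have hone : (1 : Mat 1) (Fin.succ 0) 1 = 1 := Matrix.one_apply_eq 1
  rw [hone] at h5
  unfold trr skw
  linear_combination h5 - (p^2 + q^2) * hd

/-- shear times rotation -/
def shr (a : ℝ) : G 1 := ⟨upperTri a, by rw [mem_Sp_one, det2]; simp [upperTri]⟩

lemma shr_coe (a : ℝ) : (shr a : Mat 1) = upperTri a := rfl

lemma rot_one_coe (θ : ℝ) : (rot 1 θ : Mat 1) = !![Real.cos θ, -Real.sin θ; Real.sin θ, Real.cos θ] := by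
  rw [rot_coe, Om_one]; ext i j; fin_cases i <;> fin_cases j <;> simp

lemma shr_rot_coe (a θ : ℝ) : ((shr a * rot 1 θ : G 1) : Mat 1) =
    !![Real.cos θ + a * Real.sin θ, -Real.sin θ + a * Real.cos θ; Real.sin θ, Real.cos θ] := by
  rw [G.coe_mul, rot_one_coe, shr_coe, upperTri]
  ext i j; fin_cases i <;> fin_cases j <;> simp [Matrix.mul_apply, Fin.sum_univ_two]

lemma shr_rot_tr (a θ : ℝ) : trr (shr a * rot 1 θ) = 2 * Real.cos θ + a * Real.sin θ := by
  unfold trr; rw [shr_rot_coe]; simp; ring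
lemma shr_rot_skw (a θ : ℝ) : skw (shr a * rot 1 θ) = a * Real.cos θ - 2 * Real.sin θ := by
  unfold skw; rw [shr_rot_coe]; simp; ring

lemma trig_bds {s : ℝ} (h0 : 0 < s) (h1 : s ≤ 1/10) : 99/100 ≤ Real.cos s ∧ Real.cos s < 1 ∧ 0 < Real.sin s ∧ Real.sin s ≤ 1/10 ∧
    2 * (1 - Real.cos s) < Real.sin s := by
  have a1 := Real.one_sub_sq_div_two_le_cos (x := s)
  have a2 := Real.sin_gt_sub_cube h0
  have a3 := Real.sin_lt h0
  have a4 : 0 < Real.sin s := Real.sin_pos_of_pos_of_lt_pi h0 (by linarith [Real.pi_gt_three])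
  have a5 := Real.sin_sq_add_cos_sq s
  have b : s ^ 2 ≤ 1/10 * s := by nlinarith
  have b3 : s ^ 3 ≤ 1/100 * s := by nlinarith [sq_nonneg s]
  refine ⟨by nlinarith, by nlinarith [Real.cos_le_one s], a4, by linarith, by nlinarith⟩

lemma quad_ne {a s p q : ℝ} (ha : a = 0 ∨ a = 1 ∨ a = -1) (h0 : 0 < s) (h1 : s ≤ 1/10) (hpq : 0 < p * q) (hp : p ^ 2 < 1/100)
    (hn : p ^ 2 + q ^ 2 = 1) :
    (2 + (2 * Real.cos s - a * Real.sin s)) * p ^ 2 + 2 * (a * Real.cos s + 2 * Real.sin s) * p * q +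
      (2 - (2 * Real.cos s - a * Real.sin s)) * q ^ 2 ≠ 0 := by
  obtain ⟨c1, c2, c3, c4, c5⟩ := trig_bds h0 h1
  have hq : 99/100 ≤ q ^ 2 := by linarith
  have hp0 : 0 ≤ p ^ 2 := sq_nonneg p
  have h9 : 5 * p ^ 2 ≤ p * q := by
    have : (5 * p ^ 2) ^ 2 ≤ (p * q) ^ 2 := by nlinarith
    exact abs_le_of_sq_le_sq' this hpq.le |>.2
  generalize Real.cos s = C at *
  generalize Real.sin s = S at *
  rcases ha with rfl | rfl | rfl
  · apply ne_of_gt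
    have : 0 < S * (p * q) := mul_pos c3 hpq
    nlinarith [mul_nonneg (by linarith : 0 ≤ 2 + 2*C) hp0, mul_nonneg (by linarith : 0 ≤ 2 - 2*C) (sq_nonneg q)]
  · apply ne_of_gt
    have : 0 < (C + 2 * S) * (p * q) := mul_pos (by linarith) hpq
    nlinarith [mul_nonneg (by linarith : 0 ≤ 2 + 2*C - S) hp0, mul_nonneg (by linarith : 0 ≤ 2 - 2*C + S) (sq_nonneg q)]
  · apply ne_of_lt
    have : 0 < (C - 2 * S - 1/2) * (p * q) := mul_pos (by linarith) hpq
    nlinarith [mul_nonneg (by linarith : 0 ≤ 5 - (2 + 2*C + S)) hp0, mul_nonneg (by linarith : 0 ≤ -(2 - 2*C - S)) (sq_nonneg q)]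

open Filter Topology in
lemma Fb_left {a : ℝ} (ha : a = 0 ∨ a = 1 ∨ a = -1) :
    Tendsto (fun s => Fb (shr a * rot 1 (-s))) (𝓝[>] 0) (𝓝 (Fb (shr a))) := by
  have hc : Continuous fun s : ℝ => shr a * rot 1 (-s) := by fun_prop
  have ht := ((Wm_cont.comp hc).tendsto 0).mono_left (nhdsWithin_le_nhds (s := Ioi 0))
  have hfin := fs_tendsto_closed (g := gb) (fun s => Wm_unitary _) ht (Sminus_closed (1/50)) (gb_contOn (by norm_num)) ?_
  · simpa [Fb] using hfin
  · have : ∀ᶠ s in 𝓝[>] (0:ℝ), s ∈ Ioc (0:ℝ) (1/10) := Ioc_mem_nhdsGT (by norm_num)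
    filter_upwards [this] with s hs z hz
    obtain ⟨p, q, h1, h2, h3⟩ := root_quad _ hz
    refine ⟨unit_root (Wm_unitary _) hz, ?_⟩
    by_contra hcon
    push Not at hcon
    rw [shr_rot_tr, shr_rot_skw, Real.cos_neg, Real.sin_neg] at h3
    have hre : z.re = q ^ 2 - p ^ 2 := by rw [h2]; simp [sq]
    have him : z.im = 2 * (p * q) := by rw [h2]; simp [sq]; ring
    refine quad_ne (p := p) (q := q) ha hs.1 hs.2 (by linarith) (by linarith) h1 ?_
    linear_combination h3

open Filter Topology in
lemma Fb_right {a : ℝ} (ha : a = 1 ∨ a = -1) :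
    Tendsto (fun s => Fb (shr a * rot 1 s)) (𝓝[>] 0) (𝓝 (Fb (shr a) + (-1 : ℤ) * (2 * Real.pi))) := by
  have hc : Continuous fun s : ℝ => shr a * rot 1 s := by fun_prop
  have ht := ((Wm_cont.comp hc).tendsto 0).mono_left (nhdsWithin_le_nhds (s := Ioi 0))
  have hev : ∀ᶠ s in 𝓝[>] (0:ℝ), s ∈ Ioc (0:ℝ) (1/10) := Ioc_mem_nhdsGT (by norm_num)
  have hrk : rk (shr a) = 1 := by
    unfold rk
    rw [shr_coe]
    have h1 : upperTri a - 1 = vecMulVec ![a, 0] ![0, 1] := by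
      ext i j; fin_cases i <;> fin_cases j <;> simp [upperTri, vecMulVec_apply]
    have h2 := Matrix.rank_vecMulVec_le ![a, 0] ![(0:ℝ), 1]
    rw [h1]
    refine le_antisymm h2 ?_
    by_contra h3
    have h4 : (vecMulVec ![a, 0] ![(0:ℝ), 1]).rank = 0 := by omega
    rw [Matrix.rank, Submodule.finrank_eq_zero, LinearMap.range_eq_bot] at h4
    have h5 := congrFun (LinearMap.congr_fun h4 ![0, 1]) 0
    simp [vecMulVec_apply, Matrix.mulVec, dotProduct, Fin.sum_univ_two] at h5
    rcases ha with rfl | rfl <;> norm_num at h5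
  have h0 : fs gt' (Wm (shr a : Mat 1)) = Fb (shr a) + (-1 : ℤ) * (2 * Real.pi) := by
    rw [fs_gt (Wm_unitary (shr a))]
    have := Wm_mult (shr a)
    rw [hrk] at this
    have : (Wm (shr a : Mat 1)).charpoly.rootMultiplicity 1 = 1 := by omega
    rw [this]; unfold Fb; push_cast; ring
  rw [← h0]
  have key : Tendsto (fun s => fs gt' (Wm ((shr a * rot 1 s : G 1) : Mat 1))) (𝓝[>] 0) (𝓝 (fs gt' (Wm (shr a : Mat 1)))) := by
    have hfin := fs_tendsto_closed (g := gt') (fun s => Wm_unitary _) ht (Splus_closed (1/50)) (gt_contOn (by norm_num)) ?_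
    · simpa using hfin
    · filter_upwards [hev] with s hs z hz
      obtain ⟨p, q, h1, h2, h3⟩ := root_quad _ hz
      refine ⟨unit_root (Wm_unitary _) hz, ?_⟩
      by_contra hcon
      push Not at hcon
      rw [shr_rot_tr, shr_rot_skw] at h3
      have hre : z.re = q ^ 2 - p ^ 2 := by rw [h2]; simp [sq]
      have him : z.im = 2 * (p * q) := by rw [h2]; simp [sq]; ring
      refine quad_ne (a := -a) (p := -p) (q := q) ?_ hs.1 hs.2 (by linarith) (by linarith) (by linarith) ?_
      · rcases ha with rfl | rfl <;> simp
      · linear_combination h3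
  refine key.congr' ?_
  filter_upwards [hev] with s hs
  rw [fs_gt (Wm_unitary _)]
  have hnd : nondeg (shr a * rot 1 s) := by
    unfold nondeg
    rw [det_sub_one, shr_rot_tr]
    obtain ⟨c1, c2, c3, c4, c5⟩ := trig_bds hs.1 hs.2
    rcases ha with rfl | rfl
    · apply ne_of_lt; linarith
    · apply ne_of_gt; linarith
  have := Wm_mult (shr a * rot 1 s)
  rw [rk_of_nondeg hnd] at this
  have : (Wm ((shr a * rot 1 s : G 1) : Mat 1)).charpoly.rootMultiplicity 1 = 0 := by omega
  rw [this]; simp [Fb]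

end

section

/-! existence -/
abbrev pI (x : ℝ) : I := projIcc 0 1 zero_le_one x

@[fun_prop]
lemma pI_cont {X : Type*} [TopologicalSpace X] {f : X → ℝ} (hf : Continuous f) : Continuous fun x => pI (f x) :=
  continuous_projIcc.comp hf

lemma pI_of {x : ℝ} (h : x ∈ Icc (0:ℝ) 1) : pI x = ⟨x, h⟩ := projIcc_of_mem _ h
lemma pI_coe (x : I) : pI (x : ℝ) = x := projIcc_val _ x
lemma pI_ge {x : ℝ} (h : 1 ≤ x) : pI x = 1 := projIcc_of_right_le _ h
lemma pI_le {x : ℝ} (h : x ≤ 0) : pI x = 0 := projIcc_of_le_left _ h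

lemma mulI_mem {τ : ℝ} (hτ : 0 < τ) (t : I) : τ * (t:ℝ) ∈ Icc (0:ℝ) τ :=
  ⟨mul_nonneg hτ.le t.2.1, by nlinarith [t.2.2]⟩

def toP {τ : ℝ} (hτ : 0 < τ) {n : ℕ} (γ : SympPath τ n) (t : I) : G n :=
  ⟨γ.toFun (τ * t), γ.mem_Sp _ (mulI_mem hτ t)⟩

lemma toP_cont {τ : ℝ} (hτ : 0 < τ) {n : ℕ} (γ : SympPath τ n) : Continuous (toP hτ γ) := by
  rw [G.cont_iff]
  exact γ.continuousOn.comp_continuous (f := fun t : I => τ * (t:ℝ)) (by fun_prop) (fun t => mulI_mem hτ t)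

lemma toP_zero {τ : ℝ} (hτ : 0 < τ) {n : ℕ} (γ : SympPath τ n) : toP hτ γ 0 = 1 := by
  apply G.ext; simp [toP, γ.init]

lemma idx_conc {τ : ℝ} (hτ : 0 < τ) (a e : ℝ) (k : ℤ) (γ : SympPath τ 1) (hγ : γ.toFun τ = upperTri a)
    (hl : Filter.Tendsto (fun s => Fb (shr a * rot 1 (e * s))) (nhdsWithin 0 (Ioi 0)) (nhds (Fb (shr a) + k * (2 * Real.pi)))) :
    ∃ θ₀ > (0:ℝ), ∀ θ ∈ Ioc (0:ℝ) θ₀, ∀ β : SympPath τ 1,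
      (∀ t ∈ Icc (0:ℝ) (τ/2), β.toFun t = γ.toFun (2*t)) →
      (∀ t ∈ Icc (τ/2) τ, β.toFun t = γ.toFun τ * rotPath τ (e * θ) (2*t - τ)) →
      idx (toP hτ β) = idx (toP hτ γ) - k := by
  set F : ℝ → I → G 1 := fun s t => toP hτ γ (pI (2 * t)) * rot 1 (e * s * max (2 * (t:ℝ) - 1) 0) with hF
  have hFc : Continuous (Function.uncurry F) := by
    have := toP_cont hτ γ
    simp only [hF, Function.uncurry_def]; fun_prop
  have h1 : toP hτ γ 1 = shr a := by apply G.ext; simp [toP, hγ, shr_coe]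
  have hF0 : ∀ s, F s 0 = 1 := by
    intro s; simp [hF, pI_le, toP_zero]
  have hF1 : ∀ s, F s 1 = shr a * rot 1 (e * s) := by
    intro s
    have : pI (2 * ((1:I):ℝ)) = 1 := pI_ge (by norm_num)
    simp only [hF, this, h1]; norm_num
  have hj := idx_jump hFc hF0 k (by
    simp only [hF1]; simpa using hl)
  have hre : idx (F 0) = idx (toP hτ γ) := by
    have := idx_homotopy (F := fun s t => toP hτ γ (pI ((1 + max s 0) * t))) (by
      have := toP_cont hτ γ
      simp only [Function.uncurry_def]; fun_prop) (fun s => by simp [pI_le, toP_zero]) (by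
      have : ∀ s : ℝ, pI ((1 + max s 0) * ((1:I):ℝ)) = 1 := fun s => pI_ge (by simp)
      intro s s'; simp only [this]) 1 0
    convert this using 2
    · funext t; simp [hF]; norm_num
    · funext t; simp
  rw [hre] at hj
  obtain ⟨θ₀, h0, hθ⟩ := (mem_nhdsGT_iff_exists_Ioc_subset).1 hj
  refine ⟨θ₀, h0, fun θ hh β hb1 hb2 => ?_⟩
  have : idx (F θ) = idx (toP hτ γ) - k := hθ hh
  rw [← this]; congr 1
  funext t
  apply G.ext
  have t0 := t.2.1
  have t1 := t.2.2
  rcases le_total (t:ℝ) (1/2) with ht | ht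
  · have e1 : max (2 * (t:ℝ) - 1) 0 = 0 := max_eq_right (by linarith)
    simp only [hF, e1, mul_zero, rot_zero, mul_one]
    rw [pI_of ⟨by linarith, by linarith⟩]
    simp only [toP]
    rw [hb1 _ ⟨by positivity, by nlinarith⟩]
    congr 1; ring
  · have e1 : max (2 * (t:ℝ) - 1) 0 = 2 * t - 1 := max_eq_left (by linarith)
    simp only [hF, e1]
    rw [pI_ge (by linarith), h1, G.coe_mul]
    change β.toFun (τ * t) = _
    rw [hb2 _ ⟨by nlinarith, by nlinarith⟩, hγ, rot_one_coe, shr_coe]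
    have : (2 * (τ * (t:ℝ)) - τ) * (e * θ) / τ = e * θ * (2 * t - 1) := by field_simp
    unfold rotPath
    rw [this]

lemma diagP_mem {r : ℝ} (hr : 0 < r) : (!![r, 0; 0, r⁻¹] : Mat 1) ∈ Sp 1 := by
  rw [mem_Sp_one, det2]; simp [hr.ne']

def dg (r : ℝ) (hr : 0 < r) : G 1 := ⟨!![r, 0; 0, r⁻¹], diagP_mem hr⟩

lemma W_dg {r : ℝ} (hr : 0 < r) : (Wm (dg r hr : Mat 1)).det = 1 := by
  have h := Wm_mul (dg r hr)
  have hz := Zp_det (dg r hr)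
  have h2 := congrArg Matrix.det h
  rw [Matrix.det_mul] at h2
  have : (Zm (dg r hr : Mat 1)).det = (Zp (dg r hr : Mat 1)).det := by
    have d2 : ∀ M : CMat 1, M.det = M 0 0 * M 1 1 - M 0 1 * M 1 0 := fun M => Matrix.det_fin_two M
    have e : Om 1 * ((dg r hr : Mat 1) - 1) = !![0, 1 - r⁻¹; r - 1, 0] := by
      rw [Om_one]; simp only [dg]
      ext i j; fin_cases i <;> fin_cases j <;> simp [Matrix.mul_apply, Fin.sum_univ_two]
    unfold Zp Zm
    rw [e, d2, d2]
    simp [dg]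
  rw [this] at h2
  exact mul_right_cancel₀ (by simpa using hz) (h2.trans (one_mul _).symm)

lemma Fb_dg_two : Fb (dg 2 two_pos) = 2 * Real.pi := by
  have hp := Real.pi_pos
  have hnd : nondeg (dg 2 two_pos) := by
    unfold nondeg; rw [det_sub_one]; unfold trr; simp [dg]
  have hm := Wm_mult (dg 2 two_pos)
  rw [rk_of_nondeg hnd] at hm
  have hm0 : (Wm (dg 2 two_pos : Mat 1)).charpoly.rootMultiplicity 1 = 0 := by omega
  have hcard : (Wm (dg 2 two_pos : Mat 1)).charpoly.roots.card = 2 := by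
    rw [← (IsAlgClosed.splits _).natDegree_eq_card_roots, Matrix.charpoly_natDegree_eq_dim]; simp
  obtain ⟨z, w, hzw⟩ := Multiset.card_eq_two.1 hcard
  have hb : ∀ z ∈ (Wm (dg 2 two_pos : Mat 1)).charpoly.roots, 0 < gb z ∧ gb z < 2 * Real.pi := by
    intro z hz
    have hn := unit_root (Wm_unitary _) hz
    have h1 : z ≠ 1 := by
      rintro rfl
      rw [← Polynomial.count_roots, Multiset.count_eq_zero] at hm0
      exact hm0 hz
    have h2 := (Complex.mem_slitPlane_iff_arg.1 (slit_of hn h1)).1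
    have h3 := Complex.neg_pi_lt_arg (-z)
    have h4 := lt_of_le_of_ne (Complex.arg_le_pi (-z)) h2
    unfold gb; constructor <;> linarith
  have hF : Fb (dg 2 two_pos) = gb z + gb w := by unfold Fb fs; rw [hzw]; simp
  have hz := hb z (by rw [hzw]; simp)
  have hw := hb w (by rw [hzw]; simp)
  have he := Fb_exp (dg 2 two_pos)
  rw [W_dg, Complex.exp_eq_one_iff] at he
  obtain ⟨k, hk⟩ := he
  have h3 := congrArg Complex.im hk
  simp at h3
  have k1 : (0:ℝ) < k := by
    by_contra h; push Not at h
    nlinarith [mul_nonneg (neg_nonneg.2 h) hp.le]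
  have k2 : (k:ℝ) < 2 := by
    by_contra h; push Not at h
    nlinarith [mul_nonneg (sub_nonneg.2 h) hp.le]
  have : 0 < k := by exact_mod_cast k1
  have : k < 2 := by exact_mod_cast k2
  have : k = 1 := by omega
  rw [h3, this]; simp

theorem cz_exists (τ : ℝ) (hτ : 0 < τ) : CZAxioms τ (fun n γ => idx (toP hτ γ)) := by
  refine ⟨?_, ?_, ?_, ?_, ?_⟩
  · rintro n hn γ₀ γ₁ ⟨δ, hc, hsp, h01, hi, hr⟩
    have hm : ∀ s : ℝ, ((pI s : I) : ℝ) ∈ Icc (0:ℝ) 1 := fun s => (pI s).2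
    have := idx_homotopy (F := fun s t => (⟨δ (pI s) (τ * t), hsp _ (hm s) _ (mulI_mem hτ t)⟩ : G n)) (by
        rw [G.cont_iff]
        exact hc.comp_continuous (f := fun x : ℝ × I => (((pI x.1 : I) : ℝ), τ * (x.2 : ℝ))) (by fun_prop)
          (fun x => ⟨hm _, mulI_mem hτ _⟩)) (fun s => G.ext (by simp [hi _ (hm s)])) (by
        intro s s'; unfold rk; simpa using hr _ (hm s) _ (hm s')) 0 1
    simp only
    convert this using 2
    · congr 1; funext t; apply G.ext; simp only [toP]
      rw [pI_le le_rfl]; exact ((h01 _ (mulI_mem hτ t)).1).symm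
    · congr 1; funext t; apply G.ext; simp only [toP]
      rw [pI_ge le_rfl]; exact ((h01 _ (mulI_mem hτ t)).2).symm
  · intro p q hp hq γ₀ γ₁ γ h
    simp only
    rw [← idx_bs (toP_cont hτ γ₀) (toP_cont hτ γ₁) (toP_zero hτ γ₀) (toP_zero hτ γ₁)]
    congr 1; funext t; apply G.ext
    exact h _ (mulI_mem hτ t)
  · intro a ha γ hγ
    have := idx_conc hτ a (-1) 0 γ hγ (by simpa using Fb_left ha)
    simpa using this
  · intro a ha γ hγ
    have := idx_conc hτ a 1 (-1) γ hγ (by simpa using Fb_right ha)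
    simpa using this
  · intro γ h
    have e : ∀ t, ∃ h, toP hτ γ t = dg (1 + t) h := by
      intro t
      refine ⟨by linarith [t.2.1], G.ext ?_⟩
      simp only [toP, dg]
      rw [h _ (mulI_mem hτ t)]
      have : τ * (t:ℝ) / τ = t := by field_simp
      unfold diagPath; rw [this]
    have hl : IsLift (toP hτ γ) (fun _ => 0) := by
      refine ⟨continuous_const, rfl, fun t => ?_⟩
      obtain ⟨h, e⟩ := e t
      rw [e, W_dg]; simp
    have h1 := idx_eq hl
    have e1 : toP hτ γ 1 = dg 2 two_pos := by
      obtain ⟨h, e⟩ := e 1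
      rw [e]; apply G.ext; simp only [dg]; norm_num
    rw [e1, Fb_dg_two] at h1
    have hp := Real.pi_pos
    have : (0 - 2 * Real.pi) / (2 * Real.pi) + ((1:ℕ):ℝ) = 0 := by field_simp; norm_num
    rw [this] at h1
    exact_mod_cast h1

end

section

/-! difference of two indices -/
structure IsP {n : ℕ} (x : I → G n) : Prop where
  c : Continuous x
  z : x 0 = 1

def conc {n : ℕ} (x : I → G n) (e : ℝ) (t : I) : G n := x (pI (2 * t)) * rot n (e * max (2 * (t:ℝ) - 1) 0)

def twist {n : ℕ} (x : I → G n) (u : ℝ) (t : I) : G n := x t * rot n (u * t)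

lemma dg_cont {X : Type*} [TopologicalSpace X] {f : X → ℝ} (hf : Continuous f) (h : ∀ x, 0 < f x) :
    Continuous fun x => dg (f x) (h x) := by
  rw [G.cont_iff]
  simp only [dg]
  refine continuous_matrix fun i j => ?_
  fin_cases i <;> fin_cases j <;> simp <;> first | exact hf | exact continuous_const | exact hf.inv₀ (fun x => (h x).ne')

@[fun_prop]
lemma shr_cont {X : Type*} [TopologicalSpace X] {f : X → ℝ} (hf : Continuous f) : Continuous fun x => shr (f x) := by
  rw [G.cont_iff]
  simp only [shr_coe, upperTri]
  refine continuous_matrix fun i j => ?_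
  fin_cases i <;> fin_cases j <;> simp <;> first | exact hf | exact continuous_const

structure Dinv (D : ∀ n, (I → G n) → ℤ) : Prop where
  hom : ∀ n, 1 ≤ n → ∀ F : I → I → G n, Continuous (Function.uncurry F) → (∀ s, F s 0 = 1) →
    (∀ s, rk (F s 1) = rk (F 0 1)) → D n (F 0) = D n (F 1)
  add : ∀ p q, 1 ≤ p → 1 ≤ q → ∀ x : I → G p, ∀ y : I → G q, IsP x → IsP y →
    D (p + q) (fun t => bs p q (x t) (y t)) = D p x + D q y
  neg : ∀ a : ℝ, (a = 0 ∨ a = 1 ∨ a = -1) → ∀ x : I → G 1, IsP x → x 1 = shr a →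
    ∃ θ₀ > (0:ℝ), ∀ θ ∈ Ioc (0:ℝ) θ₀, D 1 (conc x (-θ)) = D 1 x
  pos : ∀ a : ℝ, (a = 1 ∨ a = -1) → ∀ x : I → G 1, IsP x → x 1 = shr a →
    ∃ θ₀ > (0:ℝ), ∀ θ ∈ Ioc (0:ℝ) θ₀, D 1 (conc x θ) = D 1 x
  nrm : ∀ x : I → G 1, (∀ t : I, ∃ h, x t = dg (1 + t) h) → D 1 x = 0

variable {D : ∀ n, (I → G n) → ℤ}

lemma Dinv.conc (hD : Dinv D) {x : I → G 1} (hx : IsP x) (e : ℝ) : D 1 (conc x e) = D 1 (twist x e) := by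
  have hc := hx.c
  have := hD.hom 1 le_rfl (fun s t => x (pI ((1 + s) * t)) * rot 1 (e * max ((1 + s) * (t:ℝ) - s) 0))
    (by simp only [Function.uncurry_def]; fun_prop)
    (by intro s; have : max (-(s:ℝ)) 0 = 0 := max_eq_right (by linarith [s.2.1])
        simp [pI_le, hx.z, this])
    (by
      intro s
      have h1 : pI ((1 + (s:ℝ)) * ((1:I):ℝ)) = 1 := pI_ge (by simp [s.2.1])
      have h2 : pI ((1 + ((0:I):ℝ)) * ((1:I):ℝ)) = 1 := pI_ge (by simp)
      simp only [h1, h2]; simp)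
  symm
  convert this using 2
  · funext t; have := t.2.1; simp [twist, max_eq_left this]
  · funext t; simp [_root_.conc]; norm_num

lemma Dinv.homN (hD : Dinv D) {n : ℕ} (hn : 1 ≤ n) (F : I → I → G n) (hF : Continuous (Function.uncurry F)) (h0 : ∀ s, F s 0 = 1)
    (h1 : ∀ s, nondeg (F s 1)) : D n (F 0) = D n (F 1) :=
  hD.hom n hn F hF h0 (fun s => by rw [rk_of_nondeg (h1 s), rk_of_nondeg (h1 0)])

def shp (a : ℝ) (t : I) : G 1 := shr (a * t)

lemma shr_zero : shr 0 = 1 := G.ext (by rw [shr_coe, upperTri]; ext i j; fin_cases i <;> fin_cases j <;> simp)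

lemma shp_isP (a : ℝ) : IsP (shp a) := ⟨by unfold shp; fun_prop, by simp [shp, shr_zero]⟩

lemma dg_shr_rot_tr (r : ℝ) (hr : 0 < r) (a θ : ℝ) : trr (dg r hr * (shr a * rot 1 θ)) =
    r * (Real.cos θ + a * Real.sin θ) + r⁻¹ * Real.cos θ := by
  unfold trr; rw [G.coe_mul, shr_rot_coe]; simp [dg, Matrix.mul_apply, Fin.sum_univ_two]

lemma nd_of_tr {a : G 1} (h : trr a ≠ 2) : nondeg a := by
  unfold nondeg; rw [det_sub_one]; intro h'; apply h; linarith

lemma trig_bds' {θ : ℝ} (h0 : θ ≠ 0) (h1 : |θ| ≤ 1/10) : 99/100 ≤ Real.cos θ ∧ Real.cos θ < 1 ∧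
    2 * (1 - Real.cos θ) < |Real.sin θ| := by
  have := trig_bds (abs_pos.2 h0) h1
  rw [Real.cos_abs] at this
  refine ⟨this.1, this.2.1, ?_⟩
  have h := this.2.2.2.2
  rcases abs_cases θ with ⟨e, _⟩ | ⟨e, _⟩
  · rw [e] at h; exact h.trans_le (le_abs_self _)
  · rw [e, Real.sin_neg] at h; exact h.trans_le (neg_le_abs _)

lemma sin_sgn {θ s : ℝ} (h1 : |θ| ≤ 1/10) (h : 0 ≤ s) (hs : s ≤ 1) : 0 ≤ θ * Real.sin (s * θ) := by
  have hp := Real.pi_gt_three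
  have := abs_le.1 h1
  rcases le_total 0 θ with h0 | h0
  · exact mul_nonneg h0 (Real.sin_nonneg_of_nonneg_of_le_pi (by positivity) (by nlinarith))
  · exact mul_nonneg_of_nonpos_of_nonpos h0 (Real.sin_nonpos_of_nonpos_of_neg_pi_le (by nlinarith) (by nlinarith))

lemma Dinv.hyp (hD : Dinv D) {a θ : ℝ} (ha : a = 1 ∨ a = -1) (h0 : 0 < a * θ) (h1 : |θ| ≤ 1/10) : D 1 (twist (shp a) θ) = 0 := by
  have hθ : θ ≠ 0 := by rintro rfl; simp at h0
  obtain ⟨c1, c2, c3⟩ := trig_bds' hθ h1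
  have hs : ∀ s : ℝ, 0 ≤ s → s ≤ 1 → 0 ≤ a * Real.sin (s * θ) := by
    intro s hs hs1
    have := sin_sgn h1 hs hs1
    rcases ha with rfl | rfl
    · have : 0 < θ := by linarith
      exact le_of_mul_le_mul_left (by linarith) this
    · have : 0 < -θ := by linarith
      exact le_of_mul_le_mul_left (by linarith) this
  have hs1 : |Real.sin θ| = a * Real.sin θ := by
    have := hs 1 zero_le_one le_rfl
    rw [one_mul] at this
    rw [← abs_of_nonneg this, abs_mul]
    rcases ha with rfl | rfl <;> simp
  rw [hs1] at c3
  have hpos : ∀ s t : I, 0 < 1 + (s:ℝ) * t := fun s t => by have := mul_nonneg s.2.1 t.2.1; linarith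
  have hpos' : ∀ s t : I, 0 < 1 + (t:ℝ) := fun s t => by have := t.2.1; linarith
  have e1 := hD.homN le_rfl (fun s t => dg (1 + s * t) (hpos s t) * (shr (a * t) * rot 1 (θ * t)))
    (by
      have : Continuous fun p : I × I => dg (1 + (p.1:ℝ) * p.2) (hpos p.1 p.2) := dg_cont (by fun_prop) _
      simp only [Function.uncurry_def]; fun_prop)
    (by intro s; simp [shr_zero]; exact G.ext (by simp [dg]; ext i j; fin_cases i <;> fin_cases j <;> simp))
    (by
      intro s
      apply nd_of_tr
      rw [dg_shr_rot_tr]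
      apply ne_of_gt
      simp
      have s0 := s.2.1
      have hr : 0 < 1 + (s:ℝ) := by linarith
      have h5 : 2 ≤ (1 + (s:ℝ)) + (1 + (s:ℝ))⁻¹ := by
        have : (1 + (s:ℝ)) + (1 + (s:ℝ))⁻¹ - 2 = s^2 * (1 + (s:ℝ))⁻¹ := by field_simp; ring
        have : 0 ≤ (s:ℝ)^2 * (1 + (s:ℝ))⁻¹ := by positivity
        linarith
      have h6 := mul_le_mul_of_nonneg_right h5 (by linarith : 0 ≤ Real.cos θ)
      have h7 := hs 1 zero_le_one le_rfl
      rw [one_mul] at h7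
      nlinarith [mul_nonneg s0 h7])
  have e2 := hD.homN le_rfl (fun s t => dg (1 + t) (hpos' s t) * (shr (a * (1 - s) * t) * rot 1 ((1 - s) * θ * t)))
    (by
      have : Continuous fun p : I × I => dg (1 + (p.2:ℝ)) (hpos' p.1 p.2) := dg_cont (by fun_prop) _
      simp only [Function.uncurry_def]; fun_prop)
    (by intro s; simp [shr_zero]; exact G.ext (by simp [dg]; ext i j; fin_cases i <;> fin_cases j <;> simp))
    (by
      intro s
      apply nd_of_tr
      rw [dg_shr_rot_tr]
      apply ne_of_gt
      simp
      have s0 := s.2.1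
      have s1 := s.2.2
      have h7 := mul_nonneg (sub_nonneg.2 s1) (hs (1 - s) (by linarith) (by linarith))
      have h8 : 99/100 ≤ Real.cos ((1 - s) * θ) := by
        rw [← Real.cos_abs] at c1 ⊢
        refine c1.trans (Real.cos_le_cos_of_nonneg_of_le_pi (abs_nonneg _) (by linarith [Real.pi_gt_three]) ?_)
        rw [abs_mul, abs_of_nonneg (sub_nonneg.2 s1)]
        nlinarith [abs_nonneg θ]
      norm_num
      nlinarith)
  have e3 : D 1 (fun t => dg (1 + t) (hpos' 1 t) * (shr (a * (1 - (1:I)) * t) * rot 1 ((1 - (1:I)) * θ * t))) = 0 := by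
    apply hD.nrm
    intro t
    refine ⟨hpos' 1 t, ?_⟩
    simp [shr_zero]
  rw [← e2] at e3
  have e4 : D 1 (twist (shp a) θ) = _ := Eq.trans ?_ e1
  · rw [e4, ← e3]; congr 1; funext t; simp
  · congr 1; funext t; simp [twist, shp]
    apply G.ext; simp [dg]; ext i j; fin_cases i <;> fin_cases j <;> simp [Matrix.mul_apply, Fin.sum_univ_two]

lemma Dinv.ell (hD : Dinv D) {a θ : ℝ} (ha : a = 1 ∨ a = -1) (h0 : a * θ < 0) (h1 : |θ| ≤ 1/10) :
    D 1 (twist (shp a) θ) = D 1 (twist (fun _ => 1) θ) := by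
  have hθ : θ ≠ 0 := by rintro rfl; simp at h0
  obtain ⟨c1, c2, c3⟩ := trig_bds' hθ h1
  have h7 := sin_sgn h1 zero_le_one le_rfl
  rw [one_mul] at h7
  have h8 : a * Real.sin θ ≤ 0 := by
    rcases ha with rfl | rfl
    · have : 0 < -θ := by linarith
      exact le_of_mul_le_mul_left (by linarith) this
    · have : 0 < θ := by linarith
      exact le_of_mul_le_mul_left (by linarith) this
  have e1 := hD.homN le_rfl (fun s t => (shr ((1 - s) * a * t) * rot 1 (θ * t)))
    (by simp only [Function.uncurry_def]; fun_prop)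
    (by intro s; simp [shr_zero])
    (by
      intro s
      apply nd_of_tr
      rw [shr_rot_tr]
      apply ne_of_lt
      simp
      nlinarith [mul_nonneg (sub_nonneg.2 s.2.2) (neg_nonneg.2 h8)])
  convert e1 using 2
  · funext t; simp [twist, shp]
  · funext t; simp [twist, shr_zero]

/-- good endpoints -/
def Good (D : ∀ n, (I → G n) → ℤ) {n : ℕ} (M : G n) : Prop :=
  ∃ x : I → G n, IsP x ∧ x 1 = M ∧ ∃ u₀ > (0:ℝ), ∀ u, |u| < u₀ → D n (twist x u) = D n x

lemma twist_zero {n : ℕ} (x : I → G n) : twist x 0 = x := by funext t; simp [twist]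

lemma Dinv.base (hD : Dinv D) : ∃ u₀ > (0:ℝ), u₀ ≤ 1/10 ∧ (∀ a : ℝ, (a = 1 ∨ a = -1) → D 1 (shp a) = 0) ∧ D 1 (fun _ => 1) = 0 ∧
    ∀ u, |u| < u₀ → (D 1 (twist (fun _ => 1) u) = 0 ∧ ∀ a : ℝ, (a = 1 ∨ a = -1) → D 1 (twist (shp a) u) = 0) := by
  have hshp1 : ∀ a, shp a 1 = shr a := fun a => by simp [shp]
  obtain ⟨t1, p1, n1⟩ := hD.neg 1 (by simp) (shp 1) (shp_isP 1) (hshp1 1)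
  obtain ⟨t2, p2, n2⟩ := hD.neg (-1) (by simp) (shp (-1)) (shp_isP _) (hshp1 _)
  obtain ⟨t3, p3, n3⟩ := hD.pos 1 (by simp) (shp 1) (shp_isP 1) (hshp1 1)
  obtain ⟨t4, p4, n4⟩ := hD.pos (-1) (by simp) (shp (-1)) (shp_isP _) (hshp1 _)
  have hone : IsP (fun _ : I => (1 : G 1)) := ⟨continuous_const, rfl⟩
  obtain ⟨t5, p5, n5⟩ := hD.neg 0 (by simp) (fun _ => 1) hone shr_zero.symm
  simp only [hD.conc (shp_isP _)] at n1 n2 n3 n4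
  simp only [hD.conc hone] at n5
  obtain ⟨u, hu⟩ : ∃ u, u = min (1/10) (min t1 (min t2 (min t3 (min t4 t5)))) := ⟨_, rfl⟩
  have hu0 : 0 < u := by rw [hu]; positivity
  have hall : u ≤ 1/10 ∧ u ≤ t1 ∧ u ≤ t2 ∧ u ≤ t3 ∧ u ≤ t4 ∧ u ≤ t5 := by
    rw [hu]; simp
  obtain ⟨b0, b1, b2, b3, b4, b5⟩ := hall
  have z1 : D 1 (shp 1) = 0 := by
    rw [← n3 u ⟨hu0, b3⟩]; exact hD.hyp (by simp) (by linarith) (by rwa [abs_of_pos hu0])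
  have z2 : D 1 (shp (-1)) = 0 := by
    rw [← n2 u ⟨hu0, b2⟩]; exact hD.hyp (by simp) (by linarith) (by rwa [abs_neg, abs_of_pos hu0])
  have r1 : ∀ v ∈ Ioc 0 u, D 1 (twist (fun _ => 1) (-v)) = 0 := by
    intro v hv
    rw [← hD.ell (a := 1) (by simp) (by linarith [hv.1]) (by rw [abs_neg, abs_of_pos hv.1]; linarith [hv.2]),
      n1 v ⟨hv.1, hv.2.trans b1⟩, z1]
  have r2 : ∀ v ∈ Ioc 0 u, D 1 (twist (fun _ => 1) v) = 0 := by
    intro v hv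
    rw [← hD.ell (a := -1) (by simp) (by linarith [hv.1]) (by rw [abs_of_pos hv.1]; linarith [hv.2]),
      n4 v ⟨hv.1, hv.2.trans b4⟩, z2]
  have z0 : D 1 (fun _ => 1) = 0 := by rw [← n5 u ⟨hu0, b5⟩]; exact r1 u ⟨hu0, le_rfl⟩
  refine ⟨u, hu0, b0, ?_, z0, ?_⟩
  · rintro a (rfl | rfl) <;> assumption
  · intro v hv
    rcases lt_trichotomy v 0 with h | rfl | h
    · have hv' : -v ∈ Ioc 0 u := ⟨by linarith, by rw [abs_of_neg h] at hv; exact hv.le⟩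
      have := r1 _ hv'
      rw [neg_neg] at this
      refine ⟨this, ?_⟩
      rintro a (rfl | rfl)
      · have := n1 _ ⟨hv'.1, hv'.2.trans b1⟩; rwa [neg_neg, z1] at this
      · have := n2 _ ⟨hv'.1, hv'.2.trans b2⟩; rwa [neg_neg, z2] at this
    · simp only [twist_zero]
      refine ⟨z0, ?_⟩
      rintro a (rfl | rfl) <;> assumption
    · have hv' : v ∈ Ioc 0 u := ⟨h, by rw [abs_of_pos h] at hv; exact hv.le⟩
      refine ⟨r2 _ hv', ?_⟩
      rintro a (rfl | rfl)
      · have := n3 _ ⟨hv'.1, hv'.2.trans b3⟩; rwa [z1] at this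
      · have := n4 _ ⟨hv'.1, hv'.2.trans b4⟩; rwa [z2] at this

lemma Dinv.good_one (hD : Dinv D) : Good D (1 : G 1) := by
  obtain ⟨u, h0, -, h1, h2, h3⟩ := hD.base
  exact ⟨fun _ => 1, ⟨continuous_const, rfl⟩, rfl, u, h0, fun v hv => by rw [(h3 v hv).1, h2]⟩

lemma Dinv.good_shr (hD : Dinv D) {a : ℝ} (ha : a = 1 ∨ a = -1) : Good D (shr a) := by
  obtain ⟨u, h0, -, h1, h2, h3⟩ := hD.base
  exact ⟨shp a, shp_isP a, by simp [shp], u, h0, fun v hv => by rw [(h3 v hv).2 a ha, h1 a ha]⟩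

lemma Dinv.good_bs (hD : Dinv D) {p q : ℕ} (hp : 1 ≤ p) (hq : 1 ≤ q) {A : G p} {B : G q} (hA : Good D A) (hB : Good D B) :
    Good D (bs p q A B) := by
  obtain ⟨x, hx, rfl, u, hu, h1⟩ := hA
  obtain ⟨y, hy, rfl, v, hv, h2⟩ := hB
  have hxc := hx.c
  have hyc := hy.c
  refine ⟨fun t => bs p q (x t) (y t), ⟨by fun_prop, by simp [hx.z, hy.z, bs_one]⟩, rfl, min u v, by positivity, fun w hw => ?_⟩
  have e : twist (fun t => bs p q (x t) (y t)) w = fun t => bs p q (twist x w t) (twist y w t) := by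
    funext t; simp only [twist]; rw [rot_bs, bs_mul]
  rw [e, hD.add p q hp hq _ _ ?_ ?_, hD.add p q hp hq _ _ hx hy, h1 w (hw.trans_le (min_le_left _ _)), h2 w (hw.trans_le (min_le_right _ _))]
  · exact ⟨by unfold twist; fun_prop, by simp [twist, hx.z]⟩
  · exact ⟨by unfold twist; fun_prop, by simp [twist, hy.z]⟩

end

section

variable {D : ∀ n, (I → G n) → ℤ}
lemma Om_bEquiv (p q : ℕ) : Om (p + q) = Matrix.reindex (bEquiv p q) (bEquiv p q) (Matrix.fromBlocks (Om p) 0 0 (Om q)) := by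
  rw [← bds_Om, bds_eq]

def Rb (n : ℕ) (θ : ℝ) : G (n + n) := ⟨Matrix.reindex (bEquiv n n) (bEquiv n n)
    (Matrix.fromBlocks (Real.cos θ • (1 : Mat n)) (-Real.sin θ • (1 : Mat n)) (Real.sin θ • (1 : Mat n)) (Real.cos θ • (1 : Mat n))), by
  rw [mem_Sp_iff, Om_bEquiv]
  simp only [Matrix.reindex_apply, Matrix.transpose_submatrix, Matrix.submatrix_mul_equiv]
  congr 1
  rw [Matrix.fromBlocks_transpose, Matrix.fromBlocks_multiply, Matrix.fromBlocks_multiply]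
  have h := Real.sin_sq_add_cos_sq θ
  have h1 : Real.cos θ * Real.cos θ + Real.sin θ * Real.sin θ = 1 := by linarith [h, sq (Real.sin θ), sq (Real.cos θ)]
  congr 1 <;> simp [smul_smul, ← add_smul]
  · rw [h1, one_smul]
  · rw [mul_comm (Real.sin θ)]; simp
  · rw [mul_comm (Real.sin θ)]; simp
  · rw [add_comm, h1, one_smul]⟩

@[fun_prop]
lemma Rb_cont {X : Type*} [TopologicalSpace X] (n : ℕ) {f : X → ℝ} (hf : Continuous f) : Continuous fun x => Rb n (f x) := by
  rw [G.cont_iff]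
  exact (Continuous.matrix_fromBlocks (by fun_prop) (by fun_prop) (by fun_prop) (by fun_prop)).matrix_reindex _ _

lemma Rb_zero (n : ℕ) : Rb n 0 = 1 := G.ext (by simp [Rb])

lemma Rb_swap (n : ℕ) (a b : G n) : Rb n (Real.pi / 2) * bs n n a b * (Rb n (Real.pi / 2))⁻¹ = bs n n b a := by
  rw [mul_inv_eq_iff_eq_mul]
  apply G.ext
  have h : (Rb n (Real.pi / 2) : Mat (n + n)) = Matrix.reindex (bEquiv n n) (bEquiv n n) (Matrix.fromBlocks 0 (-1) 1 0) := by
    unfold Rb; simp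
  rw [G.coe_mul, G.coe_mul, bs_coe, bs_coe, bds_eq, bds_eq, h]
  simp only [Matrix.reindex_apply, Matrix.submatrix_mul_equiv, Matrix.fromBlocks_multiply]
  simp

lemma IsP.mul {n : ℕ} {x y : I → G n} (hx : IsP x) (hy : IsP y) : IsP (fun t => x t * y t) :=
  ⟨hx.c.mul hy.c, by simp [hx.z, hy.z]⟩

lemma IsP.twist {n : ℕ} {x : I → G n} (hx : IsP x) (u : ℝ) : IsP (twist x u) := by
  have := hx.c
  exact ⟨by unfold _root_.twist; fun_prop, by simp [_root_.twist, hx.z]⟩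

lemma Dinv.loop (hD : Dinv D) {n : ℕ} (hn : 1 ≤ n) {l x y : I → G n} (hl : IsP l) (hl1 : l 1 = 1) (hx : IsP x) (hy : IsP y) :
    D n (fun t => l t * x t) + D n y = D n x + D n (fun t => l t * y t) := by
  rw [← hD.add n n hn hn _ _ (hl.mul hx) hy, ← hD.add n n hn hn _ _ hx (hl.mul hy)]
  have hlc := hl.c
  have hxc := hx.c
  have hyc := hy.c
  have := hD.hom (n + n) (by omega) (fun s t => Rb n (Real.pi / 2 * s) * bs n n (l t) 1 * (Rb n (Real.pi / 2 * s))⁻¹ * bs n n (x t) (y t))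
    (by simp only [Function.uncurry_def]; fun_prop) (by intro s; simp [hl.z, hx.z, hy.z, bs_one])
    (by intro s; simp [hl1, bs_one])
  convert this using 2
  · funext t; simp [Rb_zero, ← bs_mul]
  · funext t
    have : Real.pi / 2 * ((1 : I) : ℝ) = Real.pi / 2 := by simp
    rw [this, Rb_swap, ← bs_mul, one_mul]

lemma Dinv.good_all (hD : Dinv D) {n : ℕ} (hn : 1 ≤ n) {x : I → G n} (hx : IsP x) (hg : Good D (x 1)) :
    ∃ u₀ > (0:ℝ), ∀ u, |u| < u₀ → D n (twist x u) = D n x := by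
  obtain ⟨b, hb, hb1, u, hu, h⟩ := hg
  refine ⟨u, hu, fun v hv => ?_⟩
  have hl : IsP (fun t => x t * (b t)⁻¹) := ⟨hx.c.mul hb.c.inv, by simp [hx.z, hb.z]⟩
  have := hD.loop hn hl (by simp [hb1]) (hb.twist v) hb
  rw [h v hv] at this
  have e1 : (fun t => x t * (b t)⁻¹ * twist b v t) = twist x v := by funext t; simp [twist, mul_assoc]
  have e2 : (fun t => x t * (b t)⁻¹ * b t) = x := by funext t; simp [mul_assoc]
  rw [e1, e2] at this
  linarith

lemma twist_twist {n : ℕ} (x : I → G n) (u v : ℝ) : twist (twist x u) v = twist x (u + v) := by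
  funext t; simp only [twist]; rw [mul_assoc, ← rot_add]; ring_nf

lemma Dinv.twist_const (hD : Dinv D) {n : ℕ} (hn : 1 ≤ n) (hG : ∀ M : G n, Good D M) {x : I → G n} (hx : IsP x) (u : ℝ) :
    D n (twist x u) = D n x := by
  have : IsLocallyConstant fun u => D n (twist x u) := by
    rw [IsLocallyConstant.iff_eventually_eq]
    intro u
    obtain ⟨u0, h0, h⟩ := hD.good_all hn (hx.twist u) (hG _)
    filter_upwards [Metric.ball_mem_nhds u h0] with v hv
    have := h (v - u) (by simpa [Real.dist_eq] using hv)
    rwa [twist_twist, add_sub_cancel] at this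
  have := this.apply_eq_of_isPreconnected isPreconnected_univ (mem_univ u) (mem_univ 0)
  simpa [twist_zero] using this

open Filter Topology in
lemma range_lim {m : Type*} [Fintype m] [DecidableEq m] {A : ℕ → Matrix m m ℝ} {A0 : Matrix m m ℝ} (hA : Tendsto A atTop (𝓝 A0))
    (hr : ∀ k, (A k).rank = A0.rank) {w : ℕ → m → ℝ} {w0 : m → ℝ} (hw : Tendsto w atTop (𝓝 w0))
    (h : ∀ k, ∃ z, A k *ᵥ z = w k) : ∃ z, A0 *ᵥ z = w0 := by
  by_contra hcon
  push Not at hcon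
  let b := Module.finBasis ℝ (LinearMap.range A0.mulVecLin)
  have hb : ∀ i, ∃ z, A0 *ᵥ z = (b i : m → ℝ) := fun i => by
    obtain ⟨z, hz⟩ := (b i).2
    exact ⟨z, hz⟩
  choose z hz using hb
  have hli : LinearIndependent ℝ (Fin.cons w0 (fun i => A0 *ᵥ z i) : Fin (A0.rank + 1) → m → ℝ) := by
    rw [linearIndependent_finCons]
    constructor
    · have := b.linearIndependent.map' (Submodule.subtype _) (Submodule.ker_subtype _)
      have e : (fun i => A0 *ᵥ z i) = (Submodule.subtype _) ∘ b := funext hz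
      rw [← e] at this; exact this
    · intro hmem
      have : Submodule.span ℝ (Set.range fun i => A0 *ᵥ z i) ≤ LinearMap.range A0.mulVecLin := by
        rw [Submodule.span_le]; rintro _ ⟨i, rfl⟩; exact ⟨z i, rfl⟩
      obtain ⟨y, hy⟩ := this hmem
      exact hcon y hy
  have hten : Tendsto (fun k => (Fin.cons (w k) (fun i => A k *ᵥ z i) : Fin (A0.rank + 1) → m → ℝ)) atTop
      (𝓝 (Fin.cons w0 (fun i => A0 *ᵥ z i))) := by
    rw [tendsto_pi_nhds]
    intro i
    refine Fin.cases ?_ (fun i => ?_) i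
    · simpa using hw
    · simp only [Fin.cons_succ]
      exact ((continuous_id.matrix_mulVec continuous_const).tendsto A0).comp hA
  have hev := hten.eventually (isOpen_setOf_linearIndependent.mem_nhds hli)
  obtain ⟨k, hk⟩ := hev.exists
  have hk : LinearIndependent ℝ (Fin.cons (w k) (fun i => A k *ᵥ z i) : Fin (A0.rank + 1) → m → ℝ) := hk
  have h1 := finrank_span_eq_card hk
  have h2 : Submodule.span ℝ (Set.range (Fin.cons (w k) (fun i => A k *ᵥ z i) : Fin (A0.rank + 1) → m → ℝ)) ≤ LinearMap.range (A k).mulVecLin := by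
    rw [Submodule.span_le]; rintro _ ⟨i, rfl⟩
    refine Fin.cases ?_ (fun i => ?_) i
    · obtain ⟨y, hy⟩ := h k
      exact ⟨y, by simpa using hy⟩
    · exact ⟨z i, rfl⟩
  have h3 := Submodule.finrank_mono h2
  have h4 : Module.finrank ℝ (LinearMap.range (A k).mulVecLin) = A0.rank := hr k
  rw [h1, h4] at h3
  simp at h3

lemma rot_sub_one (n : ℕ) (u : ℝ) : (rot n u : Mat n) - 1 = (2 * Real.sin (u/2)) • ((rot n (u/2) : Mat n) * Om n) := by
  rw [rot_coe, rot_coe, add_mul, smul_mul_assoc, smul_mul_assoc, Om_sq, one_mul]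
  have h1 : Real.cos u = 1 - 2 * Real.sin (u/2) ^ 2 := by
    have := Real.cos_sq' (u/2); have h2 := Real.cos_two_mul (u/2); rw [mul_div_cancel₀ _ two_ne_zero] at h2; linarith
  have h2 : Real.sin u = 2 * Real.sin (u/2) * Real.cos (u/2) := by
    rw [← Real.sin_two_mul, mul_div_cancel₀ _ two_ne_zero]
  rw [h1, h2]; module

open Filter Topology in
lemma lemU {n : ℕ} {M : I → G n} (hM : Continuous M) (hr : ∀ s, rk (M s) = rk (M 0)) :
    ∃ u₀ > (0:ℝ), ∀ s u, 0 < |u| → |u| < u₀ → nondeg (M s * rot n u) := by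
  by_contra hcon
  push Not at hcon
  have h1 : ∀ k : ℕ, ∃ s : I, ∃ u : ℝ, ∃ v : Fin (2*n) → ℝ, 0 < |u| ∧ |u| < min 1 (1/(k+1:ℝ)) ∧ ‖v‖ = 1 ∧
      ((M s : Mat n) * (rot n u : Mat n)) *ᵥ v = v := by
    intro k
    obtain ⟨s, u, h0, h1, h2⟩ := hcon (min 1 (1/(k+1:ℝ))) (by positivity)
    unfold nondeg at h2
    rw [not_not] at h2
    obtain ⟨v, hv, hv2⟩ := Matrix.exists_mulVec_eq_zero_iff.2 h2
    refine ⟨s, u, ‖v‖⁻¹ • v, h0, h1, by rw [norm_smul]; simp [norm_ne_zero_iff.2 hv], ?_⟩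
    rw [Matrix.sub_mulVec, one_mulVec, sub_eq_zero] at hv2
    rw [Matrix.mulVec_smul]; rw [← G.coe_mul, hv2]
  choose s u v hu0 hu1 hv1 hv2 using h1
  have hcomp : IsCompact ((univ : Set I) ×ˢ Metric.sphere (0 : Fin (2*n) → ℝ) 1) := isCompact_univ.prod (isCompact_sphere 0 1)
  obtain ⟨⟨s0, v0⟩, hmem, φ, hφ, hlim⟩ := hcomp.tendsto_subseq (x := fun k => (s k, v k)) (fun k => ⟨mem_univ _, by simpa using hv1 k⟩)
  have hs : Tendsto (fun k => s (φ k)) atTop (𝓝 s0) := (continuous_fst.tendsto _).comp hlim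
  have hv : Tendsto (fun k => v (φ k)) atTop (𝓝 v0) := (continuous_snd.tendsto _).comp hlim
  have hu : Tendsto (fun k => u (φ k)) atTop (𝓝 0) := by
    have : Tendsto u atTop (𝓝 0) :=
      squeeze_zero_norm (fun k => ((hu1 k).trans_le (min_le_right _ _)).le) tendsto_one_div_add_atTop_nhds_zero_nat
    exact this.comp hφ.tendsto_atTop
  have hv0 : v0 ≠ 0 := by
    rintro rfl
    have := hmem.2; simp at this
  have hMs : Tendsto (fun k => ((M (s (φ k)) : G n) : Mat n)) atTop (𝓝 (M s0 : Mat n)) :=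
    ((G.cont_val.comp hM).tendsto s0).comp hs
  have hker : (M s0 : Mat n) *ᵥ v0 = v0 := by
    have hc : Continuous fun p : I × ℝ × (Fin (2*n) → ℝ) => ((M p.1 : Mat n) * (rot n p.2.1 : Mat n)) *ᵥ p.2.2 := by fun_prop
    have ht := (hc.tendsto (s0, 0, v0)).comp (hs.prodMk_nhds (hu.prodMk_nhds hv))
    have ht' : Tendsto (fun k => v (φ k)) atTop (𝓝 (((M s0 : Mat n) * (rot n 0 : Mat n)) *ᵥ v0)) := by
      refine ht.congr fun k => ?_
      exact hv2 (φ k)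
    have := tendsto_nhds_unique ht' hv
    simpa using this
  have hw : Tendsto (fun k => ((M (s (φ k)) : Mat n) * ((rot n (u (φ k) / 2) : Mat n) * Om n)) *ᵥ v (φ k)) atTop
      (𝓝 (((M s0 : Mat n) * Om n) *ᵥ v0)) := by
    have hc : Continuous fun p : I × ℝ × (Fin (2*n) → ℝ) => ((M p.1 : Mat n) * ((rot n (p.2.1/2) : Mat n) * Om n)) *ᵥ p.2.2 := by fun_prop
    have ht := (hc.tendsto (s0, 0, v0)).comp (hs.prodMk_nhds (hu.prodMk_nhds hv))
    simpa [Function.comp_def] using ht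
  obtain ⟨z, hz⟩ := range_lim (A := fun k => (M (s (φ k)) : Mat n) - 1) (A0 := (M s0 : Mat n) - 1) (hMs.sub_const 1)
    (fun k => (hr _).trans (hr _).symm) hw (fun k => by
      have hsn : Real.sin (u (φ k) / 2) ≠ 0 := by
        have a1 := hu0 (φ k)
        have a2 := (hu1 (φ k)).trans_le (min_le_left _ _)
        have hp := Real.pi_gt_three
        have := abs_lt.1 a2
        intro h0
        rw [Real.sin_eq_zero_iff_of_lt_of_lt (by linarith) (by linarith)] at h0
        have : u (φ k) = 0 := by linarith
        rw [this] at a1; simp at a1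
      refine ⟨-(2 * Real.sin (u (φ k) / 2))⁻¹ • v (φ k), ?_⟩
      have e1 : (M (s (φ k)) : Mat n) *ᵥ v (φ k) - v (φ k) =
          - ((2 * Real.sin (u (φ k) / 2)) • (((M (s (φ k)) : Mat n) * ((rot n (u (φ k) / 2) : Mat n) * Om n)) *ᵥ v (φ k))) := by
        conv_lhs => rw [← hv2 (φ k)]
        rw [hv2 (φ k), ← Matrix.smul_mulVec, ← mul_smul_comm, ← rot_sub_one, mul_sub, mul_one, Matrix.sub_mulVec, hv2 (φ k)]
        abel
      rw [Matrix.mulVec_smul, Matrix.sub_mulVec, one_mulVec, e1, smul_neg, neg_smul, neg_neg, smul_smul,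
        inv_mul_cancel₀ (by simpa using hsn), one_smul])
  have hl := (M s0).l
  have key : ∀ y : Fin (2*n) → ℝ, v0 ⬝ᵥ (Om n *ᵥ ((M s0 : Mat n) *ᵥ y)) = v0 ⬝ᵥ (Om n *ᵥ y) := by
    intro y
    have e : ((M s0 : Mat n) *ᵥ v0) ⬝ᵥ (Om n *ᵥ ((M s0 : Mat n) *ᵥ y)) = v0 ⬝ᵥ (((M s0 : Mat n)ᵀ * Om n * (M s0 : Mat n)) *ᵥ y) := by
      rw [← Matrix.mulVec_mulVec, ← Matrix.mulVec_mulVec, ← Matrix.vecMul_transpose, ← Matrix.dotProduct_mulVec]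
    rw [hker, hl] at e
    exact e
  have h5 := congrArg (fun y => v0 ⬝ᵥ (Om n *ᵥ y)) hz
  simp only [Matrix.sub_mulVec, one_mulVec, Matrix.mulVec_sub, dotProduct_sub, key, sub_self, ← Matrix.mulVec_mulVec] at h5
  rw [Matrix.mulVec_mulVec, Om_sq] at h5
  simp only [Matrix.neg_mulVec, one_mulVec, dotProduct_neg] at h5
  exact hv0 (dotProduct_self_eq_zero.1 (by linarith))

lemma Dinv.good_path (hD : Dinv D) {n : ℕ} (hn : 1 ≤ n) {M : I → G n} (hM : Continuous M) (hr : ∀ s, rk (M s) = rk (M 0))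
    (hg : Good D (M 0)) : Good D (M 1) := by
  obtain ⟨x, hx, hx1, u, hu, h⟩ := hg
  obtain ⟨u', hu', h'⟩ := lemU hM hr
  have hxc := hx.c
  have e1 := hD.hom n hn (fun s t => M (s * t) * (M 0)⁻¹ * x t) (by simp only [Function.uncurry_def]; fun_prop)
    (by intro s; simp [hx.z]) (by intro s; simp [hx1, hr])
  refine ⟨fun t => M (1 * t) * (M 0)⁻¹ * x t, ⟨by fun_prop, by simp [hx.z]⟩, by simp [hx1], min u u', by positivity, fun v hv => ?_⟩
  rcases eq_or_ne v 0 with rfl | hv0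
  · rw [twist_zero]
  have hvu := h v (hv.trans_le (min_le_left _ _))
  have e2 := hD.homN hn (fun s t => M (s * t) * (M 0)⁻¹ * x t * rot n (v * t)) (by simp only [Function.uncurry_def]; fun_prop)
    (by intro s; simp [hx.z]) (by
      intro s; simp [hx1]; exact h' s v (abs_pos.2 hv0) (hv.trans_le (min_le_right _ _)))
  change D n (fun t => M (1 * t) * (M 0)⁻¹ * x t * rot n (v * t)) = _
  rw [← e1, ← e2]
  convert hvu using 2
  · funext t; simp [twist]
  · funext t; simp

lemma Dinv.zero (hD : Dinv D) {n : ℕ} (hn : 1 ≤ n) (hG : ∀ M : G n, Good D M) (h1 : D n (fun _ => 1) = 0)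
    {x : I → G n} (hx : IsP x) : D n x = 0 := by
  have hxc := hx.c
  have hP : ∀ r : I, IsP (fun t => x (r * t)) := fun r => ⟨by fun_prop, by simp [hx.z]⟩
  have hlc : IsLocallyConstant fun r : I => D n (fun t => x (r * t)) := by
    rw [IsLocallyConstant.iff_eventually_eq]
    intro r
    obtain ⟨u0, hu0, h⟩ := lemU (M := fun _ : I => x r) continuous_const (fun _ => rfl)
    have hnd := h 0 (u0/2) (by rw [abs_of_pos (by positivity)]; positivity) (by rw [abs_of_pos (by positivity)]; linarith)
    have hop : IsOpen {r : I | nondeg (x r * rot n (u0/2))} := by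
      unfold nondeg
      exact isOpen_ne_fun (Continuous.matrix_det (by fun_prop)) continuous_const
    obtain ⟨ε, hε, hball⟩ := Metric.isOpen_iff.1 hop r hnd
    filter_upwards [Metric.ball_mem_nhds r hε] with r' hr'
    rw [← hD.twist_const hn hG (hP r) (u0/2), ← hD.twist_const hn hG (hP r') (u0/2)]
    have hm : ∀ s : I, (1 - (s:ℝ)) * r' + s * r ∈ Icc (0:ℝ) 1 := fun s =>
      (convex_Icc (0:ℝ) 1) r'.2 r.2 (by linarith [s.2.2]) s.2.1 (by ring)
    have := hD.homN hn (fun s t => x (⟨(1 - (s:ℝ)) * r' + s * r, hm s⟩ * t) * rot n (u0/2 * t))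
      (by simp only [Function.uncurry_def]
          have : Continuous fun p : I × I => (⟨(1 - (p.1:ℝ)) * r' + p.1 * r, hm p.1⟩ : I) := Continuous.subtype_mk (by fun_prop) _
          fun_prop)
      (by intro s; simp [hx.z])
      (by
        intro s
        simp only [mul_one]
        have : (⟨(1 - (s:ℝ)) * r' + s * r, hm s⟩ : I) ∈ Metric.ball r ε := by
          rw [Metric.mem_ball, Subtype.dist_eq, Real.dist_eq] at hr' ⊢
          have : (1 - (s:ℝ)) * r' + s * r - r = (1 - s) * (r' - r) := by ring
          simp only [this, abs_mul]
          have s1 := s.2.2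
          have s0 := s.2.1
          rw [abs_of_nonneg (by linarith : 0 ≤ 1 - (s:ℝ))]
          nlinarith [abs_nonneg ((r':ℝ) - r)]
        have := hball this
        simpa using this)
    convert this using 2
    · funext t; simp [twist]
    · funext t; simp [twist]
  have := hlc.apply_eq_of_isPreconnected isPreconnected_univ (mem_univ (1:I)) (mem_univ 0)
  simp only [one_mul, zero_mul, hx.z] at this
  rw [← h1, ← this]

end

section

variable {D : ∀ n, (I → G n) → ℤ}

/-! Cayley transform and connectedness -/
def ham {n : ℕ} (K : Mat n) : Prop := K * Om n + Om n * Kᵀ = 0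

lemma inv_cont {m : Type*} [Fintype m] [DecidableEq m] {X : Type*} [TopologicalSpace X] {A : X → Matrix m m ℝ} (hA : Continuous A)
    (hd : ∀ x, (A x).det ≠ 0) : Continuous fun x => (A x)⁻¹ := by
  have : (fun x => (A x)⁻¹) = fun x => ((A x).det)⁻¹ • (A x).adjugate := by
    funext x; rw [Matrix.inv_def, Ring.inverse_eq_inv']
  rw [this]
  exact ((Continuous.matrix_det hA).inv₀ hd).smul (Continuous.matrix_adjugate hA)

lemma minv_mul {m : Type*} [Fintype m] [DecidableEq m] {A : Matrix m m ℝ} (h : A.det ≠ 0) : A⁻¹ * A = 1 :=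
  Matrix.nonsing_inv_mul _ (isUnit_iff_ne_zero.2 h)
lemma mmul_inv {m : Type*} [Fintype m] [DecidableEq m] {A : Matrix m m ℝ} (h : A.det ≠ 0) : A * A⁻¹ = 1 :=
  Matrix.mul_nonsing_inv _ (isUnit_iff_ne_zero.2 h)

lemma cancel_l {m : Type*} [Fintype m] [DecidableEq m] {A B C : Matrix m m ℝ} (h : A.det ≠ 0) (e : A * B = A * C) : B = C := by
  have := congrArg (A⁻¹ * ·) e
  simpa [← mul_assoc, minv_mul h] using this

lemma cancel_r {m : Type*} [Fintype m] [DecidableEq m] {A B C : Matrix m m ℝ} (h : A.det ≠ 0) (e : B * A = C * A) : B = C := by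
  have := congrArg (· * A⁻¹) e
  simpa [mul_assoc, mmul_inv h] using this

lemma cay_path {n : ℕ} {X : Type*} [TopologicalSpace X] {K : X → Mat n} (hK : Continuous K) (hh : ∀ x, ham (K x))
    (hd : ∀ x, (1 - K x).det ≠ 0) : ∃ M : X → G n, Continuous M ∧ ∀ x, (1 - K x) * (M x : Mat n) = 1 + K x := by
  have hmem : ∀ x, (1 - K x)⁻¹ * (1 + K x) ∈ Sp n := by
    intro x
    rw [mem_Sp_iff]
    apply cancel_l (hd x)
    have hd' : ((1 - K x)ᵀ).det ≠ 0 := by rw [Matrix.det_transpose]; exact hd x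
    apply cancel_r hd'
    have h := hh x
    unfold ham at h
    rw [transpose_mul, Matrix.transpose_nonsing_inv]
    have : (1 - K x) * ((1 - K x)⁻¹ * (1 + K x) * Om n * ((1 + K x)ᵀ * ((1 - K x)ᵀ)⁻¹)) * (1 - K x)ᵀ =
      ((1 - K x) * (1 - K x)⁻¹) * ((1 + K x) * Om n * (1 + K x)ᵀ) * (((1 - K x)ᵀ)⁻¹ * (1 - K x)ᵀ) := by simp only [mul_assoc]
    rw [this, mmul_inv (hd x), minv_mul hd', one_mul, mul_one, transpose_add, transpose_sub, transpose_one]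
    have h2 : Om n * (K x)ᵀ = - (K x * Om n) := by rw [eq_neg_iff_add_eq_zero, add_comm]; exact h
    simp only [mul_add, add_mul, mul_sub, sub_mul, one_mul, mul_one, mul_assoc, h2]
    abel
  refine ⟨fun x => ⟨(1 - K x)⁻¹ * (1 + K x), hmem x⟩, ?_, ?_⟩
  · refine G.cont_iff.2 ?_
    exact (inv_cont (by fun_prop) hd).mul (by fun_prop)
  · intro x
    show (1 - K x) * ((1 - K x)⁻¹ * (1 + K x)) = _
    rw [← mul_assoc, mmul_inv (hd x), one_mul]

lemma cay_rk {n : ℕ} {K : Mat n} {M : G n} (hd : (1 - K).det ≠ 0) (h : (1 - K) * (M : Mat n) = 1 + K) : rk M = K.rank := by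
  have h1 : (1 - K) * ((M : Mat n) - 1) = (2:ℝ) • K := by
    rw [mul_sub, h, mul_one]; module
  have h2 : rk M = ((1 - K) * ((M : Mat n) - 1)).rank := (Matrix.rank_mul_eq_right_of_isUnit_det _ _ (isUnit_iff_ne_zero.2 hd)).symm
  rw [h2, h1]
  have h3 : (2:ℝ) • K = ((2:ℝ) • (1 : Mat n)) * K := by simp
  rw [h3, Matrix.rank_mul_eq_right_of_isUnit_det]
  rw [Matrix.det_smul]; simp

lemma ham_smul {n : ℕ} {K : Mat n} (h : ham K) (c : ℝ) : ham (c • K) := by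
  unfold ham at *
  rw [transpose_smul, smul_mul_assoc, mul_smul_comm, ← smul_add, h, smul_zero]

/-- inverse Cayley transform -/
lemma inv_cay {n : ℕ} (M : G n) (hd : ((M : Mat n) + 1).det ≠ 0) : ∃ K : Mat n, ham K ∧ K * ((M : Mat n) + 1) = (M : Mat n) - 1 ∧
    (1 - K) * (M : Mat n) = 1 + K ∧ ∀ c : ℝ, (1 - c • K) * ((M : Mat n) + 1) = (1 - c) • (M : Mat n) + (1 + c) • 1 := by
  have hK : ((M : Mat n) - 1) * ((M : Mat n) + 1)⁻¹ * ((M : Mat n) + 1) = (M : Mat n) - 1 := by rw [mul_assoc, minv_mul hd, mul_one]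
  have hcomm : ((M : Mat n) + 1) * ((M : Mat n) - 1) = ((M : Mat n) - 1) * ((M : Mat n) + 1) := by noncomm_ring
  have hK' : ((M : Mat n) + 1) * (((M : Mat n) - 1) * ((M : Mat n) + 1)⁻¹) = (M : Mat n) - 1 := by
    rw [← mul_assoc, hcomm, mul_assoc, mmul_inv hd, mul_one]
  generalize ((M : Mat n) - 1) * ((M : Mat n) + 1)⁻¹ = K at hK hK'
  refine ⟨K, ?_, hK, ?_, fun c => ?_⟩
  · have hd' : (((M : Mat n) + 1)ᵀ).det ≠ 0 := by rw [Matrix.det_transpose]; exact hd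
    apply cancel_l hd
    apply cancel_r hd'
    have e : ((M : Mat n) + 1) * (K * Om n + Om n * Kᵀ) * ((M : Mat n) + 1)ᵀ =
      (((M : Mat n) + 1) * K) * Om n * ((M : Mat n) + 1)ᵀ + ((M : Mat n) + 1) * Om n * (((M : Mat n) + 1) * K)ᵀ := by
      rw [transpose_mul]; noncomm_ring
    rw [e, hK', transpose_add, transpose_sub, transpose_one, mul_zero, zero_mul]
    have := M.r
    simp only [mul_add, add_mul, mul_sub, sub_mul, one_mul, mul_one, this]
    abel
  · apply cancel_r hd
    have e1 : (1 - K) * (M : Mat n) * ((M : Mat n) + 1) = (((M : Mat n) + 1) - K * ((M : Mat n) + 1)) * (M : Mat n) := by noncomm_ring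
    rw [e1, hK, add_mul, hK]; noncomm_ring
  · rw [sub_mul, smul_mul_assoc, hK, one_mul]; module

def Conn {n : ℕ} (M : G n) : Prop := ∃ x : I → G n, IsP x ∧ x 1 = M

lemma Conn.mul {n : ℕ} {M N : G n} (h : Conn M) (h' : Conn N) : Conn (M * N) := by
  obtain ⟨x, hx, rfl⟩ := h
  obtain ⟨y, hy, rfl⟩ := h'
  exact ⟨_, hx.mul hy, rfl⟩

lemma Conn.rot {n : ℕ} (u : ℝ) : Conn (rot n u) := ⟨fun t => _root_.rot n (u * t), ⟨by fun_prop, by simp⟩, by simp⟩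

lemma Conn.cay {n : ℕ} (M : G n) (h : ∀ t : I, ((1 - (t:ℝ)) • (M : Mat n) + (1 + (t:ℝ)) • 1).det ≠ 0) : Conn M := by
  have hd : ((M : Mat n) + 1).det ≠ 0 := by simpa using h 0
  obtain ⟨K, hK, h1, h2, h3⟩ := inv_cay M hd
  have hd1 : ∀ t : I, (1 - (t:ℝ) • K).det ≠ 0 := by
    intro t h0
    have := congrArg Matrix.det (h3 t)
    rw [Matrix.det_mul, h0, zero_mul] at this
    exact h t this.symm
  obtain ⟨x, hx, hx2⟩ := cay_path (K := fun t : I => (t:ℝ) • K) (by fun_prop) (fun t => ham_smul hK _) hd1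
  refine ⟨x, ⟨hx, G.ext ?_⟩, G.ext ?_⟩
  · have := hx2 0
    simpa using this
  · apply cancel_l (hd1 1)
    rw [hx2 1]; simp [h2]

lemma Conn.orth {n : ℕ} (V : G n) (ho : (V : Mat n)ᵀ * (V : Mat n) = 1) (h : ((V : Mat n) + 1).det ≠ 0) : Conn V := by
  apply Conn.cay
  intro t h0
  obtain ⟨x, hx, hx2⟩ := Matrix.exists_mulVec_eq_zero_iff.2 h0
  rw [Matrix.add_mulVec, Matrix.smul_mulVec, Matrix.smul_mulVec, one_mulVec] at hx2
  have e : (1 - (t:ℝ)) • ((V : Mat n) *ᵥ x) = - ((1 + (t:ℝ)) • x) := eq_neg_of_add_eq_zero_left hx2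
  have e2 : ((V : Mat n) *ᵥ x) ⬝ᵥ ((V : Mat n) *ᵥ x) = x ⬝ᵥ x := by
    rw [Matrix.dotProduct_mulVec, Matrix.vecMul_mulVec, ho, Matrix.vecMul_one]
  have e3 := congrArg (fun y => y ⬝ᵥ y) e
  simp only [smul_dotProduct, dotProduct_smul, neg_dotProduct, dotProduct_neg, neg_neg, e2, smul_eq_mul] at e3
  have hp : 0 < x ⬝ᵥ x := by
    rcases lt_or_eq_of_le (show 0 ≤ x ⬝ᵥ x from Finset.sum_nonneg fun i _ => mul_self_nonneg _) with h | h
    · exact h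
    · exact absurd (dotProduct_self_eq_zero.1 h.symm) hx
  have : (t:ℝ) = 0 := by
    have : (t:ℝ) * (x ⬝ᵥ x) = 0 := by linarith
    rcases mul_eq_zero.1 this with h | h
    · exact h
    · exact absurd h hp.ne'
  rw [this] at h0
  simp at h0
  exact h h0


open scoped MatrixOrder in
lemma polar {n : ℕ} (M : G n) : ∃ P : G n, (P : Mat n).PosDef ∧ (P : Mat n) * (P : Mat n) = (M : Mat n)ᵀ * (M : Mat n) := by
  set N : Mat n := (M : Mat n)ᵀ * (M : Mat n) with hN
  have hNp : N.PosDef := by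
    have : N.PosSemidef := by
      have := Matrix.posSemidef_conjTranspose_mul_self (M : Mat n)
      simpa [conjTranspose_eq_transpose_of_trivial] using this
    rw [this.posDef_iff_det_ne_zero, hN, Matrix.det_mul, Matrix.det_transpose]
    have := M.det_isUnit.ne_zero
    exact mul_ne_zero this this
  have hN0 : 0 ≤ N := hNp.posSemidef.nonneg
  have hPP := CFC.sqrt_mul_sqrt_self N hN0
  have hPp : (CFC.sqrt N).PosDef := (IsStrictlyPositive.sqrt N hNp.isStrictlyPositive).posDef
  have hinv := Matrix.PosSemidef.inv_sqrt hNp.posSemidef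
  set P := CFC.sqrt N with hP
  have hPt : Pᵀ = P := by
    have := hPp.isHermitian
    rwa [Matrix.IsHermitian, conjTranspose_eq_transpose_of_trivial] at this
  have hNO : N * Om n * N = Om n := by
    have h1 := M.l
    have h2 := M.r
    calc N * Om n * N = (M : Mat n)ᵀ * ((M : Mat n) * Om n * (M : Mat n)ᵀ) * (M : Mat n) := by rw [hN]; noncomm_ring
      _ = _ := by rw [h2, h1]
  have hNi : N⁻¹ = (Om n)ᵀ * N * Om n := by
    apply Matrix.inv_eq_right_inv
    rw [Om_tr]
    calc N * (-Om n * N * Om n) = -((N * Om n * N) * Om n) := by noncomm_ring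
      _ = 1 := by rw [hNO, Om_sq, neg_neg]
  have hOO : Om n * (Om n)ᵀ = 1 := by rw [Om_tr, mul_neg, Om_sq, neg_neg]
  have hQ : CFC.sqrt N⁻¹ = (Om n)ᵀ * P * Om n := by
    apply CFC.sqrt_unique
    · calc (Om n)ᵀ * P * Om n * ((Om n)ᵀ * P * Om n) = (Om n)ᵀ * P * (Om n * (Om n)ᵀ) * P * Om n := by noncomm_ring
        _ = (Om n)ᵀ * (P * P) * Om n := by rw [hOO]; noncomm_ring
        _ = _ := by rw [hPP, hNi]
    · rw [Matrix.nonneg_iff_posSemidef]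
      have := hPp.posSemidef.conjTranspose_mul_mul_same (Om n)
      rwa [conjTranspose_eq_transpose_of_trivial] at this
  rw [hQ] at hinv
  have h1 : P * ((Om n)ᵀ * P * Om n) = 1 := by
    rw [← hinv]; exact mmul_inv hPp.det_pos.ne'
  have h2 : P * Om n * P = Om n := by
    rw [Om_tr] at h1
    have h3 := congrArg (· * Om n) h1
    simp only [one_mul] at h3
    calc P * Om n * P = -(P * Om n * P * (-1)) := by noncomm_ring
      _ = P * (-Om n * P * Om n) * Om n := by rw [← Om_sq]; noncomm_ring
      _ = Om n := h3
  exact ⟨⟨P, by rw [mem_Sp_iff, hPt, h2]⟩, hPp, hPP⟩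

lemma rot_tr_mul (n : ℕ) (u : ℝ) : (rot n u : Mat n)ᵀ * (rot n u : Mat n) = 1 := by
  have : (rot n u : Mat n)ᵀ = (rot n (-u) : Mat n) := by
    rw [rot_coe, rot_coe, transpose_add, transpose_smul, transpose_smul, Om_tr, Real.cos_neg, Real.sin_neg, transpose_one]; module
  rw [this, ← G.coe_mul, ← rot_add]; simp

lemma conn_all {n : ℕ} (M : G n) : Conn M := by
  obtain ⟨P, hP, hPP⟩ := polar M
  have hPt : (P : Mat n)ᵀ = P := by
    have := hP.isHermitian
    rwa [Matrix.IsHermitian, conjTranspose_eq_transpose_of_trivial] at this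
  have hPc : Conn P := by
    apply Conn.cay
    intro t
    have h1 : ((1 + (t:ℝ)) • (1 : Mat n)).PosDef := Matrix.PosDef.one.smul (by have := t.2.1; linarith)
    have h2 : ((1 - (t:ℝ)) • (P : Mat n)).PosSemidef := hP.posSemidef.smul (by have := t.2.2; linarith)
    exact (h1.posSemidef_add h2).det_pos.ne'
  set U : G n := M * P⁻¹ with hU
  have hUo : (U : Mat n)ᵀ * (U : Mat n) = 1 := by
    rw [hU, G.coe_mul, transpose_mul]
    have a1 := P.mul_val_inv
    have a2 := congrArg Matrix.transpose a1
    rw [transpose_mul, hPt, transpose_one] at a2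
    calc ((P⁻¹ : G n) : Mat n)ᵀ * (M : Mat n)ᵀ * ((M : Mat n) * ((P⁻¹ : G n) : Mat n))
        = ((P⁻¹ : G n) : Mat n)ᵀ * ((M : Mat n)ᵀ * (M : Mat n)) * ((P⁻¹ : G n) : Mat n) := by noncomm_ring
      _ = (((P⁻¹ : G n) : Mat n)ᵀ * P) * ((P : Mat n) * ((P⁻¹ : G n) : Mat n)) := by rw [← hPP]; noncomm_ring
      _ = 1 := by rw [a1, a2, one_mul]
  obtain ⟨u0, hu0, h⟩ := lemU (M := fun _ : I => U * rot n Real.pi) continuous_const (fun _ => rfl)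
  have hnd := h 0 (u0/2) (by rw [abs_of_pos (by positivity)]; positivity) (by rw [abs_of_pos (by positivity)]; linarith)
  have hV : Conn (U * rot n (u0/2)) := by
    apply Conn.orth
    · rw [G.coe_mul, transpose_mul]
      calc (rot n (u0/2) : Mat n)ᵀ * (U : Mat n)ᵀ * ((U : Mat n) * (rot n (u0/2) : Mat n))
        = (rot n (u0/2) : Mat n)ᵀ * ((U : Mat n)ᵀ * (U : Mat n)) * (rot n (u0/2) : Mat n) := by noncomm_ring
        _ = 1 := by rw [hUo, mul_one, rot_tr_mul]
    · intro h0
      apply hnd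
      have : ((U * rot n Real.pi * rot n (u0/2) : G n) : Mat n) - 1 = -(((U * rot n (u0/2) : G n) : Mat n) + 1) := by
        simp only [G.coe_mul]
        have : (rot n Real.pi : Mat n) = -1 := by rw [rot_coe]; simp
        rw [this]; noncomm_ring
      rw [this, Matrix.det_neg, h0, mul_zero]
  have e : M = U * rot n (u0/2) * rot n (-(u0/2)) * P := by
    rw [mul_assoc U, ← rot_add, hU]; simp
  rw [e]
  exact (hV.mul (Conn.rot _)).mul hPc

lemma Dinv.good_nondeg (hD : Dinv D) {n : ℕ} (hn : 1 ≤ n) {M : G n} (h : nondeg M) : Good D M := by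
  obtain ⟨x, hx, rfl⟩ := conn_all M
  have hxc := hx.c
  have hop : IsOpen {u : ℝ | nondeg (x 1 * rot n u)} := by
    unfold nondeg
    exact isOpen_ne_fun (Continuous.matrix_det (by fun_prop)) continuous_const
  obtain ⟨ε, hε, hball⟩ := Metric.isOpen_iff.1 hop 0 (by simpa using h)
  refine ⟨x, hx, rfl, ε, hε, fun u hu => ?_⟩
  have := hD.homN hn (fun s t => x t * rot n (u * (1 - s) * t)) (by simp only [Function.uncurry_def]; fun_prop)
    (by intro s; simp [hx.z]) (by
      intro s
      have : u * (1 - (s:ℝ)) ∈ Metric.ball (0:ℝ) ε := by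
        rw [mem_ball_zero_iff, Real.norm_eq_abs, abs_mul, abs_of_nonneg (by linarith [s.2.2] : 0 ≤ 1 - (s:ℝ))]
        have := s.2.1
        nlinarith [abs_nonneg u]
      have := hball this
      simpa using this)
  convert this using 2
  · funext t; simp [twist]
  · funext t; simp

lemma Dinv.good_conj (hD : Dinv D) {n : ℕ} (hn : 1 ≤ n) {M : G n} (h : Good D M) (g : G n) : Good D (g * M * g⁻¹) := by
  obtain ⟨x, hx, rfl⟩ := conn_all g
  have hxc := hx.c
  exact hD.good_path hn (M := fun s => x s * M * (x s)⁻¹) (by fun_prop) (fun s => by rw [rk_conj, rk_conj]) (by simpa [hx.z] using h)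

end

section

variable {D : ∀ n, (I → G n) → ℤ}

/-! Unipotent matrices -/
lemma cay_one {n : ℕ} {K : Mat n} (hh : ham K) (hd : (1 - K).det ≠ 0) : ∃ M : G n, (1 - K) * (M : Mat n) = 1 + K := by
  obtain ⟨M, _, h⟩ := cay_path (X := Unit) (K := fun _ => K) continuous_const (fun _ => hh) (fun _ => hd)
  exact ⟨M (), h ()⟩

lemma ham_sym {n : ℕ} {S : Mat n} (h : Sᵀ = S) : ham (S * Om n) := by
  unfold ham
  rw [transpose_mul, h, Om_tr, mul_assoc, Om_sq]
  have : Om n * (-Om n * S) = -((Om n * Om n) * S) := by noncomm_ring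
  rw [this, Om_sq]; noncomm_ring

lemma Dinv.good_shr' (hD : Dinv D) (a : ℝ) : Good D (shr a) := by
  have key : ∀ r : ℝ, ∀ hr : 0 < r, ∀ b : ℝ, dg r hr * shr b * (dg r hr)⁻¹ = shr (r ^ 2 * b) := by
    intro r hr b
    rw [mul_inv_eq_iff_eq_mul]
    apply G.ext
    rw [G.coe_mul, G.coe_mul, shr_coe, shr_coe, upperTri, upperTri, dg]
    have := hr.ne'
    ext i j; fin_cases i <;> fin_cases j <;> simp [Matrix.mul_apply, Fin.sum_univ_two]
    field_simp
  rcases lt_trichotomy a 0 with h | rfl | h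
  · have := hD.good_conj le_rfl (hD.good_shr (a := -1) (Or.inr rfl)) (dg (Real.sqrt (-a)) (Real.sqrt_pos.2 (by linarith)))
    rw [key, Real.sq_sqrt (by linarith)] at this
    simpa using this
  · rw [shr_zero]; exact hD.good_one
  · have := hD.good_conj le_rfl (hD.good_shr (a := 1) (Or.inl rfl)) (dg (Real.sqrt a) (Real.sqrt_pos.2 h))
    rw [key, Real.sq_sqrt h.le] at this
    simpa using this

lemma Dinv.good_diag1 (hD : Dinv D) (d : Fin (2 * 1) → ℝ) {M : G 1} (hd : (1 - Matrix.diagonal d * Om 1).det ≠ 0)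
    (h : (1 - Matrix.diagonal d * Om 1) * (M : Mat 1) = 1 + Matrix.diagonal d * Om 1) : Good D M := by
  obtain ⟨a, ha⟩ : ∃ a, a = d 0 := ⟨_, rfl⟩
  obtain ⟨b, hb⟩ : ∃ b, b = d 1 := ⟨_, rfl⟩
  have hK : Matrix.diagonal d * Om 1 = !![0, -a; b, 0] := by
    rw [Om_one, ha, hb]; ext i j; fin_cases i <;> fin_cases j <;> simp [Matrix.mul_apply, Fin.sum_univ_two, Matrix.diagonal]
  rw [hK] at hd h
  by_cases hb0 : b = 0
  · rw [hb0] at hd h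
    have : M = shr (-2 * a) := by
      apply G.ext
      apply cancel_l hd
      rw [h, shr_coe, upperTri]
      ext i j; fin_cases i <;> fin_cases j <;> simp [Matrix.mul_apply, Fin.sum_univ_two]; ring
    rw [this]; exact hD.good_shr' _
  by_cases ha0 : a = 0
  · rw [ha0] at hd h
    have : M = rot 1 (Real.pi / 2) * shr (-2 * b) * (rot 1 (Real.pi / 2))⁻¹ := by
      rw [eq_mul_inv_iff_mul_eq]
      apply G.ext
      apply cancel_l hd
      rw [G.coe_mul, G.coe_mul, ← mul_assoc, h, shr_coe, upperTri, rot_one_coe]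
      ext i j; fin_cases i <;> fin_cases j <;> simp [Matrix.mul_apply, Fin.sum_univ_two]; ring
    rw [this]
    exact hD.good_conj le_rfl (hD.good_shr' _) _
  · apply hD.good_nondeg le_rfl
    intro h0
    have e : (1 - !![0, -a; b, 0]) * ((M : Mat 1) - 1) = (2:ℝ) • !![0, -a; b, 0] := by
      rw [mul_sub, h, Matrix.mul_one]; module
    have := congrArg Matrix.det e
    rw [Matrix.det_mul, h0, mul_zero] at this
    rw [Matrix.det_smul] at this
    simp [Matrix.det_fin_two] at this
    tauto

lemma bds_diag (p q : ℕ) (d : Fin (2 * (p + q)) → ℝ) :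
    Matrix.diagonal d = blockDiagSum p q (Matrix.diagonal fun i => d (bEquiv p q (Sum.inl i))) (Matrix.diagonal fun i => d (bEquiv p q (Sum.inr i))) := by
  rw [bds_eq, Matrix.fromBlocks_diagonal]
  simp only [Matrix.reindex_apply]
  rw [Matrix.submatrix_diagonal_equiv]
  congr 1
  funext i
  obtain ⟨j, rfl⟩ := (bEquiv p q).surjective i
  rcases j with j | j <;> simp

lemma Dinv.good_diag (hD : Dinv D) {n : ℕ} (hn : 1 ≤ n) : ∀ (d : Fin (2 * n) → ℝ) {M : G n} (hd : (1 - Matrix.diagonal d * Om n).det ≠ 0)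
    (h : (1 - Matrix.diagonal d * Om n) * (M : Mat n) = 1 + Matrix.diagonal d * Om n), Good D M := by
  induction n, hn using Nat.le_induction with
  | base => exact fun d M hd h => hD.good_diag1 d hd h
  | succ n hn ih =>
    intro d M hd h
    have e := bds_diag n 1 d
    set d1 := fun i => d (bEquiv n 1 (Sum.inl i))
    set d2 := fun i => d (bEquiv n 1 (Sum.inr i))
    have e1 : 1 - Matrix.diagonal d * Om (n + 1) = blockDiagSum n 1 (1 - Matrix.diagonal d1 * Om n) (1 - Matrix.diagonal d2 * Om 1) := by
      rw [e, ← bds_Om, ← bds_mul, ← bds_one n 1, sub_eq_add_neg, sub_eq_add_neg, sub_eq_add_neg, bds_add]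
      congr 1
      rw [← neg_one_smul ℝ, ← bds_smul]; simp
    have e2 : 1 + Matrix.diagonal d * Om (n + 1) = blockDiagSum n 1 (1 + Matrix.diagonal d1 * Om n) (1 + Matrix.diagonal d2 * Om 1) := by
      rw [e, ← bds_Om, ← bds_mul, ← bds_one n 1, bds_add]
    have hd' := hd
    rw [e1, bds_det] at hd'
    obtain ⟨A, hA⟩ := cay_one (ham_sym (S := Matrix.diagonal d1) (by simp)) (left_ne_zero_of_mul hd')
    obtain ⟨B, hB⟩ := cay_one (ham_sym (S := Matrix.diagonal d2) (by simp)) (right_ne_zero_of_mul hd')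
    have : M = bs n 1 A B := by
      apply G.ext
      apply cancel_l hd
      rw [h, bs_coe, e1, e2, ← bds_mul, hA, hB]
    rw [this]
    exact hD.good_bs hn le_rfl (ih d1 (left_ne_zero_of_mul hd') hA) (hD.good_diag1 d2 (right_ne_zero_of_mul hd') hB)

lemma path_diag {m : Type*} [Fintype m] [DecidableEq m] (R : Matrix m m ℝ) (hR : R.det ≠ 0) :
    ∃ F : I → Matrix m m ℝ, Continuous F ∧ (∃ d, F 0 = Matrix.diagonal d) ∧ F 1 = R ∧ ∀ s, (F s).det ≠ 0 := by
  refine Matrix.diagonal_transvection_induction_of_det_ne_zero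
    (fun R => ∃ F : I → Matrix m m ℝ, Continuous F ∧ (∃ d, F 0 = Matrix.diagonal d) ∧ F 1 = R ∧ ∀ s, (F s).det ≠ 0) R hR ?_ ?_ ?_
  · intro d hd
    exact ⟨fun _ => Matrix.diagonal d, continuous_const, ⟨d, rfl⟩, rfl, fun _ => hd⟩
  · intro t
    refine ⟨fun s => Matrix.transvection t.i t.j (t.c * s), ?_, ⟨1, by simp⟩, by simp [Matrix.TransvectionStruct.toMatrix], ?_⟩
    · have : (fun s : I => Matrix.transvection t.i t.j (t.c * s)) = fun s : I => 1 + (s:ℝ) • Matrix.single t.i t.j t.c := by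
        funext s; simp [Matrix.transvection, Matrix.smul_single, mul_comm]
      rw [this]; fun_prop
    · intro s; rw [Matrix.det_transvection_of_ne _ _ t.hij]; simp
  · rintro A B _ _ ⟨F, hF, ⟨d, hd⟩, hF1, hF2⟩ ⟨F', hF', ⟨d', hd'⟩, hF1', hF2'⟩
    exact ⟨fun s => F s * F' s, hF.mul hF', ⟨fun i => d i * d' i, by simp only [hd, hd', Matrix.diagonal_mul_diagonal]⟩, by simp only [hF1, hF1'],
      fun s => by rw [Matrix.det_mul]; exact mul_ne_zero (hF2 s) (hF2' s)⟩

lemma spec_sym {m : Type*} [Fintype m] [DecidableEq m] (S : Matrix m m ℝ) (hS : Sᵀ = S) :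
    ∃ (R : Matrix m m ℝ) (d : m → ℝ), R.det ≠ 0 ∧ S = Rᵀ * Matrix.diagonal d * R := by
  have hH : S.IsHermitian := by rw [Matrix.IsHermitian, conjTranspose_eq_transpose_of_trivial, hS]
  have h := hH.spectral_theorem
  rw [Unitary.conjStarAlgAut_apply] at h
  refine ⟨(hH.eigenvectorUnitary : Matrix m m ℝ)ᵀ, hH.eigenvalues, ?_, ?_⟩
  · rw [Matrix.det_transpose]
    have := (Unitary.mem_iff.1 hH.eigenvectorUnitary.2).2
    intro h0
    have h1 := congrArg Matrix.det this
    rw [Matrix.det_mul, h0] at h1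
    simp at h1
  · rw [transpose_transpose]
    conv_lhs => rw [h]
    rw [star_eq_conjTranspose, conjTranspose_eq_transpose_of_trivial]
    rfl

open Filter Topology in
lemma Dinv.good_sym (hD : Dinv D) {n : ℕ} (hn : 1 ≤ n) (S : Mat n) (hS : Sᵀ = S) :
    ∃ e > (0:ℝ), ∀ M : G n, (1 - e • (S * Om n)).det ≠ 0 → (1 - e • (S * Om n)) * (M : Mat n) = 1 + e • (S * Om n) → Good D M := by
  obtain ⟨R, d, hR, hRS⟩ := spec_sym S hS
  obtain ⟨F, hF, ⟨d', hd'⟩, hF1, hF2⟩ := path_diag R hR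
  have hev : ∀ᶠ e in 𝓝 (0:ℝ), ∀ s ∈ (univ : Set I), (1 - e • (((F s)ᵀ * Matrix.diagonal d * F s) * Om n)).det ≠ 0 := by
    apply isCompact_univ.eventually_forall_of_forall_eventually
    intro s _
    have hc : Continuous fun z : ℝ × I => (1 - z.1 • (((F z.2)ᵀ * Matrix.diagonal d * F z.2) * Om n)).det := by
      apply Continuous.matrix_det; fun_prop
    exact hc.continuousAt.eventually_ne (by simp)
  obtain ⟨ε, hε, hb⟩ := Metric.eventually_nhds_iff.1 hev
  have hb := hb (y := ε/2) (by rw [Real.dist_eq, sub_zero, abs_of_pos (by positivity)]; linarith)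
  refine ⟨ε/2, by positivity, fun M hdM hM => ?_⟩
  have hsym : ∀ s, ((F s)ᵀ * Matrix.diagonal d * F s)ᵀ = (F s)ᵀ * Matrix.diagonal d * F s := by
    intro s; simp [transpose_mul, mul_assoc]
  obtain ⟨N, hN, hN2⟩ := cay_path (K := fun s => (ε/2) • (((F s)ᵀ * Matrix.diagonal d * F s) * Om n)) (by fun_prop)
    (fun s => ham_smul (ham_sym (hsym s)) _) (fun s => hb s (mem_univ _))
  have hrk : ∀ s, rk (N s) = (Matrix.diagonal d).rank := by
    intro s
    rw [cay_rk (hb s (mem_univ _)) (hN2 s)]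
    have e : (ε/2) • (((F s)ᵀ * Matrix.diagonal d * F s) * Om n) = (F s)ᵀ * Matrix.diagonal d * (F s * ((ε/2) • Om n)) := by
      simp [mul_assoc]
    have hO : (Om n).det ≠ 0 := by
      intro h0
      have := congrArg Matrix.det (Om_sq n)
      rw [Matrix.det_mul, h0, Matrix.det_neg] at this
      simp at this
    rw [e, Matrix.rank_mul_eq_left_of_isUnit_det, Matrix.rank_mul_eq_right_of_isUnit_det]
    · rw [Matrix.det_transpose]; exact isUnit_iff_ne_zero.2 (hF2 s)
    · rw [Matrix.det_mul, Matrix.det_smul]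
      exact isUnit_iff_ne_zero.2 (mul_ne_zero (hF2 s) (mul_ne_zero (pow_ne_zero _ (by positivity)) hO))
  have hM1 : M = N 1 := by
    apply G.ext; apply cancel_l (hb 1 (mem_univ _))
    rw [hN2 1, hF1, ← hRS, hM]
  rw [hM1]
  apply hD.good_path hn hN (fun s => by rw [hrk, hrk])
  have e0 : (ε/2) • (((F 0)ᵀ * Matrix.diagonal d * F 0) * Om n) = Matrix.diagonal (fun i => (ε/2) * (d' i * d i * d' i)) * Om n := by
    rw [hd', Matrix.diagonal_transpose, Matrix.diagonal_mul_diagonal, Matrix.diagonal_mul_diagonal, ← smul_mul_assoc, ← Matrix.diagonal_smul]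
    rfl
  have h0 := hN2 0
  have hb0 := hb 0 (mem_univ _)
  simp only [e0] at h0 hb0
  exact hD.good_diag hn _ hb0 h0

lemma Dinv.good_unip (hD : Dinv D) {n : ℕ} (hn : 1 ≤ n) {M : G n} (hM : IsNilpotent ((M : Mat n) - 1)) : Good D M := by
  have hdet : ∀ c : ℝ, ((1 - c) • (M : Mat n) + (1 + c) • 1).det ≠ 0 := by
    intro c
    have e : (1 - c) • (M : Mat n) + (1 + c) • 1 = (2:ℝ) • (1 : Mat n) + (1 - c) • ((M : Mat n) - 1) := by module
    have hu : IsUnit ((2:ℝ) • (1 : Mat n)) := by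
      rw [Matrix.isUnit_iff_isUnit_det, Matrix.det_smul]; simp
    have := (hM.smul (1 - c)).isUnit_add_left_of_commute hu ((Commute.one_right _).smul_right _)
    rw [e]
    exact ((Matrix.isUnit_iff_isUnit_det _).1 this).ne_zero
  have hd : ((M : Mat n) + 1).det ≠ 0 := by simpa using hdet 0
  obtain ⟨K, hK, h1, h2, h3⟩ := inv_cay M hd
  have hdK : ∀ c : ℝ, (1 - c • K).det ≠ 0 := by
    intro c h0
    have := congrArg Matrix.det (h3 c)
    rw [Matrix.det_mul, h0, zero_mul] at this
    exact hdet c this.symm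
  have hKS : K = (-(K * Om n)) * Om n := by rw [neg_mul, mul_assoc, Om_sq]; simp
  have hS : (-(K * Om n))ᵀ = -(K * Om n) := by
    have : K * Om n + Om n * Kᵀ = 0 := hK
    rw [transpose_neg, transpose_mul, Om_tr, neg_mul, neg_neg]
    rw [eq_neg_iff_add_eq_zero, add_comm]; exact this
  obtain ⟨e, he, hgood⟩ := hD.good_sym hn _ hS
  rw [← hKS] at hgood
  obtain ⟨x, hx, hx2⟩ := cay_path (K := fun t : I => ((1 - (t:ℝ)) * e + t) • K) (by fun_prop) (fun t => ham_smul hK _) (fun t => hdK _)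
  have hx1 : x 1 = M := by
    apply G.ext; apply cancel_l (hdK ((1 - ((1:I):ℝ)) * e + (1:I)))
    rw [hx2 1]; simp [h2]
  rw [← hx1]
  apply hD.good_path hn hx
  · intro s
    have hr : ∀ s : I, rk (x s) = K.rank := by
      intro s
      rw [cay_rk (hdK _) (hx2 s)]
      have hp : (1 - (s:ℝ)) * e + s ≠ 0 := by
        have a1 := s.2.1; have a2 := s.2.2
        rcases eq_or_lt_of_le a1 with h | h
        · rw [← h]; simpa using he.ne'
        · nlinarith [mul_nonneg (sub_nonneg.2 a2) he.le]
      have e3 : ((1 - (s:ℝ)) * e + s) • K = (((1 - (s:ℝ)) * e + s) • (1 : Mat n)) * K := by simp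
      rw [e3, Matrix.rank_mul_eq_right_of_isUnit_det]
      rw [Matrix.det_smul, Matrix.det_one, mul_one]; exact isUnit_iff_ne_zero.2 (pow_ne_zero _ hp)
    rw [hr, hr]
  · have h0 := hx2 0
    simp only [Icc.coe_zero, sub_zero, one_mul, add_zero] at h0
    exact hgood _ (hdK e) h0

end

section

variable {D : ∀ n, (I → G n) → ℤ}

/-! Symplectic bases and splitting -/
def om {n : ℕ} (x y : Fin (2*n) → ℝ) : ℝ := x ⬝ᵥ (Om n *ᵥ y)

lemma om_add_left {n : ℕ} (x x' y : Fin (2*n) → ℝ) : om (x + x') y = om x y + om x' y := by simp [om, add_dotProduct]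
lemma om_add_right {n : ℕ} (x y y' : Fin (2*n) → ℝ) : om x (y + y') = om x y + om x y' := by simp [om, Matrix.mulVec_add]

lemma om_mul {n : ℕ} (A : Mat n) (x y : Fin (2*n) → ℝ) : om (A *ᵥ x) (A *ᵥ y) = x ⬝ᵥ ((Aᵀ * Om n * A) *ᵥ y) := by
  unfold om
  rw [← Matrix.mulVec_mulVec, ← Matrix.mulVec_mulVec, ← Matrix.vecMul_transpose, ← Matrix.dotProduct_mulVec]

lemma om_G {n : ℕ} (M : G n) (x y : Fin (2*n) → ℝ) : om ((M : Mat n) *ᵥ x) ((M : Mat n) *ᵥ y) = om x y := by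
  rw [om_mul, M.l]; rfl

lemma om_anti {n : ℕ} (x y : Fin (2*n) → ℝ) : om x y = - om y x := by
  unfold om
  rw [Matrix.dotProduct_mulVec, ← Matrix.mulVec_transpose, Om_tr, Matrix.neg_mulVec, neg_dotProduct, dotProduct_comm]

lemma om_nondeg {n : ℕ} {x : Fin (2*n) → ℝ} (h : ∀ y, om x y = 0) : x = 0 := by
  have h1 := h (-(Om n *ᵥ x))
  unfold om at h1
  rw [Matrix.mulVec_neg, Matrix.mulVec_mulVec, Om_sq, Matrix.neg_mulVec, Matrix.one_mulVec, neg_neg] at h1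
  exact dotProduct_self_eq_zero.1 h1

lemma mem_Sp_of_om {n : ℕ} {A : Mat n} (h : ∀ x y, om (A *ᵥ x) (A *ᵥ y) = om x y) : A ∈ Sp n := by
  rw [mem_Sp_iff']
  apply Matrix.toLin'.injective
  apply LinearMap.ext; intro y
  rw [Matrix.toLin'_apply, Matrix.toLin'_apply]
  apply dotProduct_eq
  intro x
  rw [dotProduct_comm, ← om_mul, h, dotProduct_comm]; rfl

def glue (p q : ℕ) : ((Fin (2*p) → ℝ) × (Fin (2*q) → ℝ)) ≃ₗ[ℝ] (Fin (2*(p+q)) → ℝ) :=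
  (LinearEquiv.sumArrowLequivProdArrow _ _ ℝ ℝ).symm ≪≫ₗ LinearEquiv.funCongrLeft ℝ ℝ (bEquiv p q).symm

lemma glue_apply (p q : ℕ) (x : Fin (2*p) → ℝ) (y : Fin (2*q) → ℝ) : glue p q (x, y) = Sum.elim x y ∘ (bEquiv p q).symm := by
  funext i
  obtain ⟨j, rfl⟩ := (bEquiv p q).surjective i
  rcases j with j | j <;> simp [glue, LinearEquiv.funCongrLeft, LinearMap.funLeft]

lemma glue_mul (p q : ℕ) (A : Mat p) (B : Mat q) (x : Fin (2*p) → ℝ) (y : Fin (2*q) → ℝ) :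
    blockDiagSum p q A B *ᵥ glue p q (x, y) = glue p q (A *ᵥ x, B *ᵥ y) := by
  rw [glue_apply, glue_apply, bds_eq, Matrix.reindex_apply, Matrix.submatrix_mulVec_equiv]
  congr 1
  simp [Function.comp_assoc, Matrix.fromBlocks_mulVec]

lemma glue_om (p q : ℕ) (x x' : Fin (2*p) → ℝ) (y y' : Fin (2*q) → ℝ) :
    om (glue p q (x, y)) (glue p q (x', y')) = om x x' + om y y' := by
  unfold om
  rw [← bds_Om, glue_mul, glue_apply, glue_apply]
  unfold dotProduct
  rw [← (bEquiv p q).sum_comp]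
  simp

lemma symp_basis (k : ℕ) : ∀ (V : Type) [AddCommGroup V] [Module ℝ V] [FiniteDimensional ℝ V] (B : V →ₗ[ℝ] V →ₗ[ℝ] ℝ),
    Module.finrank ℝ V = k → (∀ x, B x x = 0) → (∀ x, (∀ y, B x y = 0) → x = 0) →
    ∃ p, ∃ T : V ≃ₗ[ℝ] (Fin (2*p) → ℝ), ∀ x y, B x y = om (T x) (T y) := by
  induction k using Nat.strong_induction_on with
  | _ k ih =>
    intro V _ _ _ B hk halt hnd
    have hanti : ∀ x y, B x y = - B y x := by
      intro x y
      have := halt (x + y)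
      simp [halt] at this
      linarith
    by_cases htriv : ∀ x : V, x = 0
    · have : Subsingleton V := ⟨fun a b => by rw [htriv a, htriv b]⟩
      have : Subsingleton (Fin (2*0) → ℝ) := ⟨fun a b => by funext i; exact i.elim0⟩
      refine ⟨0, 0, fun x y => ?_⟩
      rw [htriv x]; simp [om]
    · push Not at htriv
      obtain ⟨e, he⟩ := htriv
      have : ∃ y, B e y ≠ 0 := by
        by_contra h; push Not at h; exact he (hnd e h)
      obtain ⟨f', hf'⟩ := this
      obtain ⟨f, hf⟩ : ∃ f, B e f = -1 := ⟨(-(B e f')⁻¹) • f', by simp [hf']⟩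
      have hfe : B f e = 1 := by rw [hanti, hf]; norm_num
      let W : Submodule ℝ V := LinearMap.ker (B e) ⊓ LinearMap.ker (B f)
      have hW : ∀ w : W, B e w = 0 ∧ B f w = 0 := fun w => ⟨w.2.1, w.2.2⟩
      have hW' : ∀ w : W, B w e = 0 ∧ B w f = 0 := fun w => by
        rw [hanti, hanti _ f, (hW w).1, (hW w).2]; simp
      let Φ : (W × (Fin (2*1) → ℝ)) →ₗ[ℝ] V :=
        W.subtype.comp (LinearMap.fst ℝ _ _) +
          (((LinearMap.proj (0 : Fin (2*1))).smulRight e + (LinearMap.proj (1 : Fin (2*1))).smulRight f) :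
            (Fin (2*1) → ℝ) →ₗ[ℝ] V).comp (LinearMap.snd ℝ _ _)
      have hΦ : ∀ w c, Φ (w, c) = (w : V) + (c 0 • e + c 1 • f) := fun w c => rfl
      have hB : ∀ w c w' c', B (Φ (w, c)) (Φ (w', c')) = B w w' + om c c' := by
        intro w c w' c'
        rw [hΦ, hΦ]
        have : om c c' = - (c 0 * c' 1) + c 1 * c' 0 := by
          unfold om; rw [Om_one]
          simp [dotProduct, Matrix.mulVec, Fin.sum_univ_two]
        rw [this]
        simp [(hW w').1, (hW w').2, (hW' w).1, (hW' w).2, halt, hf, hfe]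
      have hbij : Function.Bijective Φ := by
        constructor
        · rw [← LinearMap.ker_eq_bot, LinearMap.ker_eq_bot']
          rintro ⟨w, c⟩ h
          rw [hΦ] at h
          have h1 := congrArg (B e) h
          have h2 := congrArg (B f) h
          simp [(hW w).1, (hW w).2, halt, hf, hfe] at h1 h2
          rw [h1, h2] at h
          simp at h
          refine Prod.ext h ?_
          funext i; fin_cases i
          · exact h2
          · exact h1
        · intro x
          refine ⟨(⟨x - ((B f x) • e + (- B e x) • f), ?_, ?_⟩, ![B f x, - B e x]), ?_⟩
          · simp [halt, hf]
          · simp [halt, hfe]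
          · rw [hΦ]; simp
      let Φe := LinearEquiv.ofBijective Φ hbij
      have hfr : Module.finrank ℝ W + 2 = k := by
        have := Φe.finrank_eq
        rw [Module.finrank_prod] at this
        simp at this
        omega
      obtain ⟨p, T, hT⟩ := ih (Module.finrank ℝ W) (by omega) W ((B.domRestrict W).compl₂ W.subtype |>.comp LinearMap.id) rfl
        (by intro x; simpa using halt x)
        (by
          intro x hx
          apply Subtype.ext
          apply hnd
          intro y
          obtain ⟨⟨w, c⟩, rfl⟩ := hbij.2 y
          have := hB x 0 w c
          rw [hΦ x 0] at this
          simp [om] at this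
          rw [this]
          simpa using hx w)
      refine ⟨p + 1, Φe.symm ≪≫ₗ (T.prodCongr (LinearEquiv.refl ℝ _)) ≪≫ₗ glue p 1, fun x y => ?_⟩
      obtain ⟨⟨w, c⟩, rfl⟩ := Φe.surjective x
      obtain ⟨⟨w', c'⟩, rfl⟩ := Φe.surjective y
      have e1 : B (Φe (w, c)) (Φe (w', c')) = B w w' + om c c' := hB w c w' c'
      rw [e1]
      simp only [LinearEquiv.trans_apply, LinearEquiv.symm_apply_apply, LinearEquiv.prodCongr_apply, LinearEquiv.refl_apply, glue_om]
      rw [← hT]; rfl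

def omB (n : ℕ) : (Fin (2*n) → ℝ) →ₗ[ℝ] (Fin (2*n) → ℝ) →ₗ[ℝ] ℝ := Matrix.toLinearMap₂' ℝ (Om n)

lemma omB_apply {n : ℕ} (x y : Fin (2*n) → ℝ) : omB n x y = om x y := by
  simp [omB, om, Matrix.toLinearMap₂'_apply']

lemma om_self {n : ℕ} (x : Fin (2*n) → ℝ) : om x x = 0 := by
  have := om_anti x x; linarith

lemma symp_basis_sub {n : ℕ} (W : Submodule ℝ (Fin (2*n) → ℝ)) (h : ∀ x ∈ W, (∀ y ∈ W, om x y = 0) → x = 0) :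
    ∃ p, ∃ T : W ≃ₗ[ℝ] (Fin (2*p) → ℝ), ∀ x y : W, om (x : Fin (2*n) → ℝ) y = om (T x) (T y) := by
  obtain ⟨p, T, hT⟩ := symp_basis _ W (((omB n).domRestrict W).compl₂ W.subtype) rfl
    (by intro x; simp [omB_apply, om_self])
    (by
      intro x hx
      apply Subtype.ext
      exact h x x.2 fun y hy => by simpa [omB_apply] using hx ⟨y, hy⟩)
  exact ⟨p, T, fun x y => by rw [← hT]; simp [omB_apply]⟩

lemma restr {n p : ℕ} (M : G n) (W : Submodule ℝ (Fin (2*n) → ℝ)) (hW : ∀ x ∈ W, (M : Mat n) *ᵥ x ∈ W)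
    (T : W ≃ₗ[ℝ] (Fin (2*p) → ℝ)) (hT : ∀ x y : W, om (x : Fin (2*n) → ℝ) y = om (T x) (T y)) :
    ∃ A : G p, ∀ w : W, (A : Mat p) *ᵥ T w = T ⟨(M : Mat n) *ᵥ (w : Fin (2*n) → ℝ), hW w w.2⟩ := by
  let f : W →ₗ[ℝ] W := (Matrix.mulVecLin (M : Mat n)).restrict hW
  let A := LinearMap.toMatrix' (T.toLinearMap ∘ₗ f ∘ₗ T.symm.toLinearMap)
  have hA : ∀ w : W, A *ᵥ T w = T ⟨(M : Mat n) *ᵥ (w : Fin (2*n) → ℝ), hW w w.2⟩ := by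
    intro w
    rw [LinearMap.toMatrix'_mulVec]
    simp [f]
    rfl
  refine ⟨⟨A, mem_Sp_of_om ?_⟩, hA⟩
  intro x y
  obtain ⟨x, rfl⟩ := T.surjective x
  obtain ⟨y, rfl⟩ := T.surjective y
  rw [hA, hA, ← hT, ← hT]
  exact om_G M _ _

lemma orth_aux {n : ℕ} (M : G n) (k : ℕ) (x z : Fin (2*n) → ℝ) (h : ((M : Mat n) - 1) ^ k *ᵥ x = 0) :
    om x (((M : Mat n) - 1) ^ k *ᵥ z) = 0 := by
  have e1 : Om n * (M : Mat n) = ((M⁻¹ : G n) : Mat n)ᵀ * Om n := by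
    have h1 := M.l
    have h2 := congrArg Matrix.transpose M.mul_val_inv
    rw [transpose_mul, transpose_one] at h2
    calc Om n * (M : Mat n) = (((M⁻¹ : G n) : Mat n)ᵀ * (M : Mat n)ᵀ) * Om n * (M : Mat n) := by rw [h2, one_mul]
      _ = ((M⁻¹ : G n) : Mat n)ᵀ * ((M : Mat n)ᵀ * Om n * (M : Mat n)) := by noncomm_ring
      _ = _ := by rw [h1]
  have e2 : ∀ k, Om n * ((M : Mat n) - 1) ^ k = ((((M⁻¹ : G n) : Mat n) - 1) ^ k)ᵀ * Om n := by
    intro k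
    induction k with
    | zero => simp
    | succ k ih =>
      rw [pow_succ, ← mul_assoc, ih, mul_assoc, mul_sub, e1, mul_one, pow_succ', transpose_mul, transpose_sub, transpose_one]
      noncomm_ring
  have e3 : ((M⁻¹ : G n) : Mat n) - 1 = (-((M⁻¹ : G n) : Mat n)) * ((M : Mat n) - 1) := by
    rw [mul_sub, neg_mul, G.val_inv_mul]; noncomm_ring
  have hc : Commute (-((M⁻¹ : G n) : Mat n)) ((M : Mat n) - 1) := by
    unfold Commute SemiconjBy
    rw [mul_sub, sub_mul, neg_mul, mul_neg, G.val_inv_mul, G.mul_val_inv]; noncomm_ring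
  unfold om
  rw [Matrix.mulVec_mulVec, e2, ← Matrix.mulVec_mulVec, Matrix.dotProduct_mulVec, Matrix.vecMul_transpose, e3, hc.mul_pow,
    ← Matrix.mulVec_mulVec, h]
  simp

lemma Dinv.good_any (hD : Dinv D) {n : ℕ} (hn : 1 ≤ n) (M : G n) : Good D M := by
  obtain ⟨k, hk1, hk⟩ : ∃ k, 1 ≤ k ∧ IsCompl (LinearMap.ker (Matrix.toLin' (((M : Mat n) - 1) ^ k))) (LinearMap.range (Matrix.toLin' (((M : Mat n) - 1) ^ k))) := by
    have h := (Matrix.toLin' ((M : Mat n) - 1)).eventually_isCompl_ker_pow_range_pow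
    obtain ⟨k, h1, h2⟩ := ((Filter.eventually_ge_atTop 1).and h).exists
    exact ⟨k, h1, by rwa [Matrix.toLin'_pow]⟩
  set E := LinearMap.ker (Matrix.toLin' (((M : Mat n) - 1) ^ k)) with hE
  set F := LinearMap.range (Matrix.toLin' (((M : Mat n) - 1) ^ k)) with hF
  have hEm : ∀ x, x ∈ E ↔ ((M : Mat n) - 1) ^ k *ᵥ x = 0 := fun x => by rw [hE, LinearMap.mem_ker, Matrix.toLin'_apply]
  have hFm : ∀ x, x ∈ F ↔ ∃ z, ((M : Mat n) - 1) ^ k *ᵥ z = x := fun x => by rw [hF, LinearMap.mem_range]; simp only [Matrix.toLin'_apply]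
  have hcomm : (M : Mat n) * ((M : Mat n) - 1) ^ k = ((M : Mat n) - 1) ^ k * (M : Mat n) :=
    (Commute.pow_right (by unfold Commute SemiconjBy; noncomm_ring) k)
  have hEM : ∀ x ∈ E, (M : Mat n) *ᵥ x ∈ E := fun x hx => by
    rw [hEm] at hx ⊢
    rw [Matrix.mulVec_mulVec, ← hcomm, ← Matrix.mulVec_mulVec, hx, Matrix.mulVec_zero]
  have hFM : ∀ x ∈ F, (M : Mat n) *ᵥ x ∈ F := fun x hx => by
    rw [hFm] at hx ⊢
    obtain ⟨z, rfl⟩ := hx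
    exact ⟨(M : Mat n) *ᵥ z, by rw [Matrix.mulVec_mulVec, ← hcomm, ← Matrix.mulVec_mulVec]⟩
  have horth : ∀ x ∈ E, ∀ y ∈ F, om x y = 0 := by
    intro x hx y hy
    obtain ⟨z, rfl⟩ := (hFm y).1 hy
    exact orth_aux M k x z ((hEm x).1 hx)
  have horth' : ∀ y ∈ F, ∀ x ∈ E, om y x = 0 := fun y hy x hx => by rw [om_anti, horth x hx y hy, neg_zero]
  have hdec : ∀ v, ∃ x ∈ E, ∃ y ∈ F, x + y = v := fun v => by
    have : v ∈ E ⊔ F := by rw [hk.sup_eq_top]; trivial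
    exact Submodule.mem_sup.1 this
  obtain ⟨p, T, hT⟩ := symp_basis_sub E (fun x hx h => om_nondeg fun v => by
    obtain ⟨a, ha, b, hb, rfl⟩ := hdec v
    rw [om_add_right, h a ha, horth x hx b hb, add_zero])
  obtain ⟨q, T', hT'⟩ := symp_basis_sub F (fun x hx h => om_nondeg fun v => by
    obtain ⟨a, ha, b, hb, rfl⟩ := hdec v
    rw [om_add_right, h b hb, horth' x hx a ha, add_zero])
  have hkerE : ∀ v, ((M : Mat n) - 1) *ᵥ v = 0 → v ∈ E := by
    intro v hv
    rw [hEm]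
    obtain ⟨j, rfl⟩ := Nat.exists_eq_add_of_le' hk1
    rw [pow_succ, ← Matrix.mulVec_mulVec, hv, Matrix.mulVec_zero]
  rcases Nat.eq_zero_or_pos p with rfl | hp
  · apply hD.good_nondeg hn
    intro h0
    obtain ⟨v, hv, hv2⟩ := Matrix.exists_mulVec_eq_zero_iff.2 h0
    apply hv
    have hvE := hkerE v hv2
    have : (⟨v, hvE⟩ : E) = 0 := T.injective (funext fun i => i.elim0)
    exact congrArg Subtype.val this
  rcases Nat.eq_zero_or_pos q with rfl | hq
  · apply hD.good_unip hn
    refine ⟨k, ?_⟩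
    apply Matrix.toLin'.injective
    apply LinearMap.ext; intro v
    have : (⟨((M : Mat n) - 1) ^ k *ᵥ v, (hFm _).2 ⟨v, rfl⟩⟩ : F) = 0 := T'.injective (funext fun i => i.elim0)
    have := congrArg Subtype.val this
    rw [Matrix.toLin'_apply, map_zero]; exact this
  let Φ := Submodule.prodEquivOfIsCompl E F hk
  let g : (Fin (2*n) → ℝ) ≃ₗ[ℝ] (Fin (2*(p+q)) → ℝ) := Φ.symm ≪≫ₗ (T.prodCongr T') ≪≫ₗ glue p q
  have hpq : n = p + q := by
    have := g.finrank_eq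
    simp at this
    omega
  have hg : ∀ (x : E) (y : F), g ((x : Fin (2*n) → ℝ) + y) = glue p q (T x, T' y) := by
    intro x y
    have : (x : Fin (2*n) → ℝ) + y = Φ (x, y) := by simp [Φ]
    rw [this]; simp [g]
  have hgom : ∀ v w, om (g v) (g w) = om v w := by
    intro v w
    obtain ⟨a, ha, b, hb, rfl⟩ := hdec v
    obtain ⟨a', ha', b', hb', rfl⟩ := hdec w
    have e1 := hg ⟨a, ha⟩ ⟨b, hb⟩
    have e2 := hg ⟨a', ha'⟩ ⟨b', hb'⟩
    simp only at e1 e2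
    rw [e1, e2, glue_om, ← hT, ← hT', om_add_left, om_add_right, om_add_right, horth a ha b' hb', horth' b hb a' ha']
    ring
  obtain ⟨A, hA⟩ := restr M E hEM T hT
  obtain ⟨B, hB⟩ := restr M F hFM T' hT'
  have hgM : ∀ v, g ((M : Mat n) *ᵥ v) = blockDiagSum p q A B *ᵥ g v := by
    intro v
    obtain ⟨a, ha, b, hb, rfl⟩ := hdec v
    have e1 := hg ⟨a, ha⟩ ⟨b, hb⟩
    have e2 := hg ⟨_, hEM a ha⟩ ⟨_, hFM b hb⟩
    simp only at e1 e2
    rw [Matrix.mulVec_add, e1, e2, glue_mul, hA, hB]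
  have hAu : Good D A := by
    apply hD.good_unip hp
    refine ⟨k, ?_⟩
    apply Matrix.toLin'.injective
    apply LinearMap.ext; intro v
    obtain ⟨x, rfl⟩ := T.surjective v
    have key : ∀ j, ∃ h, ((A : Mat p) - 1) ^ j *ᵥ T x = T ⟨((M : Mat n) - 1) ^ j *ᵥ (x : Fin (2*n) → ℝ), h⟩ := by
      intro j
      induction j with
      | zero => exact ⟨by simp, by simp⟩
      | succ j ih =>
        obtain ⟨h, e⟩ := ih
        have e' : ((M : Mat n) - 1) ^ (j + 1) *ᵥ (x : Fin (2*n) → ℝ) =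
          (M : Mat n) *ᵥ (((M : Mat n) - 1) ^ j *ᵥ (x : Fin (2*n) → ℝ)) - ((M : Mat n) - 1) ^ j *ᵥ (x : Fin (2*n) → ℝ) := by
          rw [pow_succ', ← Matrix.mulVec_mulVec, Matrix.sub_mulVec, Matrix.one_mulVec]
        refine ⟨by rw [e']; exact E.sub_mem (hEM _ h) h, ?_⟩
        rw [pow_succ', ← Matrix.mulVec_mulVec, e, Matrix.sub_mulVec, Matrix.one_mulVec, hA, ← map_sub]
        congr 1
        exact Subtype.ext e'.symm
    obtain ⟨h, e⟩ := key k
    rw [Matrix.toLin'_apply, e]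
    have : (⟨((M : Mat n) - 1) ^ k *ᵥ (x : Fin (2*n) → ℝ), h⟩ : E) = 0 := Subtype.ext ((hEm _).1 x.2)
    rw [this]; simp
  have hBn : Good D B := by
    apply hD.good_nondeg hq
    intro h0
    obtain ⟨v, hv, hv2⟩ := Matrix.exists_mulVec_eq_zero_iff.2 h0
    obtain ⟨y, rfl⟩ := T'.surjective v
    rw [Matrix.sub_mulVec, Matrix.one_mulVec, hB, ← map_sub] at hv2
    have h1 := T'.map_eq_zero_iff.1 hv2
    have h2 := congrArg Subtype.val h1
    have h3 : ((M : Mat n) - 1) *ᵥ (y : Fin (2*n) → ℝ) = 0 := by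
      rw [Matrix.sub_mulVec, Matrix.one_mulVec]; exact h2
    have h4 := Submodule.disjoint_def.1 hk.disjoint _ (hkerE _ h3) y.2
    apply hv
    have : y = 0 := Subtype.ext h4
    rw [this]; simp
  have hbs := hD.good_bs hp hq hAu hBn
  clear_value g
  clear hg
  subst hpq
  let gm : G (p + q) := ⟨LinearMap.toMatrix' g.toLinearMap, mem_Sp_of_om (fun x y => by
    rw [LinearMap.toMatrix'_mulVec, LinearMap.toMatrix'_mulVec]; exact hgom x y)⟩
  have hgm : ∀ v, (gm : Mat (p + q)) *ᵥ v = g v := fun v => LinearMap.toMatrix'_mulVec _ _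
  have hfin : gm * M = bs p q A B * gm := by
    apply G.ext
    apply Matrix.toLin'.injective
    apply LinearMap.ext; intro v
    rw [Matrix.toLin'_apply, Matrix.toLin'_apply, G.coe_mul, G.coe_mul, ← Matrix.mulVec_mulVec, ← Matrix.mulVec_mulVec, hgm, hgm, hgM]
    rfl
  have : M = gm⁻¹ * bs p q A B * (gm⁻¹)⁻¹ := by
    rw [inv_inv, mul_assoc, ← hfin]; simp
  rw [this]
  exact hD.good_conj hn hbs _

lemma Dinv.one_all (hD : Dinv D) {n : ℕ} (hn : 1 ≤ n) : D n (fun _ => 1) = 0 := by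
  have h1 : D 1 (fun _ => 1) = 0 := by
    obtain ⟨_, _, _, _, h, _⟩ := hD.base
    exact h
  induction n, hn using Nat.le_induction with
  | base => exact h1
  | succ n hn ih =>
    have := hD.add n 1 hn le_rfl (fun _ => 1) (fun _ => 1) ⟨continuous_const, rfl⟩ ⟨continuous_const, rfl⟩
    rw [ih, h1] at this
    simpa [bs_one] using this

theorem Dinv.vanish (hD : Dinv D) {n : ℕ} (hn : 1 ≤ n) {x : I → G n} (hx : IsP x) : D n x = 0 :=
  hD.zero hn (fun M => hD.good_any hn M) (hD.one_all hn) hx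

end

section

/-! final assembly -/
def ofP {τ : ℝ} (hτ : 0 < τ) {n : ℕ} (f : I → G n) (h : IsP f) : SympPath τ n where
  toFun t := (f (pI (t / τ)) : Mat n)
  continuousOn := by
    have h1 := h.c
    have : Continuous fun t : ℝ => f (pI (t / τ)) := by fun_prop
    exact (G.cont_iff.1 this).continuousOn
  init := by simp [pI_le, h.z]
  mem_Sp t _ := (f (pI (t / τ))).2

lemma ofP_end {τ : ℝ} (hτ : 0 < τ) {n : ℕ} (f : I → G n) (h : IsP f) : (ofP hτ f h).toFun τ = f 1 := by
  simp only [ofP]; rw [div_self hτ.ne', pI_ge le_rfl]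

lemma conc_isP {n : ℕ} {x : I → G n} (hx : IsP x) (e : ℝ) : IsP (conc x e) := by
  have hc := hx.c
  refine ⟨by unfold conc; fun_prop, ?_⟩
  simp [conc, pI_le, hx.z]

lemma conc_b1 {τ : ℝ} (hτ : 0 < τ) {x : I → G 1} (hx : IsP x) (e : ℝ) :
    ∀ t ∈ Icc (0:ℝ) (τ/2), (ofP hτ (conc x e) (conc_isP hx e)).toFun t = (ofP hτ x hx).toFun (2*t) := by
  intro t ht
  have h0 : 0 ≤ t / τ := div_nonneg ht.1 hτ.le
  have h2 : t / τ ≤ 1/2 := by rw [div_le_iff₀ hτ]; linarith [ht.2]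
  simp only [ofP, conc]
  rw [pI_of (x := t/τ) ⟨h0, by linarith⟩]
  simp only
  rw [max_eq_right (by linarith), mul_zero]
  have : 2 * (t / τ) = 2 * t / τ := by ring
  rw [this]; simp

lemma conc_b2 {τ : ℝ} (hτ : 0 < τ) {x : I → G 1} (hx : IsP x) (e : ℝ) :
    ∀ t ∈ Icc (τ/2) τ, (ofP hτ (conc x e) (conc_isP hx e)).toFun t = (ofP hτ x hx).toFun τ * rotPath τ e (2*t-τ) := by
  intro t ht
  have h0 : 1/2 ≤ t / τ := by rw [le_div_iff₀ hτ]; linarith [ht.1]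
  have h2 : t / τ ≤ 1 := by rw [div_le_iff₀ hτ]; linarith [ht.2]
  rw [ofP_end]
  simp only [ofP, conc]
  rw [pI_of (x := t/τ) ⟨by linarith, by linarith⟩]
  simp only
  rw [max_eq_left (by linarith), pI_ge (by linarith), G.coe_mul, rot_one_coe]
  have : (2 * t - τ) * e / τ = e * (2 * (t / τ) - 1) := by field_simp
  unfold rotPath; rw [this]

open Classical in
def dif {τ : ℝ} (hτ : 0 < τ) (i i' : ∀ n : ℕ, SympPath τ n → ℤ) (n : ℕ) (f : I → G n) : ℤ :=
  if h : IsP f then i n (ofP hτ f h) - i' n (ofP hτ f h) else 0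

lemma dif_of {τ : ℝ} (hτ : 0 < τ) (i i' : ∀ n : ℕ, SympPath τ n → ℤ) {n : ℕ} {f : I → G n} (h : IsP f) :
    dif hτ i i' n f = i n (ofP hτ f h) - i' n (ofP hτ f h) := dif_pos h

lemma hom_of {τ : ℝ} (hτ : 0 < τ) {i : ∀ n : ℕ, SympPath τ n → ℤ} (hi : CZAxioms τ i) {n : ℕ} (hn : 1 ≤ n)
    (F : I → I → G n) (hF : Continuous (Function.uncurry F)) (h0 : ∀ s, F s 0 = 1)
    (hr : ∀ s, rk (F s 1) = rk (F 0 1)) (a : IsP (F 0)) (b : IsP (F 1)) :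
    i n (ofP hτ (F 0) a) = i n (ofP hτ (F 1) b) := by
  refine hi.1 n hn _ _ ⟨fun s t => (F (pI s) (pI (t / τ)) : Mat n), ?_, fun s _ t _ => (F (pI s) (pI (t / τ))).2, ?_, ?_, ?_⟩
  · have : Continuous fun p : ℝ × ℝ => F (pI p.1) (pI (p.2 / τ)) :=
      hF.comp (f := fun p : ℝ × ℝ => (pI p.1, pI (p.2 / τ))) (by fun_prop)
    exact (G.cont_iff.1 this).continuousOn
  · intro t _
    simp only [ofP]
    rw [pI_le le_rfl, pI_ge le_rfl]; exact ⟨rfl, rfl⟩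
  · intro s _
    simp only
    rw [zero_div, pI_le le_rfl, h0]; rfl
  · intro s _ s' _
    simp only
    rw [div_self hτ.ne', pI_ge le_rfl]
    exact (hr _).trans (hr _).symm

lemma dif_Dinv {τ : ℝ} (hτ : 0 < τ) {i i' : ∀ n : ℕ, SympPath τ n → ℤ} (hi : CZAxioms τ i) (hi' : CZAxioms τ i') :
    Dinv (dif hτ i i') where
  hom n hn F hF h0 hr := by
    have hp : ∀ s, IsP (F s) := fun s => ⟨hF.comp (f := fun t => (s, t)) (by fun_prop), h0 s⟩
    rw [dif_of hτ i i' (hp 0), dif_of hτ i i' (hp 1), hom_of hτ hi hn F hF h0 hr (hp 0) (hp 1), hom_of hτ hi' hn F hF h0 hr (hp 0) (hp 1)]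
  add p q hp hq x y hx hy := by
    have hxc := hx.c
    have hyc := hy.c
    have hb : IsP (fun t => bs p q (x t) (y t)) := ⟨by fun_prop, by simp [hx.z, hy.z, bs_one]⟩
    rw [dif_of hτ i i' hx, dif_of hτ i i' hy, dif_of hτ i i' hb,
      hi.2.1 p q hp hq (ofP hτ x hx) (ofP hτ y hy) _ (fun t _ => rfl),
      hi'.2.1 p q hp hq (ofP hτ x hx) (ofP hτ y hy) _ (fun t _ => rfl)]
    ring
  neg a ha x hx h1 := by
    have he : (ofP hτ x hx).toFun τ = upperTri a := by rw [ofP_end, h1, shr_coe]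
    obtain ⟨u, hu, h⟩ := hi.2.2.1 a ha _ he
    obtain ⟨v, hv, h'⟩ := hi'.2.2.1 a ha _ he
    refine ⟨min u v, lt_min hu hv, fun θ hθ => ?_⟩
    rw [dif_of hτ i i' hx, dif_of hτ i i' (conc_isP hx (-θ)),
      h θ ⟨hθ.1, hθ.2.trans (min_le_left _ _)⟩ _ (conc_b1 hτ hx _) (conc_b2 hτ hx _),
      h' θ ⟨hθ.1, hθ.2.trans (min_le_right _ _)⟩ _ (conc_b1 hτ hx _) (conc_b2 hτ hx _)]
  pos a ha x hx h1 := by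
    have he : (ofP hτ x hx).toFun τ = upperTri a := by rw [ofP_end, h1, shr_coe]
    obtain ⟨u, hu, h⟩ := hi.2.2.2.1 a ha _ he
    obtain ⟨v, hv, h'⟩ := hi'.2.2.2.1 a ha _ he
    refine ⟨min u v, lt_min hu hv, fun θ hθ => ?_⟩
    rw [dif_of hτ i i' hx, dif_of hτ i i' (conc_isP hx θ),
      h θ ⟨hθ.1, hθ.2.trans (min_le_left _ _)⟩ _ (conc_b1 hτ hx _) (conc_b2 hτ hx _),
      h' θ ⟨hθ.1, hθ.2.trans (min_le_right _ _)⟩ _ (conc_b1 hτ hx _) (conc_b2 hτ hx _)]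
    ring
  nrm x hx := by
    by_cases h : IsP x
    · have e : ∀ t ∈ Icc (0:ℝ) τ, (ofP hτ x h).toFun t = diagPath τ t := by
        intro t ht
        obtain ⟨h2, e⟩ := hx (pI (t / τ))
        simp only [ofP]
        rw [e]
        have : ((pI (t / τ) : I) : ℝ) = t / τ := by
          rw [pI_of ⟨div_nonneg ht.1 hτ.le, (div_le_one hτ).2 ht.2⟩]
        simp only [dg]
        rw [this]; rfl
      rw [dif_of hτ i i' h, hi.2.2.2.2 _ e, hi'.2.2.2.2 _ e]; rfl
    · exact dif_neg h

lemma ofP_toP {τ : ℝ} (hτ : 0 < τ) {i : ∀ n : ℕ, SympPath τ n → ℤ} (hi : CZAxioms τ i) {n : ℕ} (hn : 1 ≤ n) (γ : SympPath τ n)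
    (h : IsP (toP hτ γ)) : i n γ = i n (ofP hτ (toP hτ γ) h) := by
  refine hi.1 n hn _ _ ⟨fun s t => γ.toFun t, ?_, fun s _ t ht => γ.mem_Sp t ht, ?_, fun s _ => γ.init, fun _ _ _ _ => rfl⟩
  · exact γ.continuousOn.comp continuousOn_snd (fun p hp => hp.2)
  · intro t ht
    refine ⟨rfl, ?_⟩
    simp only [ofP, toP]
    rw [pI_of ⟨div_nonneg ht.1 hτ.le, (div_le_one hτ).2 ht.2⟩]
    simp only
    rw [mul_div_cancel₀ _ hτ.ne']

lemma cz_unique {τ : ℝ} (hτ : 0 < τ) {i i' : ∀ n : ℕ, SympPath τ n → ℤ} (hi : CZAxioms τ i) (hi' : CZAxioms τ i')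
    {n : ℕ} (hn : 1 ≤ n) (γ : SympPath τ n) : i' n γ = i n γ := by
  have h : IsP (toP hτ γ) := ⟨toP_cont hτ γ, toP_zero hτ γ⟩
  have := (dif_Dinv hτ hi' hi).vanish hn h
  rw [dif_of hτ i' i h, ← ofP_toP hτ hi hn γ h, ← ofP_toP hτ hi' hn γ h] at this
  omega

end

/-- **Theorem (Long).** For every `τ > 0` there is a map
`i : ⋃_{n ≥ 1} P_τ(2n) → ℤ` satisfying the five axioms, and it is unique. -/
theorem conleyZehnder_index_exists_unique (τ : ℝ) (hτ : 0 < τ) :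
    ∃ i : ∀ n : ℕ, SympPath τ n → ℤ, CZAxioms τ i ∧
      ∀ i' : ∀ n : ℕ, SympPath τ n → ℤ, CZAxioms τ i' →
        ∀ n : ℕ, 1 ≤ n → ∀ γ : SympPath τ n, i' n γ = i n γ := by
  exact ⟨_, cz_exists τ hτ, fun i' hi' n hn γ => cz_unique hτ (cz_exists τ hτ) hi' hn γ⟩
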